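/- arXiv:2503.11879 — 2 statements merged into one kernel-verified Lean document; each statement's English description precedes it below -/
import Mathlib

section
/- Suppose μ is a T-ergodic Borel probability measure on Ω that has a local product structure and full support (supp μ = Ω). Suppose there are two distinct letters j₀ ≠ j₁ in 𝒜 such that each of the two-letter words (j₀,j₀), (j₀,j₁), and (j₁,j₀) occurs in at least one element of Ω. Then L(A^{(k)}, μ) > 0 for every k ∈ (0,π) with k ≠ π/2; equivalently, the set {k ∈ [0,π] : L(A^{(k)}, μ) = 0} is contained in {0, π/2, π}. -/
open Real MeasureTheory Filter Topology Matrix Set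

noncomputable section

/-- The left shift on bi-infinite sequences: `(Tω)_n = ω_{n+1}`. -/
def shift (ω : ℤ → ℕ) : ℤ → ℕ := fun n => ω (n + 1)

/-- The subshift of finite type: sequences with letters in `{1,…,ℓ}` and all
transitions `(ω_n, ω_{n+1})` in the allowed set `W`. -/
def SFT (ℓ : ℕ) (W : Set (ℕ × ℕ)) : Set (ℤ → ℕ) :=
  {ω | (∀ n, 1 ≤ ω n ∧ ω n ≤ ℓ) ∧ ∀ n, (ω n, ω (n + 1)) ∈ W}

/-- The cocycle matrix
`A^{(k)}(ω) = √(ω₀/ω₋₁)·[[((ω₀+ω₋₁)/ω₀)·cos k, −ω₋₁/ω₀],[1, 0]]`. -/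
def Acoc (k : ℝ) (ω : ℤ → ℕ) : Matrix (Fin 2) (Fin 2) ℝ :=
  Real.sqrt ((ω 0 : ℝ) / (ω (-1) : ℝ)) •
    !![((ω 0 : ℝ) + (ω (-1) : ℝ)) / (ω 0 : ℝ) * Real.cos k, -((ω (-1) : ℝ) / (ω 0 : ℝ));
       (1 : ℝ), 0]

/-- The iterated cocycle `A_n(ω) = A^{(k)}(T^{n−1}ω)⋯A^{(k)}(ω)` for `n ≥ 0`,
with `A_0(ω) = Id`. -/
def AIter (k : ℝ) (ω : ℤ → ℕ) : ℕ → Matrix (Fin 2) (Fin 2) ℝ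
  | 0 => 1
  | n + 1 => Acoc k (shift^[n] ω) * AIter k ω n

end

/-- We endow 2×2 real matrices with the `L²` operator norm. -/
noncomputable instance : NormedAddCommGroup (Matrix (Fin 2) (Fin 2) ℝ) :=
  Matrix.instL2OpNormedAddCommGroup

/-- Projection onto nonnegative coordinates: `π₊ω = (ω_n)_{n≥0}`. -/
def projPlus (ω : ℤ → ℕ) : ℕ → ℕ := fun n => ω (n : ℤ)

/-- Projection onto nonpositive coordinates: `π₋ω = (ω_{−n})_{n≥0}`. -/
def projMinus (ω : ℤ → ℕ) : ℕ → ℕ := fun n => ω (-(n : ℤ))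

/-- The map `P(ω) = (π₋ω, π₊ω)`; on each cylinder `[0;j]` this is the map `P_j`. -/
def pairProj (ω : ℤ → ℕ) : (ℕ → ℕ) × (ℕ → ℕ) := (projMinus ω, projPlus ω)

/-- `μ` has a local product structure: there is a positive function `ψ` on `Ω`
(written as `ψ ∘ P` for a function on `Ω₋ × Ω₊`) such that for each letter `j`,
`ψ∘P_j⁻¹` is integrable with respect to `μ_j^− × μ_j^+` and
`(P_j)_* μ_j = (ψ∘P_j⁻¹) d(μ_j^− × μ_j^+)`. -/
def LocalProductStructure (ℓ : ℕ) (W : Set (ℕ × ℕ)) (μ : Measure (ℤ → ℕ)) : Prop :=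
  ∃ ψ : (ℕ → ℕ) × (ℕ → ℕ) → ℝ,
    (∀ ω ∈ SFT ℓ W, 0 < ψ (pairProj ω)) ∧
    ∀ j : ℕ, 1 ≤ j → j ≤ ℓ →
      MeasureTheory.Integrable ψ
        (((Measure.map projMinus μ).restrict {a | a 0 = j}).prod
          ((Measure.map projPlus μ).restrict {a | a 0 = j})) ∧
      Measure.map pairProj (μ.restrict {ω | ω 0 = j}) =
        (((Measure.map projMinus μ).restrict {a | a 0 = j}).prod
          ((Measure.map projPlus μ).restrict {a | a 0 = j})).withDensity
          (fun x => ENNReal.ofReal (ψ x))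

/-- `supp μ = Ω`: every open set meeting `Ω` has positive measure. -/
def FullSupport (ℓ : ℕ) (W : Set (ℕ × ℕ)) (μ : Measure (ℤ → ℕ)) : Prop :=
  ∀ U : Set (ℤ → ℕ), IsOpen U → (U ∩ SFT ℓ W).Nonempty → 0 < μ U

/-- Bounded measurable real functions. -/
structure BddMeas {α : Type*} [MeasurableSpace α] (f : α → ℝ) : Prop where
  meas : Measurable f
  bdd : ∃ C, ∀ v, |f v| ≤ C

/-- A finitely additive mean on the bounded measurable functions of the plane, carrying no mass at
the origin. -/
structure IsMean (ν : ((Fin 2 → ℝ) → ℝ) → ℝ) : Prop where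
  add : ∀ f g, BddMeas f → BddMeas g → ν (fun v => f v + g v) = ν f + ν g
  smul : ∀ (c : ℝ) f, BddMeas f → ν (fun v => c * f v) = c * ν f
  mono : ∀ f g, BddMeas f → BddMeas g → (∀ v, v ≠ 0 → f v ≤ g v) → ν f ≤ ν g
  one : ν (fun _ => 1) = 1

namespace BddMeas

variable {α : Type*} [MeasurableSpace α] {f g : α → ℝ}

lemma const (c : ℝ) : BddMeas (fun _ : α => c) := ⟨measurable_const, |c|, fun _ => le_rfl⟩

lemma add (hf : BddMeas f) (hg : BddMeas g) : BddMeas (fun v => f v + g v) := by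
  obtain ⟨C, hC⟩ := hf.bdd
  obtain ⟨D, hD⟩ := hg.bdd
  exact ⟨hf.meas.add hg.meas, C + D, fun v => (abs_add_le _ _).trans (add_le_add (hC v) (hD v))⟩

lemma mul (hf : BddMeas f) (hg : BddMeas g) : BddMeas (fun v => f v * g v) := by
  obtain ⟨C, hC⟩ := hf.bdd
  obtain ⟨D, hD⟩ := hg.bdd
  refine ⟨hf.meas.mul hg.meas, C * D, fun v => ?_⟩
  rw [abs_mul]
  exact mul_le_mul (hC v) (hD v) (abs_nonneg _) ((abs_nonneg _).trans (hC v))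

lemma comp {β : Type*} [MeasurableSpace β] {h : β → α} (hf : BddMeas f) (hh : Measurable h) :
    BddMeas (fun v => f (h v)) :=
  ⟨hf.meas.comp hh, hf.bdd.imp fun _ hC _ => hC _⟩

lemma congr_of_ne_zero {f g : (Fin 2 → ℝ) → ℝ} (hf : BddMeas f) (hg : Measurable g)
    (h : ∀ v, v ≠ 0 → g v = f v) : BddMeas g := by
  obtain ⟨C, hC⟩ := hf.bdd
  refine ⟨hg, max C |g 0|, fun v => ?_⟩
  by_cases hv : v = 0
  · simp [hv]
  · rw [h v hv]; exact (hC v).trans (le_max_left _ _)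

lemma sum {ι : Type*} (s : Finset ι) {f : ι → α → ℝ} (hf : ∀ i ∈ s, BddMeas (f i)) :
    BddMeas (fun v => ∑ i ∈ s, f i v) := by
  classical
  induction s using Finset.induction_on with
  | empty => simpa using const (α := α) 0
  | insert a s ha ih =>
    simp only [Finset.sum_insert ha]
    exact (hf a (by simp)).add (ih fun i hi => hf i (by simp [hi]))

lemma prod {ι : Type*} (s : Finset ι) {f : ι → α → ℝ} (hf : ∀ i ∈ s, BddMeas (f i)) :
    BddMeas (fun v => ∏ i ∈ s, f i v) := by
  classical
  induction s using Finset.induction_on with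
  | empty => simpa using const (α := α) 1
  | insert a s ha ih =>
    simp only [Finset.prod_insert ha]
    exact (hf a (by simp)).mul (ih fun i hi => hf i (by simp [hi]))

lemma integrable (hf : BddMeas f) (μ : Measure α) [IsFiniteMeasure μ] : Integrable f μ := by
  obtain ⟨C, hC⟩ := hf.bdd
  exact Integrable.of_bound hf.meas.aestronglyMeasurable C (ae_of_all _ hC)

end BddMeas

lemma measurable_mulVec (M : Matrix (Fin 2) (Fin 2) ℝ) :
    Measurable (fun v : Fin 2 → ℝ => M *ᵥ v) :=
  (Continuous.matrix_mulVec continuous_const continuous_id).measurable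

lemma IsMean.congr {ν : ((Fin 2 → ℝ) → ℝ) → ℝ} (hν : IsMean ν) {f g : (Fin 2 → ℝ) → ℝ}
    (hf : BddMeas f) (hg : BddMeas g) (h : ∀ v, v ≠ 0 → f v = g v) : ν f = ν g :=
  le_antisymm (hν.mono f g hf hg fun v hv => (h v hv).le)
    (hν.mono g f hg hf fun v hv => (h v hv).ge)

/-- The first coordinate in which `[[2 cos k, -1], [1, 0]]` is a rotation by `k`. -/
noncomputable def rotX (k : ℝ) (v : Fin 2 → ℝ) : ℝ := v 0 - Real.cos k * v 1

/-- The second coordinate in which `[[2 cos k, -1], [1, 0]]` is a rotation by `k`. -/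
noncomputable def rotY (k : ℝ) (v : Fin 2 → ℝ) : ℝ := Real.sin k * v 1

/-- The quadratic form preserved by `[[2 cos k, -1], [1, 0]]`. -/
noncomputable def rotQ (k : ℝ) (v : Fin 2 → ℝ) : ℝ := rotX k v ^ 2 + rotY k v ^ 2

/-- The cosine of the doubled angle of a vector in the rotation coordinates. -/
noncomputable def dblCos (k : ℝ) (v : Fin 2 → ℝ) : ℝ := (rotX k v ^ 2 - rotY k v ^ 2) / rotQ k v

/-- The sine of the doubled angle of a vector in the rotation coordinates. -/
noncomputable def dblSin (k : ℝ) (v : Fin 2 → ℝ) : ℝ := (2 * rotX k v * rotY k v) / rotQ k v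

lemma measurable_rotX (k : ℝ) : Measurable (rotX k) := by unfold rotX; fun_prop

lemma measurable_rotY (k : ℝ) : Measurable (rotY k) := by unfold rotY; fun_prop

lemma measurable_rotQ (k : ℝ) : Measurable (rotQ k) :=
  ((measurable_rotX k).pow_const 2).add ((measurable_rotY k).pow_const 2)

lemma rotQ_pos {k : ℝ} (hs : Real.sin k ≠ 0) {v : Fin 2 → ℝ} (hv : v ≠ 0) : 0 < rotQ k v := by
  by_contra h
  have hX : rotX k v = 0 := by
    unfold rotQ at h; nlinarith [sq_nonneg (rotX k v), sq_nonneg (rotY k v)]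
  have hY : rotY k v = 0 := by
    unfold rotQ at h; nlinarith [sq_nonneg (rotX k v), sq_nonneg (rotY k v)]
  have h1 : v 1 = 0 := by simpa [rotY, hs] using hY
  have h0 : v 0 = 0 := by simpa [rotX, h1] using hX
  exact hv (by ext i; fin_cases i <;> simp [h0, h1])

lemma bddMeas_dblCos (k : ℝ) : BddMeas (dblCos k) := by
  refine ⟨(((measurable_rotX k).pow_const 2).sub ((measurable_rotY k).pow_const 2)).div
    (measurable_rotQ k), 1, fun v => ?_⟩
  rw [dblCos, abs_div, rotQ, abs_of_nonneg (a := rotX k v ^ 2 + rotY k v ^ 2) (by positivity)]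
  refine div_le_one_of_le₀ ?_ (by positivity)
  rw [abs_le]; constructor <;> nlinarith [sq_nonneg (rotX k v), sq_nonneg (rotY k v)]

lemma bddMeas_dblSin (k : ℝ) : BddMeas (dblSin k) := by
  refine ⟨((measurable_const.mul (measurable_rotX k)).mul (measurable_rotY k)).div
    (measurable_rotQ k), 1, fun v => ?_⟩
  rw [dblSin, abs_div, rotQ, abs_of_nonneg (a := rotX k v ^ 2 + rotY k v ^ 2) (by positivity)]
  refine div_le_one_of_le₀ ?_ (by positivity)
  rw [abs_le]
  constructor <;> nlinarith [sq_nonneg (rotX k v + rotY k v), sq_nonneg (rotX k v - rotY k v)]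

lemma dblCos_sq_add_dblSin_sq {k : ℝ} (hs : Real.sin k ≠ 0) {v : Fin 2 → ℝ} (hv : v ≠ 0) :
    dblCos k v ^ 2 + dblSin k v ^ 2 = 1 := by
  have h := (rotQ_pos hs hv).ne'
  rw [dblCos, dblSin]
  field_simp
  rw [rotQ]; ring

lemma rotX_rot (k : ℝ) (v : Fin 2 → ℝ) : rotX k (!![2 * Real.cos k, -1; 1, 0] *ᵥ v) =
    Real.cos k * rotX k v - Real.sin k * rotY k v := by
  simp [rotX, rotY, Matrix.mulVec, dotProduct, Fin.sum_univ_two]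
  linear_combination (v 1) * (Real.sin_sq_add_cos_sq k)

lemma rotY_rot (k : ℝ) (v : Fin 2 → ℝ) : rotY k (!![2 * Real.cos k, -1; 1, 0] *ᵥ v) =
    Real.sin k * rotX k v + Real.cos k * rotY k v := by
  simp [rotX, rotY, Matrix.mulVec, dotProduct, Fin.sum_univ_two]
  ring

lemma rotQ_rot (k : ℝ) (v : Fin 2 → ℝ) :
    rotQ k (!![2 * Real.cos k, -1; 1, 0] *ᵥ v) = rotQ k v := by
  rw [rotQ, rotX_rot, rotY_rot, rotQ]
  linear_combination (rotX k v ^ 2 + rotY k v ^ 2) * (Real.sin_sq_add_cos_sq k)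

lemma dblCos_rot (k : ℝ) (v : Fin 2 → ℝ) : dblCos k (!![2 * Real.cos k, -1; 1, 0] *ᵥ v) =
    Real.cos (2 * k) * dblCos k v + -Real.sin (2 * k) * dblSin k v := by
  rw [dblCos, rotQ_rot, rotX_rot, rotY_rot, dblCos, dblSin, Real.cos_two_mul', Real.sin_two_mul]
  ring

lemma dblSin_rot (k : ℝ) (v : Fin 2 → ℝ) : dblSin k (!![2 * Real.cos k, -1; 1, 0] *ᵥ v) =
    Real.sin (2 * k) * dblCos k v + Real.cos (2 * k) * dblSin k v := by
  rw [dblSin, rotQ_rot, rotX_rot, rotY_rot, dblCos, dblSin, Real.cos_two_mul', Real.sin_two_mul]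
  ring

lemma eq_zero_of_rotation {θ x y : ℝ} (hθ : Real.cos θ ≠ 1)
    (hx : x = Real.cos θ * x + -Real.sin θ * y) (hy : y = Real.sin θ * x + Real.cos θ * y) :
    x = 0 ∧ y = 0 := by
  have hpos : (1 - Real.cos θ) ^ 2 + Real.sin θ ^ 2 ≠ 0 := by
    have : 0 < (1 - Real.cos θ) ^ 2 := by
      have : 1 - Real.cos θ ≠ 0 := sub_ne_zero.2 (Ne.symm hθ)
      positivity
    positivity
  constructor
  · refine (mul_eq_zero.1 (?_ : ((1 - Real.cos θ) ^ 2 + Real.sin θ ^ 2) * x = 0)).resolve_left hpos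
    linear_combination (1 - Real.cos θ) * hx - Real.sin θ * hy
  · refine (mul_eq_zero.1 (?_ : ((1 - Real.cos θ) ^ 2 + Real.sin θ ^ 2) * y = 0)).resolve_left hpos
    linear_combination (1 - Real.cos θ) * hy + Real.sin θ * hx

lemma IsMean.eq_zero_of_rotation {ν : ((Fin 2 → ℝ) → ℝ) → ℝ} (hν : IsMean ν)
    {f g : (Fin 2 → ℝ) → ℝ} (hf : BddMeas f) (hg : BddMeas g) {M : Matrix (Fin 2) (Fin 2) ℝ}
    (hM : ∀ f, BddMeas f → ν (fun v => f (M *ᵥ v)) = ν f) {θ : ℝ} (hθ : Real.cos θ ≠ 1)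
    (hfM : ∀ v, f (M *ᵥ v) = Real.cos θ * f v + -Real.sin θ * g v)
    (hgM : ∀ v, g (M *ᵥ v) = Real.sin θ * f v + Real.cos θ * g v) : ν f = 0 ∧ ν g = 0 := by
  refine _root_.eq_zero_of_rotation hθ ?_ ?_
  · conv_lhs => rw [← hM f hf, funext hfM]
    rw [hν.add _ _ ((BddMeas.const _).mul hf) ((BddMeas.const _).mul hg), hν.smul _ _ hf,
      hν.smul _ _ hg]
  · conv_lhs => rw [← hM g hg, funext hgM]
    rw [hν.add _ _ ((BddMeas.const _).mul hf) ((BddMeas.const _).mul hg), hν.smul _ _ hf,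
      hν.smul _ _ hg]

/-- The mean of a trigonometric polynomial of degree two in the doubled angle. -/
lemma IsMean.trig {ν : ((Fin 2 → ℝ) → ℝ) → ℝ} (hν : IsMean ν) {k : ℝ}
    (h2 : Real.cos (2 * k) ≠ 1) (h4 : Real.cos (4 * k) ≠ 1)
    (hR : ∀ f, BddMeas f → ν (fun v => f (!![2 * Real.cos k, -1; 1, 0] *ᵥ v)) = ν f)
    (c a b A B : ℝ) :
    ν (fun v => c + a * dblCos k v + b * dblSin k v + A * (dblCos k v ^ 2 - dblSin k v ^ 2)
      + B * (2 * dblCos k v * dblSin k v)) = c := by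
  have hC := bddMeas_dblCos k
  have hS := bddMeas_dblSin k
  have hE : BddMeas (fun v => dblCos k v ^ 2 - dblSin k v ^ 2) := by
    simpa [pow_two, sub_eq_add_neg] using (hC.mul hC).add ((BddMeas.const (-1)).mul (hS.mul hS))
  have hF : BddMeas (fun v => 2 * dblCos k v * dblSin k v) := ((BddMeas.const 2).mul hC).mul hS
  obtain ⟨e1, e2⟩ := hν.eq_zero_of_rotation hC hS hR h2 (dblCos_rot k) (dblSin_rot k)
  have h22 : 4 * k = 2 * (2 * k) := by ring
  obtain ⟨e3, e4⟩ := hν.eq_zero_of_rotation hE hF hR h4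
    (fun v => by
      rw [dblCos_rot, dblSin_rot, h22, Real.cos_two_mul' (2 * k), Real.sin_two_mul (2 * k)]; ring)
    (fun v => by
      rw [dblCos_rot, dblSin_rot, h22, Real.cos_two_mul' (2 * k), Real.sin_two_mul (2 * k)]; ring)
  have hc : ν (fun _ => c) = c := by
    simpa [hν.one] using hν.smul c (fun _ => 1) (BddMeas.const 1)
  have K := fun a : ℝ => BddMeas.const (α := Fin 2 → ℝ) a
  rw [hν.add _ _ ((((K c).add ((K a).mul hC)).add ((K b).mul hS)).add ((K A).mul hE))
      ((K B).mul hF),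
    hν.add _ _ (((K c).add ((K a).mul hC)).add ((K b).mul hS)) ((K A).mul hE),
    hν.add _ _ ((K c).add ((K a).mul hC)) ((K b).mul hS),
    hν.add _ _ (K c) ((K a).mul hC), hc, hν.smul _ _ hC, hν.smul _ _ hS, hν.smul _ _ hE,
    hν.smul _ _ hF, e1, e2, e3, e4]
  ring

/-- A unimodular matrix, written in the rotation coordinates, changes the quadratic form by a
trigonometric polynomial of degree one in the doubled angle. -/
lemma rotQ_mulVec_div {k : ℝ} (hs : Real.sin k ≠ 0) {M : Matrix (Fin 2) (Fin 2) ℝ}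
    {n₁ n₂ n₃ n₄ : ℝ}
    (hX : ∀ v, rotX k (M *ᵥ v) = n₁ * rotX k v + n₂ * rotY k v)
    (hY : ∀ v, rotY k (M *ᵥ v) = n₃ * rotX k v + n₄ * rotY k v) {v : Fin 2 → ℝ} (hv : v ≠ 0) :
    rotQ k (M *ᵥ v) / rotQ k v = (n₁ ^ 2 + n₃ ^ 2 + n₂ ^ 2 + n₄ ^ 2) / 2
      + (n₁ ^ 2 + n₃ ^ 2 - n₂ ^ 2 - n₄ ^ 2) / 2 * dblCos k v
      + (n₁ * n₂ + n₃ * n₄) * dblSin k v := by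
  have h := (rotQ_pos hs hv).ne'
  rw [dblCos, dblSin]
  field_simp
  rw [rotQ, hX, hY, rotQ]; ring

/-- A mean invariant under an elliptic rotation of order at least three and under a unimodular
matrix `M` forces `M` to be conformal for the quadratic form of the rotation. -/
lemma IsMean.conformal {ν : ((Fin 2 → ℝ) → ℝ) → ℝ} (hν : IsMean ν) {k : ℝ}
    (hs : Real.sin k ≠ 0) (h2 : Real.cos (2 * k) ≠ 1) (h4 : Real.cos (4 * k) ≠ 1)
    (hR : ∀ f, BddMeas f → ν (fun v => f (!![2 * Real.cos k, -1; 1, 0] *ᵥ v)) = ν f)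
    {M M' : Matrix (Fin 2) (Fin 2) ℝ} (hMM : M' * M = 1)
    (hM : ∀ f, BddMeas f → ν (fun v => f (M *ᵥ v)) = ν f) {n₁ n₂ n₃ n₄ : ℝ}
    (hX : ∀ v, rotX k (M *ᵥ v) = n₁ * rotX k v + n₂ * rotY k v)
    (hY : ∀ v, rotY k (M *ᵥ v) = n₃ * rotX k v + n₄ * rotY k v)
    (hX' : ∀ v, rotX k (M' *ᵥ v) = n₄ * rotX k v + -n₂ * rotY k v)
    (hY' : ∀ v, rotY k (M' *ᵥ v) = -n₃ * rotX k v + n₁ * rotY k v)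
    (hdet : n₁ * n₄ - n₂ * n₃ = 1) : n₁ = n₄ := by
  set τ := (n₁ ^ 2 + n₃ ^ 2 + n₂ ^ 2 + n₄ ^ 2) / 2 with hτ
  set a := (n₁ ^ 2 + n₃ ^ 2 - n₂ ^ 2 - n₄ ^ 2) / 2 with ha
  set b := n₁ * n₂ + n₃ * n₄ with hb
  have hτab : τ ^ 2 - 1 = a ^ 2 + b ^ 2 := by
    have : (n₁ * n₄ - n₂ * n₃) ^ 2 = 1 := by rw [hdet]; ring
    rw [hτ, ha, hb]; linear_combination this
  set h : (Fin 2 → ℝ) → ℝ := fun v => τ + a * dblCos k v + b * dblSin k v with hh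
  set g : (Fin 2 → ℝ) → ℝ := fun v => rotQ k (M' *ᵥ v) / rotQ k v with hg
  have K := fun a : ℝ => BddMeas.const (α := Fin 2 → ℝ) a
  have hC := bddMeas_dblCos k
  have hS := bddMeas_dblSin k
  have hbh : BddMeas h := ((K τ).add ((K a).mul hC)).add ((K b).mul hS)
  have hgform : ∀ v, v ≠ 0 → g v = (n₄ ^ 2 + (-n₃) ^ 2 + (-n₂) ^ 2 + n₁ ^ 2) / 2
      + (n₄ ^ 2 + (-n₃) ^ 2 - (-n₂) ^ 2 - n₁ ^ 2) / 2 * dblCos k v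
      + (n₄ * -n₂ + -n₃ * n₁) * dblSin k v := fun v hv => rotQ_mulVec_div hs hX' hY' hv
  have hgform_bdd : BddMeas (fun v => (n₄ ^ 2 + (-n₃) ^ 2 + (-n₂) ^ 2 + n₁ ^ 2) / 2
      + (n₄ ^ 2 + (-n₃) ^ 2 - (-n₂) ^ 2 - n₁ ^ 2) / 2 * dblCos k v
      + (n₄ * -n₂ + -n₃ * n₁) * dblSin k v) := ((K _).add ((K _).mul hC)).add ((K _).mul hS)
  have hbg : BddMeas g := hgform_bdd.congr_of_ne_zero
    (((measurable_rotQ k).comp (measurable_mulVec M')).div (measurable_rotQ k)) hgform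
  have hνg : ν g = τ := by
    rw [hν.congr hbg hgform_bdd hgform]
    have := hν.trig h2 h4 hR ((n₄ ^ 2 + (-n₃) ^ 2 + (-n₂) ^ 2 + n₁ ^ 2) / 2)
      ((n₄ ^ 2 + (-n₃) ^ 2 - (-n₂) ^ 2 - n₁ ^ 2) / 2) (n₄ * -n₂ + -n₃ * n₁) 0 0
    simp only [zero_mul, add_zero] at this
    rw [this, hτ]; ring
  have hbgM : BddMeas (fun v => g (M *ᵥ v)) := hbg.comp (measurable_mulVec M)
  -- `g ∘ M` is the inverse of `h` away from the origin
  have hMne : ∀ v, v ≠ 0 → M *ᵥ v ≠ 0 := fun v hv h0 => hv <| by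
    rw [← Matrix.one_mulVec v, ← hMM, ← Matrix.mulVec_mulVec, h0, Matrix.mulVec_zero]
  have hhform : ∀ v, v ≠ 0 → rotQ k (M *ᵥ v) / rotQ k v = h v := fun v hv =>
    rotQ_mulVec_div hs hX hY hv
  have hhpos : ∀ v, v ≠ 0 → 0 < h v := fun v hv => by
    rw [← hhform v hv]
    exact div_pos (rotQ_pos hs (hMne v hv)) (rotQ_pos hs hv)
  have hgM : ∀ v, v ≠ 0 → g (M *ᵥ v) = (h v)⁻¹ := fun v hv => by
    rw [← hhform v hv, hg]
    simp only [Matrix.mulVec_mulVec, hMM, Matrix.one_mulVec, inv_div]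
  -- the pointwise inequality `h + h⁻¹ ≤ 2 τ`, multiplied by the bounded function `h ≤ 2 τ`
  have hle : ∀ v, v ≠ 0 → 2 * τ * h v + -1 * (h v * h v) + -1
      ≤ 2 * τ * (2 * τ + -1 * h v + -1 * g (M *ᵥ v)) := fun v hv => by
    have hp := hhpos v hv
    have hcs := dblCos_sq_add_dblSin_sq hs hv
    have hquad : h v ^ 2 - 2 * τ * h v + 1 ≤ 0 := by
      have : h v - τ = a * dblCos k v + b * dblSin k v := by simp only [hh]; ring
      have h1 : (h v - τ) ^ 2 ≤ a ^ 2 + b ^ 2 := by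
        rw [this]
        have e : (a * dblCos k v + b * dblSin k v) ^ 2 + (a * dblSin k v - b * dblCos k v) ^ 2
          = a ^ 2 + b ^ 2 := by linear_combination (a ^ 2 + b ^ 2) * hcs
        nlinarith [sq_nonneg (a * dblSin k v - b * dblCos k v)]
      nlinarith
    rw [hgM v hv]
    have h3 : 2 * τ * h v + -1 * (h v * h v) + -1
        = h v * (2 * τ + -1 * h v + -1 * (h v)⁻¹) := by field_simp
    rw [h3]
    have h4 : 0 ≤ 2 * τ + -1 * h v + -1 * (h v)⁻¹ := by
      have : 0 ≤ h v * (2 * τ + -1 * h v + -1 * (h v)⁻¹) := by rw [← h3]; nlinarith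
      exact nonneg_of_mul_nonneg_right this hp
    have h5 : h v ≤ 2 * τ := by
      have := inv_pos.2 hp
      linarith
    exact mul_le_mul_of_nonneg_right h5 h4
  have hνh : ν h = τ := by
    have := hν.trig h2 h4 hR τ a b 0 0
    simpa only [zero_mul, add_zero] using this
  have hνhh : ν (fun v => h v * h v) = τ ^ 2 + (a ^ 2 + b ^ 2) / 2 := by
    rw [← hν.trig h2 h4 hR (τ ^ 2 + (a ^ 2 + b ^ 2) / 2) (2 * τ * a) (2 * τ * b)
      ((a ^ 2 - b ^ 2) / 2) (a * b)]
    refine hν.congr (hbh.mul hbh) ?_ fun v hv => ?_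
    · have hE : BddMeas (fun v => dblCos k v ^ 2 - dblSin k v ^ 2) := by
        simpa [pow_two, sub_eq_add_neg] using
          (hC.mul hC).add ((BddMeas.const (-1)).mul (hS.mul hS))
      exact ((((K _).add ((K _).mul hC)).add ((K _).mul hS)).add ((K _).mul hE)).add
        ((K _).mul (((K 2).mul hC).mul hS))
    · simp only [hh]
      linear_combination ((a ^ 2 + b ^ 2) / 2) * dblCos_sq_add_dblSin_sq hs hv
  have hconst : ∀ c, ν (fun _ => c) = c := fun c => by
    simpa [hν.one] using hν.smul c (fun _ => 1) (BddMeas.const 1)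
  have key := hν.mono _ _ ((((K (2 * τ)).mul hbh).add ((K (-1)).mul (hbh.mul hbh))).add (K (-1)))
    ((K (2 * τ)).mul (((K (2 * τ)).add ((K (-1)).mul hbh)).add ((K (-1)).mul hbgM))) hle
  rw [hν.add _ _ (((K (2 * τ)).mul hbh).add ((K (-1)).mul (hbh.mul hbh))) (K (-1)),
    hν.add _ _ ((K (2 * τ)).mul hbh) ((K (-1)).mul (hbh.mul hbh)), hν.smul _ _ hbh,
    hν.smul _ _ (hbh.mul hbh), hconst,
    hν.smul _ _ (((K (2 * τ)).add ((K (-1)).mul hbh)).add ((K (-1)).mul hbgM)),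
    hν.add _ _ ((K (2 * τ)).add ((K (-1)).mul hbh)) ((K (-1)).mul hbgM),
    hν.add _ _ (K (2 * τ)) ((K (-1)).mul hbh), hconst, hν.smul _ _ hbh, hν.smul _ _ hbgM,
    hM g hbg, hνg, hνh, hνhh] at key
  have hab : a ^ 2 + b ^ 2 ≤ 0 := by nlinarith
  have ha0 : a = 0 := by nlinarith [sq_nonneg a, sq_nonneg b]
  have hb0 : b = 0 := by nlinarith [sq_nonneg a, sq_nonneg b]
  have hτ1 : τ = 1 := by
    have : 0 ≤ τ := by rw [hτ]; positivity
    nlinarith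
  have : (n₁ - n₄) ^ 2 + (n₂ + n₃) ^ 2 = 0 := by
    have := hτ1
    rw [hτ] at this; linear_combination 2 * this - 2 * hdet
  have h14 : (n₁ - n₄) ^ 2 = 0 := by nlinarith [sq_nonneg (n₁ - n₄), sq_nonneg (n₂ + n₃)]
  exact sub_eq_zero.1 (pow_eq_zero_iff (two_ne_zero)|>.1 h14)

/-- The transfer matrix from letter `i` to letter `j`. -/
noncomputable def transferMat (k i j : ℝ) : Matrix (Fin 2) (Fin 2) ℝ :=
  Real.sqrt (j / i) • !![(j + i) / j * Real.cos k, -(i / j); (1 : ℝ), 0]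

lemma transferMat_mul_transferMat (k : ℝ) {a b : ℝ} (ha : 0 < a) (hb : 0 < b) :
    transferMat k b a * transferMat k a b =
      !![(a + b) / a * ((a + b) / b) * Real.cos k ^ 2 - b / a, -((a + b) / b * Real.cos k);
        (a + b) / b * Real.cos k, -(a / b)] := by
  have h : Real.sqrt (a / b) * Real.sqrt (b / a) = 1 := by
    rw [← Real.sqrt_mul (by positivity), div_mul_div_comm, mul_comm b a,
      div_self (by positivity), Real.sqrt_one]
  rw [transferMat, transferMat, Matrix.smul_mul, Matrix.mul_smul, smul_smul, h, one_smul]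
  ext i j
  fin_cases i <;> fin_cases j <;>
    simp [Matrix.mul_apply, Fin.sum_univ_two, -mul_eq_mul_right_iff] <;> field_simp <;> ring

lemma transferMat_self (k : ℝ) {a : ℝ} (ha : 0 < a) :
    transferMat k a a = !![2 * Real.cos k, -1; 1, 0] := by
  rw [transferMat, div_self ha.ne', Real.sqrt_one, one_smul]
  ext i j
  fin_cases i <;> fin_cases j <;> simp [-mul_eq_mul_right_iff]
  field_simp; ring

lemma det_transferMat (k : ℝ) {i j : ℝ} (hi : 0 < i) (hj : 0 < j) :
    (transferMat k i j).det = 1 := by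
  have h : Real.sqrt (j / i) ^ 2 = j / i := Real.sq_sqrt (by positivity)
  rw [transferMat, Matrix.det_smul, Fintype.card_fin, h, Matrix.det_fin_two_of]
  field_simp; ring

/-- The transfer matrices of the words `aa` and `aba` with `a ≠ b` have no common invariant
mean. -/
lemma IsMean.false_of_transferMat {ν : ((Fin 2 → ℝ) → ℝ) → ℝ} (hν : IsMean ν) {k : ℝ}
    (hk : k ∈ Ioo 0 π) (hk2 : k ≠ π / 2) {a b : ℝ} (ha : 0 < a) (hb : 0 < b) (hab : a ≠ b)
    (hR : ∀ f, BddMeas f → ν (fun v => f (transferMat k a a *ᵥ v)) = ν f)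
    (hM : ∀ f, BddMeas f →
      ν (fun v => f ((transferMat k b a * transferMat k a b) *ᵥ v)) = ν f) : False := by
  have hs : Real.sin k ≠ 0 := (Real.sin_pos_of_pos_of_lt_pi hk.1 hk.2).ne'
  have hc : Real.cos k ≠ 0 := fun h => by
    rcases lt_or_gt_of_ne hk2 with h' | h'
    · exact (Real.cos_pos_of_mem_Ioo ⟨by linarith [hk.1, Real.pi_pos], h'⟩).ne' h
    · exact (Real.cos_neg_of_pi_div_two_lt_of_lt h' (by linarith [hk.2, Real.pi_pos])).ne h
  have hsc := Real.sin_sq_add_cos_sq k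
  have h2 : Real.cos (2 * k) ≠ 1 := fun h => by
    rw [Real.cos_two_mul'] at h
    exact hs (pow_eq_zero_iff two_ne_zero |>.1 (by linarith))
  have h4 : Real.cos (4 * k) ≠ 1 := fun h => by
    rw [show 4 * k = 2 * (2 * k) by ring, Real.cos_two_mul', Real.sin_two_mul] at h
    have h5 := Real.sin_sq_add_cos_sq (2 * k)
    rw [Real.sin_two_mul] at h5
    have h6 : (2 * Real.sin k * Real.cos k) ^ 2 = 0 := by linarith
    exact mul_ne_zero (mul_ne_zero two_ne_zero hs) hc (pow_eq_zero_iff two_ne_zero |>.1 h6)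
  rw [transferMat_self k ha] at hR
  rw [transferMat_mul_transferMat k ha hb] at hM
  set m := (a + b) / a * ((a + b) / b) * Real.cos k ^ 2 - b / a with hm
  set γ := (a + b) / b * Real.cos k with hγ
  set δ := -(a / b) with hδ
  have hdet : m * δ + γ ^ 2 = 1 := by
    rw [hm, hγ, hδ]; field_simp; ring
  have key := hν.conformal (M := !![m, -γ; γ, δ]) (M' := !![δ, γ; -γ, m])
    (n₁ := m - Real.cos k * γ)
    (n₂ := (Real.cos k * m - γ - Real.cos k ^ 2 * γ - Real.cos k * δ) / Real.sin k)
    (n₃ := Real.sin k * γ) (n₄ := Real.cos k * γ + δ) hs h2 h4 hR ?_ hM ?_ ?_ ?_ ?_ ?_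
  · have h7 : (a - b) * Real.sin k ^ 2 = 0 := by
      have h8 : (m - Real.cos k * γ - (Real.cos k * γ + δ)) * (a * b) = 0 := by rw [key]; ring
      rw [hm, hγ, hδ] at h8
      field_simp at h8
      have h9 : (a + b) * ((a - b) * Real.sin k ^ 2) = 0 := by
        linear_combination h8 + (a + b) * (a - b) * hsc
      exact (mul_eq_zero.1 h9).resolve_left (by positivity)
    exact mul_ne_zero (sub_ne_zero.2 hab) (pow_ne_zero 2 hs) h7
  · ext i j
    fin_cases i <;> fin_cases j <;> simp [Matrix.mul_apply, Fin.sum_univ_two]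
    · linear_combination hdet
    · ring
    · ring
    · linear_combination hdet
  all_goals try intro v
  · simp [rotX, rotY, Matrix.mulVec, dotProduct, Fin.sum_univ_two]; field_simp; ring
  · simp [rotX, rotY, Matrix.mulVec, dotProduct, Fin.sum_univ_two]; ring
  · simp [rotX, rotY, Matrix.mulVec, dotProduct, Fin.sum_univ_two]; field_simp; ring
  · simp [rotX, rotY, Matrix.mulVec, dotProduct, Fin.sum_univ_two]; ring
  · field_simp; linear_combination hdet

/-- The shift by `a` places. -/
def shiftBy (a : ℤ) (ω : ℤ → ℕ) : ℤ → ℕ := fun n => ω (n + a)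

/-- The sequence with all coordinates before `a` replaced by the one at `a`. -/
def clampGE (a : ℤ) (ω : ℤ → ℕ) : ℤ → ℕ := fun n => ω (max n a)

/-- The sequence with all coordinates after `0` replaced by the one at `0`. -/
def clampLE (ω : ℤ → ℕ) : ℤ → ℕ := fun n => ω (min n 0)

lemma measurable_shiftBy (a : ℤ) : Measurable (shiftBy a) :=
  measurable_pi_lambda _ fun _ => measurable_pi_apply _

lemma measurable_clampGE (a : ℤ) : Measurable (clampGE a) :=
  measurable_pi_lambda _ fun _ => measurable_pi_apply _

lemma measurable_clampLE : Measurable clampLE :=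
  measurable_pi_lambda _ fun _ => measurable_pi_apply _

lemma shiftBy_zero (ω : ℤ → ℕ) : shiftBy 0 ω = ω := by ext n; simp [shiftBy]

lemma shiftBy_shiftBy (a b : ℤ) (ω : ℤ → ℕ) : shiftBy a (shiftBy b ω) = shiftBy (a + b) ω := by
  ext n; simp [shiftBy, add_assoc]

lemma shiftBy_clampGE (a b : ℤ) (ω : ℤ → ℕ) :
    shiftBy a (clampGE b ω) = clampGE (b - a) (shiftBy a ω) := by
  ext n; simp only [shiftBy, clampGE]; congr 1; omega

lemma apply_clampGE_of_le {β : Type*} {h : (ℤ → ℕ) → β} {a b : ℤ} (hba : b ≤ a)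
    (ha : ∀ ω, h (clampGE a ω) = h ω) (ω : ℤ → ℕ) : h (clampGE b ω) = h ω := by
  rw [← ha, ← ha ω]
  congr 1; ext n; simp only [clampGE]; congr 1; omega

lemma measurePreserving_shiftBy {μ : Measure (ℤ → ℕ)} (hT : MeasurePreserving shift μ μ) (m : ℕ) :
    MeasurePreserving (shiftBy m) μ μ := by
  have h : shiftBy m = shift^[m] := by
    induction m with
    | zero => ext ω n; simp [shiftBy]
    | succ m ih =>
      rw [Function.iterate_succ', ← ih]
      ext ω n; simp only [shiftBy, shift, Function.comp]; push_cast; congr 1; ring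
  rw [h]; exact hT.iterate m

lemma integral_shiftBy {μ : Measure (ℤ → ℕ)} (hT : MeasurePreserving shift μ μ) (m : ℕ)
    {g : (ℤ → ℕ) → ℝ} (hg : Measurable g) : ∫ ω, g (shiftBy m ω) ∂μ = ∫ ω, g ω ∂μ := by
  have h := measurePreserving_shiftBy hT m
  conv_rhs => rw [← h.map_eq]
  rw [integral_map h.measurable.aemeasurable hg.aestronglyMeasurable]

/-- The product of the matrices `S` along the word `ω₀ … ωₙ`. -/
def prodMat (S : ℕ → ℕ → Matrix (Fin 2) (Fin 2) ℝ) (ω : ℤ → ℕ) : ℕ → Matrix (Fin 2) (Fin 2) ℝ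
  | 0 => 1
  | n + 1 => S (ω n) (ω (n + 1)) * prodMat S ω n

section prodMat

variable {S : ℕ → ℕ → Matrix (Fin 2) (Fin 2) ℝ}

lemma prodMat_add (ω : ℤ → ℕ) (m r : ℕ) :
    prodMat S ω (m + r) = prodMat S (shiftBy m ω) r * prodMat S ω m := by
  induction r with
  | zero => simp [prodMat]
  | succ r ih =>
    rw [← add_assoc, prodMat, ih, prodMat, Matrix.mul_assoc]
    simp only [shiftBy]
    congr 2 <;> · push_cast; congr 1; ring

lemma prodMat_congr {ω ω' : ℤ → ℕ} {n : ℕ} (h : ∀ i : ℤ, 0 ≤ i → i ≤ n → ω i = ω' i) :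
    prodMat S ω n = prodMat S ω' n := by
  induction n with
  | zero => rfl
  | succ n ih =>
    rw [prodMat, prodMat, ih fun i h0 hi => h i h0 (by push_cast; omega),
      h n (by omega) (by push_cast; omega), h (n + 1) (by omega) (by push_cast; omega)]

lemma det_prodMat (hS : ∀ i j, (S i j).det = 1) (ω : ℤ → ℕ) (n : ℕ) :
    (prodMat S ω n).det = 1 := by
  induction n with
  | zero => simp [prodMat]
  | succ n ih => rw [prodMat, Matrix.det_mul, hS, ih, one_mul]

lemma measurable_prodMat_apply (n : ℕ) (i j : Fin 2) :
    Measurable (fun ω : ℤ → ℕ => prodMat S ω n i j) := by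
  induction n generalizing i j with
  | zero => exact measurable_const
  | succ n ih =>
    simp only [prodMat, Matrix.mul_apply]
    refine Finset.measurable_sum _ fun l _ => Measurable.mul ?_ (ih l j)
    have h : Measurable (fun p : ℕ × ℕ => S p.1 p.2 i l) := Measurable.of_discrete
    have h' : Measurable (fun ω : ℤ → ℕ => (ω n, ω (n + 1))) :=
      (measurable_pi_apply (n : ℤ)).prodMk (measurable_pi_apply ((n : ℤ) + 1))
    exact h.comp h'

end prodMat

/-- A heavy-tailed probability density on the plane. -/
noncomputable def dens (x : Fin 2 → ℝ) : ℝ :=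
  (1 + ‖x‖) ^ (-3 : ℝ) / ∫ y : Fin 2 → ℝ, (1 + ‖y‖) ^ (-3 : ℝ)

lemma integrable_dens_aux :
    Integrable (fun y : Fin 2 → ℝ => (1 + ‖y‖) ^ (-3 : ℝ)) := by
  refine integrable_one_add_norm ?_
  simp; norm_num

lemma integral_dens_aux_pos : 0 < ∫ y : Fin 2 → ℝ, (1 + ‖y‖) ^ (-3 : ℝ) := by
  rw [integral_pos_iff_support_of_nonneg (fun y => by positivity) integrable_dens_aux]
  have : Function.support (fun y : Fin 2 → ℝ => (1 + ‖y‖) ^ (-3 : ℝ)) = univ := by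
    ext y; simp only [Function.mem_support, mem_univ, iff_true]; positivity
  rw [this]; simp

lemma dens_pos (x : Fin 2 → ℝ) : 0 < dens x :=
  div_pos (by positivity) integral_dens_aux_pos

lemma integrable_dens : Integrable dens := integrable_dens_aux.div_const _

lemma integral_dens : ∫ x, dens x = 1 := by
  simp only [dens]
  rw [integral_div, div_self integral_dens_aux_pos.ne']

lemma measurable_dens : Measurable dens := by
  unfold dens; fun_prop

lemma BddMeas.integrable_mul_dens {f : (Fin 2 → ℝ) → ℝ} (hf : BddMeas f) :
    Integrable (fun x => f x * dens x) := by
  obtain ⟨C, hC⟩ := hf.bdd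
  exact integrable_dens.bdd_mul hf.meas.aestronglyMeasurable (ae_of_all _ hC)

lemma norm_mulVec_le (B : Matrix (Fin 2) (Fin 2) ℝ) (x : Fin 2 → ℝ) :
    ‖B *ᵥ x‖ ≤ 2 * ‖B‖ * ‖x‖ := by
  have h := Matrix.l2_opNorm_mulVec B (WithLp.toLp 2 x)
  have hx : ‖WithLp.toLp 2 x‖ ≤ 2 * ‖x‖ := by
    rw [EuclideanSpace.norm_eq, Real.sqrt_le_left (by positivity), Fin.sum_univ_two]
    have h0 := norm_le_pi_norm x 0
    have h1 := norm_le_pi_norm x 1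
    simp only
    nlinarith [norm_nonneg (x 0), norm_nonneg (x 1), norm_nonneg x]
  refine (pi_norm_le_iff_of_nonneg (by positivity)).2 fun i => ?_
  calc ‖(B *ᵥ x) i‖ ≤ ‖WithLp.toLp 2 (B *ᵥ x)‖ := PiLp.norm_apply_le (WithLp.toLp 2 (B *ᵥ x)) i
    _ ≤ ‖B‖ * ‖WithLp.toLp 2 x‖ := h
    _ ≤ ‖B‖ * (2 * ‖x‖) := by gcongr
    _ = _ := by ring

lemma abs_apply_le_norm (B : Matrix (Fin 2) (Fin 2) ℝ) (i j : Fin 2) : |B i j| ≤ ‖B‖ := by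
  have h := Matrix.l2_opNorm_mulVec B (EuclideanSpace.single j (1 : ℝ))
  rw [PiLp.norm_single, norm_one, mul_one] at h
  refine le_trans ?_ h
  refine le_trans (le_of_eq ?_) (PiLp.norm_apply_le _ i)
  simp

lemma one_le_two_mul_norm {B : Matrix (Fin 2) (Fin 2) ℝ} (hB : B.det = 1) : 1 ≤ 2 * ‖B‖ := by
  rw [Matrix.det_fin_two] at hB
  have h (i j) := abs_apply_le_norm B i j
  have h1 : |B 0 0 * B 1 1| ≤ ‖B‖ * ‖B‖ := by
    rw [abs_mul]; exact mul_le_mul (h _ _) (h _ _) (abs_nonneg _) (norm_nonneg _)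
  have h2 : |B 0 1 * B 1 0| ≤ ‖B‖ * ‖B‖ := by
    rw [abs_mul]; exact mul_le_mul (h _ _) (h _ _) (abs_nonneg _) (norm_nonneg _)
  rw [abs_le] at h1 h2
  nlinarith [norm_nonneg B]

lemma log_dens_div_le {B : Matrix (Fin 2) (Fin 2) ℝ} (hB : B.det = 1) (x : Fin 2 → ℝ) :
    Real.log (dens x / dens (B *ᵥ x)) ≤ 3 * Real.log (2 * ‖B‖) := by
  have h1 := one_le_two_mul_norm hB
  have h2 : 1 + ‖B *ᵥ x‖ ≤ (2 * ‖B‖) * (1 + ‖x‖) := by linarith [norm_mulVec_le B x]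
  have hp : (0 : ℝ) < 1 + ‖x‖ := by positivity
  have hq : (0 : ℝ) < 1 + ‖B *ᵥ x‖ := by positivity
  rw [dens, dens, div_div_div_cancel_right₀ integral_dens_aux_pos.ne',
    Real.log_div (by positivity) (by positivity), Real.log_rpow hp, Real.log_rpow hq]
  have h3 := Real.log_le_log hq h2
  rw [Real.log_mul (by positivity) (by positivity)] at h3
  linarith

lemma measurePreserving_mulVec {B : Matrix (Fin 2) (Fin 2) ℝ} (hB : B.det = 1) :
    MeasurePreserving (fun x : Fin 2 → ℝ => B *ᵥ x) := by
  refine ⟨measurable_mulVec B, ?_⟩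
  have h := Real.map_matrix_volume_pi_eq_smul_volume_pi (M := B) (by rw [hB]; exact one_ne_zero)
  rw [hB] at h
  simp only [inv_one, abs_one, ENNReal.ofReal_one, one_smul] at h
  exact h

/-- The Gibbs variational inequality for the image of the density `dens` under a unimodular
matrix. -/
lemma integral_log_comp_mulVec_le {B : Matrix (Fin 2) (Fin 2) ℝ} (hB : B.det = 1)
    {g : (Fin 2 → ℝ) → ℝ} (hg : BddMeas g) {ε : ℝ} (hε : 0 < ε) (hgε : ∀ z, ε ≤ g z) :
    ∫ x, Real.log (g (B *ᵥ x)) * dens x ≤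
      3 * Real.log (2 * ‖B‖) - 1 + ∫ z, g z * dens z := by
  have hmp := measurePreserving_mulVec hB
  have hgpos : ∀ z, 0 < g z := fun z => hε.trans_le (hgε z)
  have hlog : BddMeas (fun x => Real.log (g (B *ᵥ x))) := by
    obtain ⟨C, hC⟩ := hg.bdd
    refine ⟨Real.measurable_log.comp (hg.meas.comp (measurable_mulVec B)),
      max |Real.log ε| |Real.log C|, fun x => ?_⟩
    refine abs_le_max_abs_abs (Real.log_le_log hε (hgε _))
      (Real.log_le_log (hgpos _) ((le_abs_self _).trans (hC _)))
  have hInt : Integrable (fun x => g (B *ᵥ x) * dens (B *ᵥ x)) :=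
    hmp.integrable_comp_of_integrable hg.integrable_mul_dens
  have heq : ∫ x, g (B *ᵥ x) * dens (B *ᵥ x) = ∫ z, g z * dens z := by
    conv_rhs => rw [← hmp.map_eq]
    rw [integral_map hmp.measurable.aemeasurable
      (show Measurable (fun z => g z * dens z) from
        hg.meas.mul measurable_dens).aestronglyMeasurable]
  calc ∫ x, Real.log (g (B *ᵥ x)) * dens x
      ≤ ∫ x, ((3 * Real.log (2 * ‖B‖) - 1) * dens x + g (B *ᵥ x) * dens (B *ᵥ x)) := by
        refine integral_mono hlog.integrable_mul_dens
          ((integrable_dens.const_mul _).add hInt) fun x => ?_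
        have hx := dens_pos x
        have hBx := dens_pos (B *ᵥ x)
        have hgx := hgpos (B *ᵥ x)
        have h1 : Real.log (g (B *ᵥ x)) = Real.log (g (B *ᵥ x) * dens (B *ᵥ x) / dens x)
            + Real.log (dens x / dens (B *ᵥ x)) := by
          rw [← Real.log_mul (by positivity) (by positivity)]
          congr 1; field_simp
        have h2 := Real.log_le_sub_one_of_pos
          (show 0 < g (B *ᵥ x) * dens (B *ᵥ x) / dens x by positivity)
        have h3 := log_dens_div_le hB x
        calc Real.log (g (B *ᵥ x)) * dens x
            ≤ ((g (B *ᵥ x) * dens (B *ᵥ x) / dens x - 1) + 3 * Real.log (2 * ‖B‖)) * dens x := by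
              rw [h1]; gcongr
          _ = _ := by field_simp; ring
    _ = _ := by
        rw [integral_add (integrable_dens.const_mul _) hInt, integral_const_mul, integral_dens,
          heq, mul_one]

/-- Expectation of a product of one plus reversed martingale differences. -/
lemma integral_prod_one_add {μ : Measure (ℤ → ℕ)} [IsProbabilityMeasure μ]
    {Y : ℕ → (ℤ → ℕ) → ℝ} (hY : ∀ m, BddMeas (Y m)) (i : ℤ)
    (hcl : ∀ (m : ℕ) ω, Y m (clampGE (m - i - 1) ω) = Y m ω)
    (horth : ∀ (m : ℕ) V, BddMeas V → (∀ ω, V (clampGE (m - i) ω) = V ω) →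
      ∫ ω, Y m ω * V ω ∂μ = 0) (r p : ℕ) :
    ∫ ω, ∏ m ∈ Finset.range r, (1 + Y (p + m) ω) ∂μ = 1 := by
  induction r generalizing p with
  | zero => simp
  | succ r ih =>
    have hV : BddMeas (fun ω => ∏ m ∈ Finset.range r, (1 + Y (p + 1 + m) ω)) :=
      BddMeas.prod _ fun m _ => (BddMeas.const 1).add (hY _)
    have h0 := horth p _ hV fun ω => Finset.prod_congr rfl fun m _ => by
      rw [apply_clampGE_of_le _ (hcl (p + 1 + m))]; push_cast; omega
    have heq : ∀ ω, ∏ m ∈ Finset.range (r + 1), (1 + Y (p + m) ω) =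
        ∏ m ∈ Finset.range r, (1 + Y (p + 1 + m) ω) +
        Y p ω * ∏ m ∈ Finset.range r, (1 + Y (p + 1 + m) ω) := fun ω => by
      rw [Finset.prod_range_succ', add_zero,
        Finset.prod_congr rfl fun m _ => by rw [show p + (m + 1) = p + 1 + m by ring]]
      ring
    simp only [heq]
    rw [integral_add (hV.integrable μ) (((hY p).mul hV).integrable μ), h0, ih, add_zero]

lemma sub_two_mul_sq_le_log {x : ℝ} (hx : -(1 / 2) ≤ x) :
    x - 2 * x ^ 2 ≤ Real.log (1 + x) := by
  have h1 : 0 < 1 + x := by linarith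
  refine le_trans ?_ (Real.one_sub_inv_le_log_of_pos h1)
  have : 1 - (1 + x)⁻¹ = x / (1 + x) := by field_simp; ring
  rw [this, le_div_iff₀ h1]
  nlinarith [mul_nonneg (sq_nonneg x) (show 0 ≤ 1 + 2 * x by linarith)]

/-- The probability measure on the plane with density `dens`. -/
noncomputable def densMeasure : Measure (Fin 2 → ℝ) :=
  volume.withDensity fun x => ENNReal.ofReal (dens x)

lemma integral_densMeasure (g : (Fin 2 → ℝ) → ℝ) :
    ∫ x, g x ∂densMeasure = ∫ x, g x * dens x := by
  rw [densMeasure, integral_withDensity_eq_integral_toReal_smul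
    measurable_dens.ennreal_ofReal (by simp)]
  refine integral_congr_ae (ae_of_all _ fun x => ?_)
  simp only [ENNReal.toReal_ofReal (dens_pos x).le, smul_eq_mul, mul_comm]

instance : IsProbabilityMeasure densMeasure := by
  constructor
  rw [densMeasure, withDensity_apply _ MeasurableSet.univ, Measure.restrict_univ,
    ← ofReal_integral_eq_lintegral_ofReal integrable_dens (ae_of_all _ fun x => (dens_pos x).le),
    integral_dens, ENNReal.ofReal_one]

lemma ae_ne_zero_densMeasure : ∀ᵐ x ∂densMeasure, x ≠ 0 := by
  have h : ∀ᵐ x : Fin 2 → ℝ, x ≠ 0 := by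
    simp [ae_iff]
  exact (withDensity_absolutelyContinuous _ _).ae_le h

lemma measurable_mulVec_of_apply {α : Type*} [MeasurableSpace α]
    {M : α → Matrix (Fin 2) (Fin 2) ℝ} (hM : ∀ i j, Measurable fun a => M a i j)
    {h : α → Fin 2 → ℝ} (hh : Measurable h) : Measurable fun a => M a *ᵥ h a := by
  refine measurable_pi_lambda _ fun i => ?_
  simp only [Matrix.mulVec, dotProduct]
  exact Finset.measurable_sum _ fun l _ => (hM i l).mul ((measurable_pi_apply l).comp hh)

section prodMat

variable {S : ℕ → ℕ → Matrix (Fin 2) (Fin 2) ℝ}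

lemma measurable_comp_prodMat (h : Matrix (Fin 2) (Fin 2) ℝ → ℝ) (n : ℕ) :
    Measurable (fun ω : ℤ → ℕ => h (prodMat S ω n)) := by
  have h1 : Measurable fun (ω : ℤ → ℕ) (i : Fin (n + 1)) => ω i :=
    measurable_pi_lambda _ fun _ => measurable_pi_apply _
  let e : (Fin (n + 1) → ℕ) → ℤ → ℕ := fun w i => w (Fin.ofNat (n + 1) i.toNat)
  have h2 : Measurable fun w : Fin (n + 1) → ℕ => h (prodMat S (e w) n) := Measurable.of_discrete
  convert h2.comp h1 using 2 with ω
  simp only [Function.comp]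
  congr 1
  refine prodMat_congr fun i h0 hi => ?_
  simp only [e]
  congr 1
  rw [Fin.val_ofNat, Nat.mod_eq_of_lt (by omega)]
  omega

lemma exists_norm_prodMat_le {K : ℝ} (hK : ∀ i j, ‖S i j‖ ≤ K) (n : ℕ) :
    ∃ C, ∀ ω, ‖prodMat S ω n‖ ≤ C := by
  induction n with
  | zero => exact ⟨‖(1 : Matrix (Fin 2) (Fin 2) ℝ)‖, fun _ => le_rfl⟩
  | succ n ih =>
    obtain ⟨C, hC⟩ := ih
    refine ⟨K * C, fun ω => (Matrix.l2_opNorm_mul _ _).trans ?_⟩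
    exact mul_le_mul (hK _ _) (hC _) (norm_nonneg _) ((norm_nonneg _).trans (hK 0 0))

lemma bddMeas_log_norm_prodMat (hS : ∀ i j, (S i j).det = 1) {K : ℝ} (hK : ∀ i j, ‖S i j‖ ≤ K)
    (n : ℕ) : BddMeas fun ω => Real.log (2 * ‖prodMat S ω n‖) := by
  obtain ⟨C, hC⟩ := exists_norm_prodMat_le hK n
  refine ⟨measurable_comp_prodMat (fun M => Real.log (2 * ‖M‖)) n, Real.log (2 * C), fun ω => ?_⟩
  have h1 := one_le_two_mul_norm (det_prodMat hS ω n)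
  rw [abs_of_nonneg (Real.log_nonneg h1)]
  exact Real.log_le_log (by linarith) (by linarith [hC ω])

/-- The average of `f` over the images of the plane under the product along the last `m`
transitions before time zero. -/
noncomputable def pastAvg (S : ℕ → ℕ → Matrix (Fin 2) (Fin 2) ℝ) (f : (Fin 2 → ℝ) → ℝ) (m : ℕ)
    (ω : ℤ → ℕ) : ℝ :=
  ∫ x, f (prodMat S (shiftBy (-m) ω) m *ᵥ x) ∂densMeasure

lemma measurable_pastAvg {f : (Fin 2 → ℝ) → ℝ} (hf : Measurable f) (m : ℕ) :
    Measurable (pastAvg S f m) := by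
  have h : Measurable fun p : (ℤ → ℕ) × (Fin 2 → ℝ) =>
      f (prodMat S (shiftBy (-m) p.1) m *ᵥ p.2) :=
    hf.comp (measurable_mulVec_of_apply (fun i j => (measurable_prodMat_apply m i j).comp
      ((measurable_shiftBy _).comp measurable_fst)) measurable_snd)
  exact (h.stronglyMeasurable.integral_prod_right (ν := densMeasure)).measurable

lemma abs_pastAvg_le {f : (Fin 2 → ℝ) → ℝ} {C : ℝ} (hC : ∀ v, |f v| ≤ C) (m : ℕ) (ω : ℤ → ℕ) :
    |pastAvg S f m ω| ≤ C := by
  have h := norm_integral_le_of_norm_le_const (μ := densMeasure)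
    (f := fun x => f (prodMat S (shiftBy (-m) ω) m *ᵥ x)) (ae_of_all _ fun x => hC _)
  rw [probReal_univ, mul_one] at h
  exact h

lemma bddMeas_pastAvg {f : (Fin 2 → ℝ) → ℝ} (hf : BddMeas f) (m : ℕ) :
    BddMeas (pastAvg S f m) :=
  ⟨measurable_pastAvg hf.meas m, hf.bdd.imp fun _ hC => abs_pastAvg_le hC m⟩

lemma pastAvg_clampLE (f : (Fin 2 → ℝ) → ℝ) (m : ℕ) (ω : ℤ → ℕ) :
    pastAvg S f m (clampLE ω) = pastAvg S f m ω := by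
  unfold pastAvg
  rw [prodMat_congr (ω := shiftBy (-m) (clampLE ω)) (ω' := shiftBy (-m) ω) fun i h0 hi => ?_]
  simp only [shiftBy, clampLE]
  congr 1; omega

lemma pastAvg_shiftBy (f : (Fin 2 → ℝ) → ℝ) (m : ℕ) (ω : ℤ → ℕ) :
    pastAvg S f m (shiftBy m ω) = ∫ x, f (prodMat S ω m *ᵥ x) ∂densMeasure := by
  rw [pastAvg, shiftBy_shiftBy, neg_add_cancel, shiftBy_zero]

lemma pastAvg_succ_shiftBy (f : (Fin 2 → ℝ) → ℝ) (m : ℕ) (ω : ℤ → ℕ) :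
    pastAvg S f (m + 1) (shiftBy 1 ω) = pastAvg S (fun v => f (S (ω 0) (ω 1) *ᵥ v)) m ω := by
  unfold pastAvg
  rw [shiftBy_shiftBy, show -((m + 1 : ℕ) : ℤ) + 1 = -m by push_cast; ring, prodMat]
  have h0 : shiftBy (-m) ω m = ω 0 := by simp [shiftBy]
  have h1 : shiftBy (-m) ω (m + 1) = ω 1 := by simp only [shiftBy]; congr 1; ring
  simp only [h0, h1, Matrix.mulVec_mulVec]

/-- Correlations of past averages with reversed martingale differences are controlled by the growth
of the matrix products. -/
lemma mul_sum_integral_pastAvg_mul_le {μ : Measure (ℤ → ℕ)} [IsProbabilityMeasure μ]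
    (hT : MeasurePreserving shift μ μ) (hS : ∀ i j, (S i j).det = 1) {K : ℝ}
    (hK : ∀ i j, ‖S i j‖ ≤ K) {f : (Fin 2 → ℝ) → ℝ} (hf : Measurable f) {C : ℝ}
    (hC : ∀ v, |f v| ≤ C) {d : (ℤ → ℕ) → ℝ} (hd : Measurable d) {D : ℝ} (hD : ∀ ω, |d ω| ≤ D)
    (i : ℕ) (hcl : ∀ ω, d (clampGE (-i - 1) ω) = d ω)
    (horth : ∀ V, BddMeas V → (∀ ω, V (clampGE (-i) ω) = V ω) → ∫ ω, d ω * V ω ∂μ = 0)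
    {t : ℝ} (ht : 0 ≤ t) (htCD : t * (C * D) ≤ 1 / 2) (n : ℕ) :
    t * ∑ m ∈ Finset.range n, ∫ ω, pastAvg S f m ω * d ω ∂μ ≤
      3 * ∫ ω, Real.log (2 * ‖prodMat S ω n‖) ∂μ + n * (2 * (t * (C * D)) ^ 2) := by
  have hC0 : 0 ≤ C := (abs_nonneg _).trans (hC 0)
  have hD0 : 0 ≤ D := (abs_nonneg _).trans (hD 0)
  let Y : ℕ → (ℤ → ℕ) × (Fin 2 → ℝ) → ℝ := fun m p =>
    t * (d (shiftBy m p.1) * f ((prodMat S (shiftBy m p.1) (n - m)).adjugate *ᵥ p.2))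
  have hYabs : ∀ m p, |Y m p| ≤ t * (C * D) := fun m p => by
    simp only [Y, abs_mul, abs_of_nonneg ht]
    rw [mul_comm C D]
    exact mul_le_mul_of_nonneg_left (mul_le_mul (hD _) (hC _) (abs_nonneg _) hD0) ht
  have hadj : ∀ (m : ℕ) (a b : Fin 2), Measurable fun p : (ℤ → ℕ) × (Fin 2 → ℝ) =>
      (prodMat S (shiftBy m p.1) (n - m)).adjugate a b := fun m a b =>
    (measurable_comp_prodMat (fun M => M.adjugate a b) (n - m)).comp
      ((measurable_shiftBy _).comp measurable_fst)
  have hYm : ∀ m, BddMeas (Y m) := fun m =>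
    ⟨((hd.comp ((measurable_shiftBy _).comp measurable_fst)).mul
      (hf.comp (measurable_mulVec_of_apply (hadj m) measurable_snd))).const_mul t, _, hYabs m⟩
  let Z : (ℤ → ℕ) × (Fin 2 → ℝ) → ℝ := fun p => ∏ m ∈ Finset.range n, (1 + Y m p)
  have hZ : BddMeas Z := BddMeas.prod _ fun m _ => (BddMeas.const 1).add (hYm m)
  have hY1 : ∀ m p, 1 / 2 ≤ 1 + Y m p := fun m p => by
    linarith [(abs_le.1 (hYabs m p)).1]
  have hZε : ∀ p, (1 / 2) ^ n ≤ Z p := fun p => by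
    have := Finset.prod_le_prod (s := Finset.range n) (f := fun _ => (1 / 2 : ℝ))
      (g := fun m => 1 + Y m p) (fun _ _ => by norm_num) (fun m _ => hY1 m p)
    simpa using this
  -- for fixed `z`, the product has mean one
  have hZ1 : ∀ z, ∫ ω, Z (ω, z) ∂μ = 1 := fun z => by
    have hsec : Measurable fun ω : ℤ → ℕ => (ω, z) := measurable_prodMk_right
    have h := integral_prod_one_add (μ := μ) (Y := fun m ω => Y m (ω, z))
      (fun m => (hYm m).comp hsec) i (fun m ω => ?_) (fun m V hV hVcl => ?_) n 0
    · simpa only [zero_add] using h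
    · have h1 : d (shiftBy m (clampGE (m - i - 1) ω)) = d (shiftBy m ω) := by
        rw [shiftBy_clampGE, show (m : ℤ) - i - 1 - m = -i - 1 by ring, hcl]
      have h2 : prodMat S (shiftBy m (clampGE (m - i - 1) ω)) (n - m) =
          prodMat S (shiftBy m ω) (n - m) := prodMat_congr fun l h0 hl => by
        simp only [shiftBy, clampGE]; congr 1; omega
      simp only [Y, h1, h2]
    · let V' : (ℤ → ℕ) → ℝ := fun ω =>
        t * (f ((prodMat S ω (n - m)).adjugate *ᵥ z) * V (shiftBy (-m) ω))
      have hV' : BddMeas V' := by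
        refine (BddMeas.const t).mul (BddMeas.mul ⟨hf.comp ?_, C, fun _ => hC _⟩
          (hV.comp (measurable_shiftBy _)))
        exact measurable_mulVec_of_apply
          (fun a b => measurable_comp_prodMat (fun M => M.adjugate a b) (n - m)) measurable_const
      have h0 := horth V' hV' fun ω => by
        have h1 : prodMat S (clampGE (-i) ω) (n - m) = prodMat S ω (n - m) :=
          prodMat_congr fun l h0 hl => by simp only [clampGE]; congr 1; omega
        have h2 : V (shiftBy (-m) (clampGE (-i) ω)) = V (shiftBy (-m) ω) := by
          rw [shiftBy_clampGE, show -(i : ℤ) - -m = m - i by ring, hVcl]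
        simp only [V', h1, h2]
      rw [← integral_shiftBy hT m
        (show Measurable fun ω => d ω * V' ω from hd.mul hV'.meas)] at h0
      rw [← h0]
      refine integral_congr_ae (ae_of_all _ fun ω => ?_)
      simp only [Y, V', shiftBy_shiftBy, neg_add_cancel, shiftBy_zero]
      ring
  -- the pointwise inequality
  have hpt : ∀ ω, ∑ m ∈ Finset.range n, t * (pastAvg S f m (shiftBy m ω) * d (shiftBy m ω)) -
      n * (2 * (t * (C * D)) ^ 2) ≤
      3 * Real.log (2 * ‖prodMat S ω n‖) - 1 + ∫ z, Z (ω, z) ∂densMeasure := fun ω => by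
    have hsec : Measurable fun z : Fin 2 → ℝ => (ω, z) := measurable_prodMk_left
    have h := integral_log_comp_mulVec_le (det_prodMat hS ω n) (hZ.comp hsec)
      (show (0 : ℝ) < (1 / 2) ^ n by positivity) fun z => hZε (ω, z)
    rw [← integral_densMeasure, ← integral_densMeasure] at h
    refine le_trans ?_ h
    have hfb : ∀ m, BddMeas fun x => f (prodMat S ω m *ᵥ x) := fun m =>
      ⟨hf.comp (measurable_mulVec _), C, fun _ => hC _⟩
    have hsum : BddMeas fun x => ∑ m ∈ Finset.range n,
        (t * d (shiftBy m ω)) * f (prodMat S ω m *ᵥ x) :=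
      BddMeas.sum _ fun m _ => (BddMeas.const _).mul (hfb m)
    have hlhs : ∑ m ∈ Finset.range n, t * (pastAvg S f m (shiftBy m ω) * d (shiftBy m ω)) -
        n * (2 * (t * (C * D)) ^ 2) = ∫ x, (∑ m ∈ Finset.range n,
          (t * d (shiftBy m ω)) * f (prodMat S ω m *ᵥ x) +
            -(n * (2 * (t * (C * D)) ^ 2))) ∂densMeasure := by
      rw [integral_add (hsum.integrable _) (integrable_const _),
        integral_finsetSum _ fun m _ => ((BddMeas.const _).mul (hfb m)).integrable _]
      simp only [integral_const_mul, pastAvg_shiftBy, integral_const, probReal_univ, one_smul,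
        ← sub_eq_add_neg]
      congr 1
      exact Finset.sum_congr rfl fun m _ => by ring
    rw [hlhs]
    have hlogm : BddMeas fun x => Real.log (Z (ω, prodMat S ω n *ᵥ x)) := by
      obtain ⟨CZ, hCZ⟩ := hZ.bdd
      refine ⟨Real.measurable_log.comp (hZ.meas.comp (hsec.comp (measurable_mulVec _))),
        max |Real.log ((1 / 2) ^ n)| |Real.log CZ|, fun x => ?_⟩
      have hp : (0 : ℝ) < (1 / 2) ^ n := by positivity
      exact abs_le_max_abs_abs (Real.log_le_log hp (hZε _))
        (Real.log_le_log (hp.trans_le (hZε _)) ((le_abs_self _).trans (hCZ _)))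
    refine integral_mono ((hsum.add (BddMeas.const _)).integrable _) (hlogm.integrable _)
      fun x => ?_
    simp only [Z]
    rw [Real.log_prod fun m _ => (by linarith [hY1 m (ω, prodMat S ω n *ᵥ x)] : (1 + Y m _) ≠ 0)]
    have hc : (n : ℝ) * (2 * (t * (C * D)) ^ 2) =
        ∑ m ∈ Finset.range n, 2 * (t * (C * D)) ^ 2 := by simp
    rw [hc, ← Finset.sum_neg_distrib, ← Finset.sum_add_distrib]
    refine Finset.sum_le_sum fun m hm => ?_
    have hm : m < n := Finset.mem_range.1 hm
    have hYeq : Y m (ω, prodMat S ω n *ᵥ x) =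
        (t * d (shiftBy m ω)) * f (prodMat S ω m *ᵥ x) := by
      have hn : prodMat S ω n = prodMat S (shiftBy m ω) (n - m) * prodMat S ω m := by
        rw [← prodMat_add, Nat.add_sub_cancel' hm.le]
      simp only [Y]
      rw [hn, Matrix.mulVec_mulVec, ← Matrix.mul_assoc, Matrix.adjugate_mul, det_prodMat hS,
        one_smul, Matrix.one_mul, mul_assoc]
    have h1 := sub_two_mul_sq_le_log (x := Y m (ω, prodMat S ω n *ᵥ x))
      (by linarith [hY1 m (ω, prodMat S ω n *ᵥ x)])
    have h2 := sq_le_sq' (abs_le.1 (hYabs m (ω, prodMat S ω n *ᵥ x))).1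
      (abs_le.1 (hYabs m (ω, prodMat S ω n *ᵥ x))).2
    rw [← hYeq]
    linarith
  have hfd : ∀ m, BddMeas fun ω => pastAvg S f m ω * d ω := fun m =>
    (bddMeas_pastAvg ⟨hf, C, hC⟩ m).mul ⟨hd, D, hD⟩
  have hfdS : ∀ m : ℕ, BddMeas fun ω => t * (pastAvg S f m (shiftBy m ω) * d (shiftBy m ω)) :=
    fun m => (BddMeas.const t).mul ((hfd m).comp (measurable_shiftBy _))
  have hlog := bddMeas_log_norm_prodMat hS hK n
  have hZint : Integrable Z (μ.prod densMeasure) := hZ.integrable _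
  have hZω : Integrable (fun ω => ∫ z, Z (ω, z) ∂densMeasure) μ := hZint.integral_prod_left
  have hlog1 : Integrable (fun ω => 3 * Real.log (2 * ‖prodMat S ω n‖) - 1) μ :=
    ((hlog.integrable μ).const_mul 3).sub (integrable_const _)
  have hI := integral_mono (μ := μ)
    (((BddMeas.sum _ fun m _ => hfdS m).integrable μ).sub (integrable_const _))
    (hlog1.add hZω) hpt
  have hswap : ∫ ω, ∫ z, Z (ω, z) ∂densMeasure ∂μ = 1 := by
    rw [integral_integral_swap hZint]
    simp [hZ1]
  simp only [Pi.sub_apply, Pi.add_apply] at hI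
  rw [integral_sub ((BddMeas.sum _ fun m _ => hfdS m).integrable μ) (integrable_const _),
    integral_add hlog1 hZω,
    integral_sub ((hlog.integrable μ).const_mul 3) (integrable_const _), hswap,
    integral_finsetSum _ fun m _ => (hfdS m).integrable μ] at hI
  simp only [integral_const_mul, integral_const, probReal_univ, one_smul] at hI
  rw [Finset.mul_sum]
  have : ∀ m : ℕ, ∫ ω, pastAvg S f m (shiftBy m ω) * d (shiftBy m ω) ∂μ =
      ∫ ω, pastAvg S f m ω * d ω ∂μ := fun m => integral_shiftBy hT m (hfd m).meas
  simp only [this] at hI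
  linarith

end prodMat

/-- Uniformly bounded measurable functions have weak limits along the hyperfilter. -/
lemma exists_weak_limit {α : Type*} [MeasurableSpace α] (μ : Measure α) [IsProbabilityMeasure μ]
    {G : ℕ → α → ℝ} (hG : ∀ n, Measurable (G n)) {C : ℝ} (hC : ∀ n ω, |G n ω| ≤ C) :
    ∃ u, Integrable u μ ∧ ∀ φ, BddMeas φ →
      Tendsto (fun n => ∫ ω, G n ω * φ ω ∂μ) (hyperfilter ℕ) (𝓝 (∫ ω, u ω * φ ω ∂μ)) := by
  have hC0 : 0 ≤ C := (abs_nonneg _).trans (hC 0 (nonempty_of_isProbabilityMeasure μ).some)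
  have hGL : ∀ n, MemLp (G n) 2 μ := fun n =>
    MemLp.of_bound (hG n).aestronglyMeasurable C (ae_of_all _ (hC n))
  let g : ℕ → Lp ℝ 2 μ := fun n => (hGL n).toLp
  have hgnorm : ∀ n, ‖g n‖ ≤ C := fun n => by
    have h := Lp.norm_le_of_ae_bound (f := g n) hC0 (by
      filter_upwards [(hGL n).coeFn_toLp] with x hx
      simp only [g]
      rw [hx]; exact hC n x)
    simpa [measureUnivNNReal] using h
  let T : ℕ → WeakDual ℝ (Lp ℝ 2 μ) := fun n =>
    StrongDual.toWeakDual (InnerProductSpace.toDual ℝ (Lp ℝ 2 μ) (g n))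
  have hcomp := WeakDual.isCompact_closedBall (𝕜 := ℝ) (E := Lp ℝ 2 μ) 0 C
  obtain ⟨x, -, hx⟩ := hcomp.ultrafilter_le_nhds ((hyperfilter ℕ).map T) (by
    rw [le_principal_iff, Ultrafilter.coe_map, mem_map]
    refine univ_mem' fun n => ?_
    simpa [T] using hgnorm n)
  have hxT : Tendsto T (hyperfilter ℕ) (𝓝 x) := by
    rwa [Ultrafilter.coe_map] at hx
  let u : Lp ℝ 2 μ := (InnerProductSpace.toDual ℝ (Lp ℝ 2 μ)).symm (WeakDual.toStrongDual x)
  have hin : ∀ {a b : α → ℝ} (ha : MemLp a 2 μ) (hb : MemLp b 2 μ),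
      inner ℝ ha.toLp hb.toLp = ∫ ω, a ω * b ω ∂μ := fun {a b} ha hb => by
    rw [L2.inner_def]
    refine integral_congr_ae ?_
    filter_upwards [ha.coeFn_toLp, hb.coeFn_toLp] with ω h1 h2
    rw [h1, h2]; simp [mul_comm]
  refine ⟨u, (Lp.memLp u).integrable (by norm_num), fun φ hφ => ?_⟩
  obtain ⟨D, hD⟩ := hφ.bdd
  have hφL : MemLp φ 2 μ := MemLp.of_bound hφ.meas.aestronglyMeasurable D (ae_of_all _ hD)
  have h := ((WeakDual.eval_continuous (𝕜 := ℝ) (hφL.toLp)).tendsto x).comp hxT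
  have hl : x hφL.toLp = ∫ ω, u ω * φ ω ∂μ := by
    have h1 : x hφL.toLp = inner ℝ u hφL.toLp := by
      simp only [u, InnerProductSpace.toDual_symm_apply]
      rfl
    rw [h1, ← hin (Lp.memLp u) hφL, Lp.toLp_coeFn]
  rw [← hl]
  refine h.congr fun n => ?_
  rw [← hin (hGL n) hφL]
  rfl

section condVersion

variable {α : Type*} [mα : MeasurableSpace α] {μ : Measure α} [IsProbabilityMeasure μ]

lemma exists_bounded_version_condExp {g : α → α} (hg : Measurable g) (hgg : ∀ ω, g (g ω) = g ω)
    {φ : α → ℝ} {C : ℝ} (hC : ∀ ω, |φ ω| ≤ C) :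
    ∃ c : α → ℝ, Measurable c ∧ (∀ ω, |c ω| ≤ C) ∧ (∀ ω, c (g ω) = c ω) ∧
      c =ᵐ[μ] μ[φ | mα.comap g] := by
  have hC0 : 0 ≤ C := (abs_nonneg _).trans (hC (nonempty_of_isProbabilityMeasure μ).some)
  obtain ⟨h, hh, heq⟩ := (stronglyMeasurable_condExp (μ := μ) (f := φ)
    (m := mα.comap g)).exists_eq_measurable_comp
  refine ⟨fun ω => max (-C) (min C (h (g ω))), ?_, fun ω => ?_, fun ω => by simp only [hgg], ?_⟩
  · exact measurable_const.max (measurable_const.min (hh.measurable.comp hg))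
  · exact abs_le.2 ⟨le_max_left _ _, max_le (by linarith) (min_le_left _ _)⟩
  · have hb := ae_bdd_abs_condExp_of_ae_bdd_abs (μ := μ) (m := mα.comap g) (ae_of_all _ hC)
    filter_upwards [hb] with ω hω
    rw [heq] at hω ⊢
    rw [Function.comp_apply, abs_le] at hω
    rw [Function.comp_apply, min_eq_right hω.2, max_eq_right hω.1]

lemma integral_mul_condExp_of_invariant {g : α → α} (hg : Measurable g) {φ V : α → ℝ}
    (hφ : Integrable φ μ) (hV : BddMeas V) (hVg : ∀ ω, V (g ω) = V ω) :
    ∫ ω, V ω * (μ[φ | mα.comap g]) ω ∂μ = ∫ ω, V ω * φ ω ∂μ := by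
  have hm : mα.comap g ≤ mα := hg.comap_le
  obtain ⟨C, hC⟩ := hV.bdd
  have hVm : StronglyMeasurable[mα.comap g] V := by
    have : V = V ∘ g := (funext hVg).symm
    rw [this]
    exact (hV.meas.comp (comap_measurable g)).stronglyMeasurable
  have hVφ : Integrable (V * φ) μ := hφ.bdd_mul hV.meas.aestronglyMeasurable (ae_of_all _ hC)
  have h := condExp_mul_of_stronglyMeasurable_left hVm hVφ hφ
  calc ∫ ω, V ω * (μ[φ | mα.comap g]) ω ∂μ = ∫ ω, (μ[V * φ | mα.comap g]) ω ∂μ :=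
        integral_congr_ae (h.mono fun ω hω => hω.symm)
    _ = _ := integral_condExp hm

lemma ae_eq_condExp_of_forall_integral_mul {m : MeasurableSpace α} (hm : m ≤ mα) {u : α → ℝ}
    (hu : Integrable u μ)
    (h : ∀ s, MeasurableSet[mα] s → ∫ ω, u ω * s.indicator 1 ω ∂μ =
      ∫ ω, u ω * (μ[s.indicator (1 : α → ℝ) | m]) ω ∂μ) :
    u =ᵐ[μ] μ[u | m] := by
  refine Integrable.ae_eq_of_forall_setIntegral_eq _ _ hu integrable_condExp fun s hs _ => ?_
  have hind : ∀ v : α → ℝ, ∫ ω, v ω * s.indicator 1 ω ∂μ = ∫ ω in s, v ω ∂μ := fun v => by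
    rw [← integral_indicator hs]
    refine integral_congr_ae (ae_of_all _ fun ω => ?_)
    by_cases hω : ω ∈ s <;> simp [hω]
  have hs1 : Integrable (s.indicator (1 : α → ℝ)) μ := (integrable_const (1 : ℝ)).indicator hs
  have hb : ∀ᵐ ω ∂μ, |(μ[s.indicator (1 : α → ℝ) | m]) ω| ≤ 1 :=
    ae_bdd_abs_condExp_of_ae_bdd_abs (ae_of_all _ fun ω => by by_cases hω : ω ∈ s <;> simp [hω])
  have hcm := stronglyMeasurable_condExp (μ := μ) (f := s.indicator (1 : α → ℝ)) (m := m)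
  have hI1 : Integrable (u * μ[s.indicator (1 : α → ℝ) | m]) μ :=
    hu.mul_bdd (hcm.mono hm).aestronglyMeasurable hb
  have hI2 : Integrable (μ[u | m] * s.indicator (1 : α → ℝ)) μ :=
    integrable_condExp.mul_bdd (c := 1) ((measurable_const.indicator hs).aestronglyMeasurable)
      (ae_of_all _ fun ω => by by_cases hω : ω ∈ s <;> simp [hω])
  have e1 := condExp_mul_of_stronglyMeasurable_right hcm hI1 hu
  have e2 := condExp_mul_of_stronglyMeasurable_left stronglyMeasurable_condExp hI2 hs1
  rw [← hind, ← hind, h s hs]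
  calc ∫ ω, u ω * (μ[s.indicator (1 : α → ℝ) | m]) ω ∂μ
      = ∫ ω, (μ[u * μ[s.indicator (1 : α → ℝ) | m] | m]) ω ∂μ := (integral_condExp hm).symm
    _ = ∫ ω, (μ[μ[u | m] * s.indicator (1 : α → ℝ) | m]) ω ∂μ :=
        integral_congr_ae (e1.trans e2.symm)
    _ = _ := integral_condExp hm

end condVersion

section average

variable {S : ℕ → ℕ → Matrix (Fin 2) (Fin 2) ℝ}

/-- The Cesàro means of the past averages. -/
noncomputable def cesaroAvg (S : ℕ → ℕ → Matrix (Fin 2) (Fin 2) ℝ) (f : (Fin 2 → ℝ) → ℝ) (n : ℕ)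
    (ω : ℤ → ℕ) : ℝ :=
  (n : ℝ)⁻¹ * ∑ m ∈ Finset.range n, pastAvg S f m ω

lemma measurable_cesaroAvg {f : (Fin 2 → ℝ) → ℝ} (hf : Measurable f) (n : ℕ) :
    Measurable (cesaroAvg S f n) :=
  (Finset.measurable_sum _ fun m _ => measurable_pastAvg hf m).const_mul _

lemma abs_cesaroAvg_le {f : (Fin 2 → ℝ) → ℝ} {C : ℝ} (hC : ∀ v, |f v| ≤ C) (n : ℕ) (ω : ℤ → ℕ) :
    |cesaroAvg S f n ω| ≤ C := by
  have hC0 : 0 ≤ C := (abs_nonneg _).trans (hC 0)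
  rw [cesaroAvg, abs_mul, abs_of_nonneg (by positivity)]
  rcases Nat.eq_zero_or_pos n with rfl | hn
  · simpa using hC0
  have h : |∑ m ∈ Finset.range n, pastAvg S f m ω| ≤ n * C := by
    refine (Finset.abs_sum_le_sum_abs _ _).trans ?_
    refine (Finset.sum_le_sum fun m _ => abs_pastAvg_le hC m ω).trans ?_
    simp
  have hn' : (0 : ℝ) < n := by exact_mod_cast hn
  rw [inv_mul_le_iff₀ hn']
  exact h

lemma bddMeas_cesaroAvg {f : (Fin 2 → ℝ) → ℝ} (hf : BddMeas f) (n : ℕ) :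
    BddMeas (cesaroAvg S f n) :=
  ⟨measurable_cesaroAvg hf.meas n, hf.bdd.imp fun _ hC => abs_cesaroAvg_le hC n⟩

lemma cesaroAvg_clampLE (f : (Fin 2 → ℝ) → ℝ) (n : ℕ) (ω : ℤ → ℕ) :
    cesaroAvg S f n (clampLE ω) = cesaroAvg S f n ω := by
  simp only [cesaroAvg, pastAvg_clampLE]

/-- A weak limit of the Cesàro means of the past averages of `f`. -/
structure IsWeakLimit (S : ℕ → ℕ → Matrix (Fin 2) (Fin 2) ℝ) (μ : Measure (ℤ → ℕ))
    (f : (Fin 2 → ℝ) → ℝ) (u : (ℤ → ℕ) → ℝ) : Prop where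
  integrable : Integrable u μ
  tendsto : ∀ φ, BddMeas φ → Tendsto (fun n => ∫ ω, cesaroAvg S f n ω * φ ω ∂μ)
    (hyperfilter ℕ) (𝓝 (∫ ω, u ω * φ ω ∂μ))

variable {μ : Measure (ℤ → ℕ)} [IsProbabilityMeasure μ]

lemma exists_isWeakLimit {f : (Fin 2 → ℝ) → ℝ} (hf : BddMeas f) : ∃ u, IsWeakLimit S μ f u := by
  obtain ⟨C, hC⟩ := hf.bdd
  obtain ⟨u, hu, h⟩ := exists_weak_limit μ (fun n => measurable_cesaroAvg (S := S) hf.meas n)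
    (fun n => abs_cesaroAvg_le hC n)
  exact ⟨u, hu, h⟩

lemma IsWeakLimit.integral_mul_nonpos (hT : MeasurePreserving shift μ μ)
    (hS : ∀ i j, (S i j).det = 1) {K : ℝ} (hK : ∀ i j, ‖S i j‖ ≤ K) {L : ℝ} (hL0 : L ≤ 0)
    (hL : Tendsto (fun n : ℕ => (1 / (n : ℝ)) * ∫ ω, Real.log (2 * ‖prodMat S ω n‖) ∂μ)
      atTop (𝓝 L))
    {f : (Fin 2 → ℝ) → ℝ} (hf : BddMeas f) {u : (ℤ → ℕ) → ℝ} (hu : IsWeakLimit S μ f u)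
    {d : (ℤ → ℕ) → ℝ} (hd : BddMeas d) (i : ℕ) (hcl : ∀ ω, d (clampGE (-i - 1) ω) = d ω)
    (horth : ∀ V, BddMeas V → (∀ ω, V (clampGE (-i) ω) = V ω) → ∫ ω, d ω * V ω ∂μ = 0) :
    ∫ ω, u ω * d ω ∂μ ≤ 0 := by
  obtain ⟨C, hC⟩ := hf.bdd
  obtain ⟨D, hD⟩ := hd.bdd
  have hE0 : 0 ≤ C * D := mul_nonneg ((abs_nonneg _).trans (hC 0)) ((abs_nonneg _).trans (hD 0))
  set E := C * D
  have key : ∀ t : ℝ, 0 < t → t * E ≤ 1 / 2 → ∫ ω, u ω * d ω ∂μ ≤ 2 * t * E ^ 2 := by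
    intro t ht htE
    have hlim : t * ∫ ω, u ω * d ω ∂μ ≤ 3 * L + 2 * (t * E) ^ 2 := by
      refine le_of_tendsto_of_tendsto ((hu.tendsto d hd).const_mul t)
        (((hL.mono_left Nat.hyperfilter_le_atTop).const_mul 3).add_const _) ?_
      filter_upwards [Nat.hyperfilter_le_atTop (eventually_gt_atTop 0)] with n hn
      have hn' : (0 : ℝ) < n := by exact_mod_cast hn
      have h := mul_sum_integral_pastAvg_mul_le hT hS hK hf.meas hC hd.meas hD i hcl horth ht.le
        htE n
      have hsum : ∫ ω, cesaroAvg S f n ω * d ω ∂μ =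
          (n : ℝ)⁻¹ * ∑ m ∈ Finset.range n, ∫ ω, pastAvg S f m ω * d ω ∂μ := by
        rw [← integral_finsetSum _ fun m _ => ((bddMeas_pastAvg hf m).mul hd).integrable μ,
          ← integral_const_mul]
        refine integral_congr_ae (ae_of_all _ fun ω => ?_)
        simp only [cesaroAvg]
        rw [mul_assoc, Finset.sum_mul]
      rw [hsum]
      calc t * ((n : ℝ)⁻¹ * ∑ m ∈ Finset.range n, ∫ ω, pastAvg S f m ω * d ω ∂μ)
          = (n : ℝ)⁻¹ * (t * ∑ m ∈ Finset.range n, ∫ ω, pastAvg S f m ω * d ω ∂μ) := by ring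
        _ ≤ (n : ℝ)⁻¹ * (3 * ∫ ω, Real.log (2 * ‖prodMat S ω n‖) ∂μ +
              n * (2 * (t * (C * D)) ^ 2)) := by gcongr
        _ = _ := by field_simp; simp only [E]; ring
    have : t * ∫ ω, u ω * d ω ∂μ ≤ t * (2 * t * E ^ 2) := by nlinarith
    exact le_of_mul_le_mul_left this ht
  by_contra! hI
  set I := ∫ ω, u ω * d ω ∂μ
  have ht0 : 0 < min (1 / (2 * (E + 1))) (I / (4 * (E ^ 2 + 1))) := by positivity
  have h1 := key _ ht0 (by
    calc min (1 / (2 * (E + 1))) (I / (4 * (E ^ 2 + 1))) * E ≤ 1 / (2 * (E + 1)) * E := by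
          gcongr; exact min_le_left _ _
      _ ≤ 1 / 2 := by rw [div_mul_eq_mul_div, div_le_div_iff₀ (by positivity) (by norm_num)]
                      linarith)
  have h2 : 2 * min (1 / (2 * (E + 1))) (I / (4 * (E ^ 2 + 1))) * E ^ 2 ≤ I / 2 := by
    calc 2 * min (1 / (2 * (E + 1))) (I / (4 * (E ^ 2 + 1))) * E ^ 2
        ≤ 2 * (I / (4 * (E ^ 2 + 1))) * E ^ 2 := by gcongr; exact min_le_right _ _
      _ ≤ I / 2 := by
        rw [show 2 * (I / (4 * (E ^ 2 + 1))) * E ^ 2 = (2 * I * E ^ 2) / (4 * (E ^ 2 + 1)) by ring,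
          div_le_div_iff₀ (by positivity) (by norm_num)]
        nlinarith
  linarith

lemma clampGE_clampGE (a : ℤ) (ω : ℤ → ℕ) : clampGE a (clampGE a ω) = clampGE a ω := by
  ext n; simp [clampGE]

lemma clampLE_clampLE (ω : ℤ → ℕ) : clampLE (clampLE ω) = clampLE ω := by
  ext n; simp [clampLE]

lemma clampGE_comap_mono {a b : ℤ} (hba : b ≤ a) :
    (MeasurableSpace.pi.comap (clampGE a) : MeasurableSpace (ℤ → ℕ)) ≤
      MeasurableSpace.pi.comap (clampGE b) := by
  have h : clampGE a = clampGE a ∘ clampGE b := by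
    ext ω n; simp only [clampGE, Function.comp]; congr 1; omega
  rw [h, ← MeasurableSpace.comap_comp]
  exact MeasurableSpace.comap_mono (measurable_clampGE a).comap_le

/-- The filtration of the coordinates at times at least `-n`. -/
def clampFiltration : Filtration ℕ (MeasurableSpace.pi : MeasurableSpace (ℤ → ℕ)) where
  seq n := MeasurableSpace.pi.comap (clampGE (-n))
  mono' m n hmn := clampGE_comap_mono (by simpa using hmn)
  le' n := (measurable_clampGE _).comap_le

lemma iSup_clampFiltration : ⨆ n, clampFiltration n = MeasurableSpace.pi := by
  refine le_antisymm (iSup_le fun n => clampFiltration.le n) ?_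
  refine iSup_le fun a => ?_
  refine le_trans ?_ (le_iSup _ a.natAbs)
  have h : (fun ω : ℤ → ℕ => ω a) = (fun ω => ω a) ∘ clampGE (-a.natAbs) := by
    ext ω; simp only [clampGE, Function.comp]; congr 1; omega
  change MeasurableSpace.comap (fun ω : ℤ → ℕ => ω a) _ ≤
    MeasurableSpace.comap (clampGE (-a.natAbs)) _
  rw [h, ← MeasurableSpace.comap_comp]
  exact MeasurableSpace.comap_mono (measurable_pi_apply a).comap_le

lemma abs_indicator_one_le {α : Type*} (s : Set α) (ω : α) :
    |s.indicator (1 : α → ℝ) ω| ≤ 1 := by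
  by_cases hω : ω ∈ s <;> simp [hω]

lemma bddMeas_indicator_one {α : Type*} [MeasurableSpace α] {s : Set α} (hs : MeasurableSet s) :
    BddMeas (s.indicator (1 : α → ℝ)) :=
  ⟨measurable_one.indicator hs, 1, abs_indicator_one_le s⟩

lemma IsWeakLimit.ae_eq_comp_clampGE (hT : MeasurePreserving shift μ μ)
    (hS : ∀ i j, (S i j).det = 1) {K : ℝ} (hK : ∀ i j, ‖S i j‖ ≤ K) {L : ℝ} (hL0 : L ≤ 0)
    (hL : Tendsto (fun n : ℕ => (1 / (n : ℝ)) * ∫ ω, Real.log (2 * ‖prodMat S ω n‖) ∂μ)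
      atTop (𝓝 L))
    {f : (Fin 2 → ℝ) → ℝ} (hf : BddMeas f) {u : (ℤ → ℕ) → ℝ} (hu : IsWeakLimit S μ f u) :
    ∃ h : (ℤ → ℕ) → ℝ, Measurable h ∧ u =ᵐ[μ] h ∘ clampGE 0 := by
  suffices hmain : u =ᵐ[μ] μ[u | MeasurableSpace.pi.comap (clampGE 0)] by
    obtain ⟨h, hh, heq⟩ := (stronglyMeasurable_condExp (μ := μ) (f := u)
      (m := MeasurableSpace.pi.comap (clampGE 0))).exists_eq_measurable_comp
    exact ⟨h, hh.measurable, heq ▸ hmain⟩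
  refine ae_eq_condExp_of_forall_integral_mul (measurable_clampGE 0).comap_le hu.integrable
    fun s hs => ?_
  set φ : (ℤ → ℕ) → ℝ := s.indicator 1
  have hφ : BddMeas φ := bddMeas_indicator_one hs
  have hver : ∀ i : ℕ, ∃ c : (ℤ → ℕ) → ℝ, Measurable c ∧ (∀ ω, |c ω| ≤ 1) ∧
      (∀ ω, c (clampGE (-i) ω) = c ω) ∧
      c =ᵐ[μ] μ[φ | MeasurableSpace.pi.comap (clampGE (-i))] := fun i =>
    exists_bounded_version_condExp (measurable_clampGE _) (clampGE_clampGE _)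
      (abs_indicator_one_le s)
  choose c hcm hcb hccl hcae using hver
  have hc : ∀ i, BddMeas (c i) := fun i => ⟨hcm i, 1, hcb i⟩
  have huc : ∀ i, Integrable (fun ω => u ω * c i ω) μ := fun i =>
    hu.integrable.mul_bdd (hcm i).aestronglyMeasurable (ae_of_all _ (hcb i))
  have hcint : ∀ (i : ℕ) V, BddMeas V → (∀ ω, V (clampGE (-i) ω) = V ω) →
      ∫ ω, c i ω * V ω ∂μ = ∫ ω, V ω * φ ω ∂μ := fun i V hV hVcl => by
    rw [← integral_mul_condExp_of_invariant (measurable_clampGE (-i)) (hφ.integrable μ) hV hVcl]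
    refine integral_congr_ae ?_
    filter_upwards [hcae i] with ω hω
    rw [hω, mul_comm]
  have hstep : ∀ i, ∫ ω, u ω * c (i + 1) ω ∂μ = ∫ ω, u ω * c i ω ∂μ := fun i => by
    have hcl : ∀ l ≤ i + 1, ∀ ω, c l (clampGE (-i - 1) ω) = c l ω := fun l hl =>
      apply_clampGE_of_le (by omega) (hccl l)
    have hle : ∀ a b : ℕ, a ≤ i + 1 → b ≤ i + 1 → (a = i + 1 ∧ b = i ∨ a = i ∧ b = i + 1) →
        ∫ ω, u ω * c a ω ∂μ ≤ ∫ ω, u ω * c b ω ∂μ := fun a b ha hb hab => by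
      have h := hu.integral_mul_nonpos hT hS hK hL0 hL hf
        (d := fun ω => c a ω + (-1) * c b ω) ((hc a).add ((BddMeas.const _).mul (hc b))) i
        (fun ω => by rw [hcl a ha, hcl b hb]) fun V hV hVcl => by
          have hVcl' : ∀ l : ℕ, i ≤ l → ∀ ω, V (clampGE (-l) ω) = V ω := fun l hl =>
            apply_clampGE_of_le (by omega) hVcl
          have e1 := hcint a V hV (hVcl' a (by omega))
          have e2 := hcint b V hV (hVcl' b (by omega))
          have : ∫ ω, (c a ω + (-1) * c b ω) * V ω ∂μ =
              ∫ ω, (c a ω * V ω - c b ω * V ω) ∂μ := by congr 1; ext ω; ring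
          rw [this, integral_sub (((hc a).mul hV).integrable μ) (((hc b).mul hV).integrable μ),
            e1, e2, sub_self]
      have : ∫ ω, u ω * (c a ω + (-1) * c b ω) ∂μ = ∫ ω, (u ω * c a ω - u ω * c b ω) ∂μ := by
        congr 1; ext ω; ring
      rw [this, integral_sub (huc a) (huc b)] at h
      linarith
    exact le_antisymm (hle _ _ le_rfl (by omega) (by omega)) (hle _ _ (by omega) le_rfl (by omega))
  have hall : ∀ i, ∫ ω, u ω * c i ω ∂μ = ∫ ω, u ω * c 0 ω ∂μ := fun i => by
    induction i with
    | zero => rfl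
    | succ i ih => rw [hstep, ih]
  have hlim : Tendsto (fun i => ∫ ω, u ω * c i ω ∂μ) atTop (𝓝 (∫ ω, u ω * φ ω ∂μ)) := by
    refine tendsto_integral_of_dominated_convergence (fun ω => |u ω|)
      (fun i => (huc i).aestronglyMeasurable) hu.integrable.abs
      (fun i => ae_of_all _ fun ω => ?_) ?_
    · rw [Real.norm_eq_abs, abs_mul]
      exact mul_le_of_le_one_right (abs_nonneg _) (hcb i ω)
    · have hlevy := tendsto_ae_condExp (μ := μ) (ℱ := clampFiltration) φ
      rw [iSup_clampFiltration, condExp_of_stronglyMeasurable le_rfl hφ.meas.stronglyMeasurable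
        (hφ.integrable μ)] at hlevy
      filter_upwards [hlevy, ae_all_iff.2 hcae] with ω h1 h2
      exact (h1.congr fun i => (h2 i).symm).const_mul _
  have heq : ∫ ω, u ω * φ ω ∂μ = ∫ ω, u ω * c 0 ω ∂μ :=
    tendsto_nhds_unique hlim (by simp only [hall]; exact tendsto_const_nhds)
  rw [heq]
  refine integral_congr_ae ?_
  filter_upwards [hcae 0] with ω hω
  rw [hω]; simp

lemma IsWeakLimit.ae_eq_comp_clampLE {f : (Fin 2 → ℝ) → ℝ} (hf : BddMeas f) {u : (ℤ → ℕ) → ℝ}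
    (hu : IsWeakLimit S μ f u) : ∃ h : (ℤ → ℕ) → ℝ, Measurable h ∧ u =ᵐ[μ] h ∘ clampLE := by
  suffices hmain : u =ᵐ[μ] μ[u | MeasurableSpace.pi.comap clampLE] by
    obtain ⟨h, hh, heq⟩ := (stronglyMeasurable_condExp (μ := μ) (f := u)
      (m := MeasurableSpace.pi.comap clampLE)).exists_eq_measurable_comp
    exact ⟨h, hh.measurable, heq ▸ hmain⟩
  refine ae_eq_condExp_of_forall_integral_mul measurable_clampLE.comap_le hu.integrable
    fun s hs => ?_
  obtain ⟨c, hcm, hcb, -, hcae⟩ := exists_bounded_version_condExp (μ := μ) measurable_clampLE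
    clampLE_clampLE (abs_indicator_one_le s)
  have h1 := hu.tendsto _ (bddMeas_indicator_one hs)
  have h2 := hu.tendsto c ⟨hcm, 1, hcb⟩
  have h3 : ∫ ω, u ω * s.indicator 1 ω ∂μ = ∫ ω, u ω * c ω ∂μ := by
    refine tendsto_nhds_unique h1 (h2.congr fun n => ?_)
    rw [← integral_mul_condExp_of_invariant measurable_clampLE
      ((bddMeas_indicator_one hs).integrable μ) (bddMeas_cesaroAvg hf n) (cesaroAvg_clampLE f n)]
    refine integral_congr_ae ?_
    filter_upwards [hcae] with ω hω
    rw [hω]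
  rw [h3]
  refine integral_congr_ae ?_
  filter_upwards [hcae] with ω hω
  rw [hω]

end average

/-- Gluing of a past and a future. -/
def gluePair (a b : ℕ → ℕ) (n : ℤ) : ℕ := if 0 ≤ n then b n.toNat else a (-n).toNat

lemma pairProj_gluePair {a b : ℕ → ℕ} (hab : a 0 = b 0) : pairProj (gluePair a b) = (a, b) := by
  ext n
  · simp only [pairProj, projMinus, gluePair]
    split_ifs with h
    · obtain rfl : n = 0 := by omega
      simpa using hab.symm
    · simp
  · simp [pairProj, projPlus, gluePair]

lemma gluePair_mem_SFT {ℓ : ℕ} {W : Set (ℕ × ℕ)} {a b : ℕ → ℕ} (hab : a 0 = b 0)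
    (ha : ∀ n, (1 ≤ a n ∧ a n ≤ ℓ) ∧ (a (n + 1), a n) ∈ W)
    (hb : ∀ n, (1 ≤ b n ∧ b n ≤ ℓ) ∧ (b n, b (n + 1)) ∈ W) : gluePair a b ∈ SFT ℓ W := by
  refine ⟨fun n => ?_, fun n => ?_⟩
  · unfold gluePair
    split_ifs
    · exact (hb _).1
    · exact (ha _).1
  · unfold gluePair
    rcases lt_trichotomy n (-1) with h | rfl | h
    · rw [if_neg (by omega), if_neg (by omega),
        show (-n).toNat = (-(n + 1)).toNat + 1 by omega]
      exact (ha _).2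
    · have := (ha 0).2
      simpa [← hab] using this
    · rw [if_pos (by omega), if_pos (by omega), show (n + 1).toNat = n.toNat + 1 by omega]
      exact (hb _).2

lemma measurable_projMinus : Measurable projMinus :=
  measurable_pi_lambda _ fun _ => measurable_pi_apply _

lemma measurable_projPlus : Measurable projPlus :=
  measurable_pi_lambda _ fun _ => measurable_pi_apply _

lemma measurable_pairProj : Measurable pairProj :=
  measurable_projMinus.prodMk measurable_projPlus

/-- Under a local product structure, a function that depends only on the past and only on the
future is constant on each cylinder. -/
lemma LocalProductStructure.exists_ae_eq_const {ℓ : ℕ} {W : Set (ℕ × ℕ)} {μ : Measure (ℤ → ℕ)}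
    [IsProbabilityMeasure μ] (hconc : μ (SFT ℓ W)ᶜ = 0) (hlps : LocalProductStructure ℓ W μ)
    {j : ℕ} (hj1 : 1 ≤ j) (hjℓ : j ≤ ℓ) {u h h' : (ℤ → ℕ) → ℝ} (hh : Measurable h)
    (hh' : Measurable h') (hu : u =ᵐ[μ] h ∘ clampGE 0) (hu' : u =ᵐ[μ] h' ∘ clampLE) :
    ∃ c, ∀ᵐ ω ∂μ, ω 0 = j → u ω = c := by
  obtain ⟨ψ, hψ, hloc⟩ := hlps
  obtain ⟨hInt, hmap⟩ := hloc j hj1 hjℓ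
  have hNj : MeasurableSet {a : ℕ → ℕ | a 0 = j} :=
    measurableSet_eq_fun (measurable_pi_apply 0) measurable_const
  set μm := (Measure.map projMinus μ).restrict {a | a 0 = j}
  set μp := (Measure.map projPlus μ).restrict {a | a 0 = j}
  let H : (ℕ → ℕ) → ℝ := fun b => h fun n => b n.toNat
  let H' : (ℕ → ℕ) → ℝ := fun a => h' fun n => a (-n).toNat
  have hH : Measurable H := hh.comp (measurable_pi_lambda _ fun _ => measurable_pi_apply _)
  have hH' : Measurable H' := hh'.comp (measurable_pi_lambda _ fun _ => measurable_pi_apply _)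
  have hHω : ∀ ω, H (projPlus ω) = h (clampGE 0 ω) := fun ω => by
    simp only [H]; congr 1; ext n; simp only [projPlus, clampGE]; congr 1; omega
  have hHω' : ∀ ω, H' (projMinus ω) = h' (clampLE ω) := fun ω => by
    simp only [H']; congr 1; ext n; simp only [projMinus, clampLE]; congr 1; omega
  have hmem : ∀ᵐ ω ∂μ, ω ∈ SFT ℓ W := by simpa [ae_iff] using! hconc
  have hWm : ∀ (x y : (ℕ → ℕ) → ℕ), Measurable x → Measurable y →
      MeasurableSet {a | (1 ≤ x a ∧ x a ≤ ℓ) ∧ (x a, y a) ∈ W} := fun x y hx hy => by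
    have : MeasurableSet {p : ℕ × ℕ | (1 ≤ p.1 ∧ p.1 ≤ ℓ) ∧ p ∈ W} := MeasurableSet.of_discrete
    exact (hx.prodMk hy) this
  have hWm' : ∀ (x y : (ℕ → ℕ) → ℕ), Measurable x → Measurable y →
      MeasurableSet {a | (1 ≤ x a ∧ x a ≤ ℓ) ∧ (y a, x a) ∈ W} := fun x y hx hy => by
    have : MeasurableSet {p : ℕ × ℕ | (1 ≤ p.1 ∧ p.1 ≤ ℓ) ∧ (p.2, p.1) ∈ W} :=
      MeasurableSet.of_discrete
    exact (hx.prodMk hy) this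
  have haeP : ∀ᵐ b ∂μp, b 0 = j ∧ ∀ n, (1 ≤ b n ∧ b n ≤ ℓ) ∧ (b n, b (n + 1)) ∈ W := by
    refine (ae_restrict_mem hNj).and (ae_all_iff.2 fun n => ae_restrict_of_ae ?_)
    refine (ae_map_iff measurable_projPlus.aemeasurable
      (hWm _ _ (measurable_pi_apply n) (measurable_pi_apply (n + 1)))).2 ?_
    filter_upwards [hmem] with ω hω
    refine ⟨hω.1 n, ?_⟩
    simpa [projPlus] using hω.2 n
  have haeM : ∀ᵐ a ∂μm, a 0 = j ∧ ∀ n, (1 ≤ a n ∧ a n ≤ ℓ) ∧ (a (n + 1), a n) ∈ W := by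
    refine (ae_restrict_mem hNj).and (ae_all_iff.2 fun n => ae_restrict_of_ae ?_)
    refine (ae_map_iff measurable_projMinus.aemeasurable
      (hWm' _ _ (measurable_pi_apply n) (measurable_pi_apply (n + 1)))).2 ?_
    filter_upwards [hmem] with ω hω
    refine ⟨hω.1 (-n), ?_⟩
    have := hω.2 (-(n + 1))
    simpa [projMinus] using this
  have hψpos : ∀ᵐ p ∂μm.prod μp, 0 < ψ p := by
    filter_upwards [Measure.quasiMeasurePreserving_fst.ae haeM,
      Measure.quasiMeasurePreserving_snd.ae haeP] with p h1 h2
    have hab : p.1 0 = p.2 0 := h1.1.trans h2.1.symm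
    have := hψ _ (gluePair_mem_SFT hab h1.2 h2.2)
    rwa [pairProj_gluePair hab] at this
  have hN : MeasurableSet {p : (ℕ → ℕ) × (ℕ → ℕ) | H' p.1 = H p.2} :=
    measurableSet_eq_fun (hH'.comp measurable_fst) (hH.comp measurable_snd)
  have hprod : ∀ᵐ p ∂μm.prod μp, H' p.1 = H p.2 := by
    have h1 : ∀ᵐ p ∂Measure.map pairProj (μ.restrict {ω | ω 0 = j}), H' p.1 = H p.2 := by
      refine (ae_map_iff measurable_pairProj.aemeasurable hN).2 (ae_restrict_of_ae ?_)
      filter_upwards [hu, hu'] with ω e1 e2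
      simp only [pairProj, hHω, hHω']
      exact e2.symm.trans e1
    rw [hmap, ae_withDensity_iff' hInt.aemeasurable.ennreal_ofReal] at h1
    filter_upwards [h1, hψpos] with p h2 h3
    exact h2 (by simpa using h3)
  by_cases h0 : μ {ω | ω 0 = j} = 0
  · exact ⟨0, by
      have : ∀ᵐ ω ∂μ, ¬ ω 0 = j := by simpa [ae_iff] using h0
      filter_upwards [this] with ω h1 h2 using absurd h2 h1⟩
  have hne : μm ≠ 0 := by
    intro hz
    apply h0
    have : μm univ = 0 := by simp [hz]
    rw [Measure.restrict_apply_univ, Measure.map_apply measurable_projMinus hNj] at this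
    simpa [projMinus] using! this
  have : NeBot (ae μm) := ae_neBot.2 hne
  obtain ⟨a, ha⟩ := (Measure.ae_ae_of_ae_prod hprod).exists
  refine ⟨H' a, ?_⟩
  rw [ae_restrict_iff' hNj] at ha
  have hb := ae_of_ae_map measurable_projPlus.aemeasurable ha
  filter_upwards [hb, hu] with ω h1 h2 h3
  rw [h2, Function.comp_apply, ← hHω]
  exact (h1 h3).symm

section means

variable {S : ℕ → ℕ → Matrix (Fin 2) (Fin 2) ℝ} {μ : Measure (ℤ → ℕ)} [IsProbabilityMeasure μ]

lemma integrable_comp_mulVec {f : (Fin 2 → ℝ) → ℝ} (hf : BddMeas f)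
    (M : Matrix (Fin 2) (Fin 2) ℝ) : Integrable (fun x => f (M *ᵥ x)) densMeasure :=
  (hf.comp (measurable_mulVec M)).integrable _

lemma cesaroAvg_add {f g : (Fin 2 → ℝ) → ℝ} (hf : BddMeas f) (hg : BddMeas g) (n : ℕ)
    (ω : ℤ → ℕ) : cesaroAvg S (fun v => f v + g v) n ω =
      cesaroAvg S f n ω + cesaroAvg S g n ω := by
  simp only [cesaroAvg, ← mul_add, ← Finset.sum_add_distrib, pastAvg]
  congr 1
  exact Finset.sum_congr rfl fun m _ =>
    integral_add (integrable_comp_mulVec hf _) (integrable_comp_mulVec hg _)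

lemma cesaroAvg_const_mul (c : ℝ) (f : (Fin 2 → ℝ) → ℝ) (n : ℕ) (ω : ℤ → ℕ) :
    cesaroAvg S (fun v => c * f v) n ω = c * cesaroAvg S f n ω := by
  simp only [cesaroAvg, pastAvg, integral_const_mul, ← Finset.mul_sum]
  ring

lemma cesaroAvg_mono (hS : ∀ i j, (S i j).det = 1) {f g : (Fin 2 → ℝ) → ℝ} (hf : BddMeas f)
    (hg : BddMeas g) (hfg : ∀ v, v ≠ 0 → f v ≤ g v) (n : ℕ) (ω : ℤ → ℕ) :
    cesaroAvg S f n ω ≤ cesaroAvg S g n ω := by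
  refine mul_le_mul_of_nonneg_left (Finset.sum_le_sum fun m _ => ?_) (by positivity)
  refine integral_mono_ae (integrable_comp_mulVec hf _) (integrable_comp_mulVec hg _) ?_
  filter_upwards [ae_ne_zero_densMeasure] with x hx
  refine hfg _ fun h => hx ?_
  exact Matrix.eq_zero_of_mulVec_eq_zero (by rw [det_prodMat hS]; exact one_ne_zero) h

lemma cesaroAvg_one {n : ℕ} (hn : n ≠ 0) (ω : ℤ → ℕ) : cesaroAvg S (fun _ => 1) n ω = 1 := by
  simp [cesaroAvg, pastAvg, hn]

lemma abs_cesaroAvg_shiftBy_sub_le {f : (Fin 2 → ℝ) → ℝ} {C : ℝ} (hC : ∀ v, |f v| ≤ C)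
    (n : ℕ) (ω : ℤ → ℕ) :
    |cesaroAvg S f n (shiftBy 1 ω) - cesaroAvg S (fun v => f (S (ω 0) (ω 1) *ᵥ v)) n ω| ≤
      2 * C * (n : ℝ)⁻¹ := by
  have hC0 : 0 ≤ C := (abs_nonneg _).trans (hC 0)
  cases n with
  | zero => simp [cesaroAvg]
  | succ n =>
    rw [cesaroAvg, cesaroAvg, ← mul_sub, Finset.sum_range_succ', Finset.sum_range_succ]
    simp only [pastAvg_succ_shiftBy]
    rw [add_sub_add_left_eq_sub, abs_mul, abs_of_nonneg (by positivity), mul_comm (2 * C)]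
    refine mul_le_mul_of_nonneg_left ?_ (by positivity)
    have h1 := abs_pastAvg_le (S := S) hC 0 (shiftBy 1 ω)
    have h2 := abs_pastAvg_le (S := S) (f := fun v => f (S (ω 0) (ω 1) *ᵥ v))
      (fun v => hC _) n ω
    rw [abs_le] at h1 h2 ⊢
    constructor <;> linarith

lemma measurableSet_coord_eq (i : ℤ) (j : ℕ) : MeasurableSet {ω : ℤ → ℕ | ω i = j} :=
  measurableSet_eq_fun (measurable_pi_apply i) measurable_const

lemma IsWeakLimit.integral_shift_eq (hT : MeasurePreserving shift μ μ) {f : (Fin 2 → ℝ) → ℝ}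
    (hf : BddMeas f) {i j : ℕ} {u v : (ℤ → ℕ) → ℝ} (hu : IsWeakLimit S μ f u)
    (hv : IsWeakLimit S μ (fun x => f (S i j *ᵥ x)) v) :
    ∫ ω in {ω | ω (-1) = i ∧ ω 0 = j}, u ω ∂μ = ∫ ω in {ω | ω 0 = i ∧ ω 1 = j}, v ω ∂μ := by
  have hE' : MeasurableSet {ω : ℤ → ℕ | ω (-1) = i ∧ ω 0 = j} :=
    (measurableSet_coord_eq _ _).inter (measurableSet_coord_eq _ _)
  have hE : MeasurableSet {ω : ℤ → ℕ | ω 0 = i ∧ ω 1 = j} :=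
    (measurableSet_coord_eq _ _).inter (measurableSet_coord_eq _ _)
  set E' := {ω : ℤ → ℕ | ω (-1) = i ∧ ω 0 = j}
  set E := {ω : ℤ → ℕ | ω 0 = i ∧ ω 1 = j}
  have hset : ∀ {s : Set (ℤ → ℕ)}, MeasurableSet s → ∀ w : (ℤ → ℕ) → ℝ,
      ∫ ω in s, w ω ∂μ = ∫ ω, w ω * s.indicator 1 ω ∂μ := fun {s} hs w => by
    rw [← integral_indicator hs]
    refine integral_congr_ae (ae_of_all _ fun ω => ?_)
    by_cases hω : ω ∈ s <;> simp [hω]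
  rw [hset hE', hset hE]
  obtain ⟨C, hC⟩ := hf.bdd
  have hfS : BddMeas fun x => f (S i j *ᵥ x) := hf.comp (measurable_mulVec _)
  have h1 := hu.tendsto _ (bddMeas_indicator_one hE')
  have h2 := hv.tendsto _ (bddMeas_indicator_one hE)
  have hdiff : Tendsto (fun n => ∫ ω, cesaroAvg S f n ω * E'.indicator 1 ω ∂μ -
      ∫ ω, cesaroAvg S (fun x => f (S i j *ᵥ x)) n ω * E.indicator 1 ω ∂μ)
      (hyperfilter ℕ) (𝓝 0) := by
    have h0 : Tendsto (fun n : ℕ => 2 * C * (n : ℝ)⁻¹) atTop (𝓝 0) := by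
      simpa using tendsto_inv_atTop_nhds_zero_nat.const_mul (2 * C)
    refine squeeze_zero_norm (fun n => ?_) (h0.mono_left Nat.hyperfilter_le_atTop)
    have hb' : BddMeas fun ω => cesaroAvg S f n ω * E'.indicator 1 ω :=
      (bddMeas_cesaroAvg hf n).mul (bddMeas_indicator_one hE')
    have hb : BddMeas fun ω => cesaroAvg S (fun x => f (S i j *ᵥ x)) n ω * E.indicator 1 ω :=
      (bddMeas_cesaroAvg hfS n).mul (bddMeas_indicator_one hE)
    have hind : ∀ ω, E'.indicator (1 : (ℤ → ℕ) → ℝ) (shiftBy 1 ω) = E.indicator 1 ω := fun ω => rfl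
    rw [← integral_shiftBy hT 1 hb'.meas, Nat.cast_one,
      ← integral_sub ((hb'.comp (measurable_shiftBy 1)).integrable μ) (hb.integrable μ)]
    have := norm_integral_le_of_norm_le_const (μ := μ) (C := 2 * C * (n : ℝ)⁻¹)
      (f := fun ω => cesaroAvg S f n (shiftBy 1 ω) * E'.indicator 1 (shiftBy 1 ω) -
        cesaroAvg S (fun x => f (S i j *ᵥ x)) n ω * E.indicator 1 ω) (ae_of_all _ fun ω => ?_)
    · simpa only [probReal_univ, mul_one] using this
    · rw [hind, Real.norm_eq_abs]
      by_cases hω : ω ∈ E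
      · have h := abs_cesaroAvg_shiftBy_sub_le (S := S) hC n ω
        rw [hω.1, hω.2] at h
        simpa only [indicator_of_mem hω, Pi.one_apply, mul_one] using h
      · have hC0 : 0 ≤ C := (abs_nonneg _).trans (hC 0)
        simp only [indicator_of_notMem hω, mul_zero, sub_self, abs_zero]
        positivity
  have := tendsto_nhds_unique (h1.sub h2) hdiff
  linarith

lemma setIntegral_eq_of_ae_eq_const {α : Type*} [MeasurableSpace α] {μ : Measure α}
    {s t : Set α} (hs : MeasurableSet s) (hst : s ⊆ t) {u : α → ℝ} {c : ℝ}
    (h : ∀ᵐ ω ∂μ, ω ∈ t → u ω = c) : ∫ ω in s, u ω ∂μ = μ.real s * c := by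
  rw [setIntegral_congr_ae hs (h.mono fun ω hω hωs => hω (hst hωs)), setIntegral_const,
    smul_eq_mul]

/-- If the matrix products do not grow exponentially, there are means on the plane, one for each
letter, that are equivariant under the transition matrices. -/
theorem exists_equivariant_means {ℓ : ℕ} {W : Set (ℕ × ℕ)} (hconc : μ (SFT ℓ W)ᶜ = 0)
    (hlps : LocalProductStructure ℓ W μ) (hT : MeasurePreserving shift μ μ)
    (hS : ∀ i j, (S i j).det = 1) {K : ℝ} (hK : ∀ i j, ‖S i j‖ ≤ K) {L : ℝ} (hL0 : L ≤ 0)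
    (hL : Tendsto (fun n : ℕ => (1 / (n : ℝ)) * ∫ ω, Real.log (2 * ‖prodMat S ω n‖) ∂μ)
      atTop (𝓝 L)) :
    ∃ ν : ℕ → ((Fin 2 → ℝ) → ℝ) → ℝ, (∀ j, μ {ω | ω 0 = j} ≠ 0 → IsMean (ν j)) ∧
      ∀ i j, 1 ≤ i → i ≤ ℓ → 1 ≤ j → j ≤ ℓ → μ {ω | ω 0 = i ∧ ω 1 = j} ≠ 0 →
        ∀ f, BddMeas f → ν i (fun v => f (S i j *ᵥ v)) = ν j f := by
  have hex : ∀ f : (Fin 2 → ℝ) → ℝ, ∃ u, BddMeas f → IsWeakLimit S μ f u := fun f => by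
    by_cases hf : BddMeas f
    · obtain ⟨u, hu⟩ := exists_isWeakLimit (S := S) (μ := μ) hf
      exact ⟨u, fun _ => hu⟩
    · exact ⟨0, fun h => absurd h hf⟩
  choose u hu using hex
  let χ : ℕ → (ℤ → ℕ) → ℝ := fun j => {ω | ω 0 = j}.indicator 1
  have hχ : ∀ j, BddMeas (χ j) := fun j => bddMeas_indicator_one (measurableSet_coord_eq 0 j)
  have hset : ∀ j (w : (ℤ → ℕ) → ℝ),
      ∫ ω, w ω * χ j ω ∂μ = ∫ ω in {ω | ω 0 = j}, w ω ∂μ := fun j w => by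
    rw [← integral_indicator (measurableSet_coord_eq 0 j)]
    refine integral_congr_ae (ae_of_all _ fun ω => ?_)
    by_cases hω : ω 0 = j <;> simp [χ, hω]
  have hpos : ∀ {s : Set (ℤ → ℕ)}, μ s ≠ 0 → 0 < μ.real s := fun {s} h =>
    ENNReal.toReal_pos h (measure_ne_top μ s)
  have hcint : ∀ {f}, BddMeas f → ∀ j n, Integrable (fun ω => cesaroAvg S f n ω * χ j ω) μ :=
    fun hf j n => ((bddMeas_cesaroAvg hf n).mul (hχ j)).integrable μ
  refine ⟨fun j f => (∫ ω, u f ω * χ j ω ∂μ) / μ.real {ω | ω 0 = j}, fun j hj => ?_,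
    fun i j hi1 hiℓ hj1 hjℓ hij f hf => ?_⟩
  · have hj' := hpos hj
    refine ⟨fun f g hf hg => ?_, fun c f hf => ?_, fun f g hf hg hfg => ?_, ?_⟩
    · beta_reduce
      rw [← add_div]
      congr 1
      refine tendsto_nhds_unique ((hu _ (hf.add hg)).tendsto _ (hχ j))
        ((((hu f hf).tendsto _ (hχ j)).add ((hu g hg).tendsto _ (hχ j))).congr fun n => ?_)
      rw [← integral_add (hcint hf j n) (hcint hg j n)]
      simp only [cesaroAvg_add hf hg, add_mul]
    · beta_reduce
      rw [← mul_div_assoc]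
      congr 1
      refine tendsto_nhds_unique ((hu _ ((BddMeas.const c).mul hf)).tendsto _ (hχ j))
        ((((hu f hf).tendsto _ (hχ j)).const_mul c).congr fun n => ?_)
      rw [← integral_const_mul]
      simp only [cesaroAvg_const_mul, mul_assoc]
    · refine div_le_div_of_nonneg_right ?_ hj'.le
      refine le_of_tendsto_of_tendsto' ((hu f hf).tendsto _ (hχ j)) ((hu g hg).tendsto _ (hχ j))
        fun n => integral_mono (hcint hf j n) (hcint hg j n) fun ω => ?_
      refine mul_le_mul_of_nonneg_right (cesaroAvg_mono hS hf hg hfg n ω) ?_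
      exact indicator_nonneg (fun _ _ => zero_le_one) ω
    · rw [div_eq_one_iff_eq hj'.ne']
      have h1 : ∫ ω, χ j ω ∂μ = μ.real {ω | ω 0 = j} :=
        integral_indicator_one (measurableSet_coord_eq 0 j)
      refine tendsto_nhds_unique ((hu _ (BddMeas.const 1)).tendsto _ (hχ j))
        (tendsto_const_nhds.congr' ?_)
      filter_upwards [Nat.hyperfilter_le_atTop (eventually_ne_atTop 0)] with n hn
      simp only [cesaroAvg_one hn, one_mul, h1]
  · have hconst : ∀ {g}, BddMeas g → ∀ {l}, 1 ≤ l → l ≤ ℓ →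
        ∃ c, ∀ᵐ ω ∂μ, ω ∈ {ω : ℤ → ℕ | ω 0 = l} → u g ω = c := fun {g} hg {l} hl1 hlℓ => by
      obtain ⟨h, hh, he⟩ := (hu g hg).ae_eq_comp_clampGE hT hS hK hL0 hL hg
      obtain ⟨h', hh', he'⟩ := (hu g hg).ae_eq_comp_clampLE hg
      exact hlps.exists_ae_eq_const hconc hl1 hlℓ hh hh' he he'
    have hfS : BddMeas fun x => f (S i j *ᵥ x) := hf.comp (measurable_mulVec _)
    obtain ⟨c, hc⟩ := hconst hfS hi1 hiℓ
    obtain ⟨c', hc'⟩ := hconst hf hj1 hjℓ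
    have hE' : MeasurableSet {ω : ℤ → ℕ | ω (-1) = i ∧ ω 0 = j} :=
      (measurableSet_coord_eq _ _).inter (measurableSet_coord_eq _ _)
    have hE : MeasurableSet {ω : ℤ → ℕ | ω 0 = i ∧ ω 1 = j} :=
      (measurableSet_coord_eq _ _).inter (measurableSet_coord_eq _ _)
    have hEE' : μ {ω | ω (-1) = i ∧ ω 0 = j} = μ {ω | ω 0 = i ∧ ω 1 = j} := by
      have hmp := measurePreserving_shiftBy hT 1
      rw [← hmp.measure_preimage hE'.nullMeasurableSet]
      rfl
    have heq := (hu f hf).integral_shift_eq hT hf (hu _ hfS)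
    rw [setIntegral_eq_of_ae_eq_const hE' (fun ω hω => hω.2) hc',
      setIntegral_eq_of_ae_eq_const hE (fun ω hω => hω.1) hc, measureReal_def, measureReal_def,
      hEE'] at heq
    have hcc : c' = c := mul_left_cancel₀ (hpos hij).ne' heq
    have hμi : μ {ω | ω 0 = i} ≠ 0 := fun h =>
      hij (measure_mono_null (fun ω hω => hω.1) h)
    have hμj : μ {ω | ω 0 = j} ≠ 0 := fun h =>
      hij (hEE' ▸ measure_mono_null (fun ω hω => hω.2) h)
    simp only [hset]
    rw [setIntegral_eq_of_ae_eq_const (measurableSet_coord_eq 0 j) Subset.rfl hc',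
      setIntegral_eq_of_ae_eq_const (measurableSet_coord_eq 0 i) Subset.rfl hc,
      mul_div_cancel_left₀ _ (hpos hμi).ne', mul_div_cancel_left₀ _ (hpos hμj).ne', hcc]

end means

/-- The transition matrices of the cocycle, with letters clamped to `{1, …, ℓ}`. -/
noncomputable def letterMat (ℓ : ℕ) (k : ℝ) (i j : ℕ) : Matrix (Fin 2) (Fin 2) ℝ :=
  transferMat k (max 1 (min i ℓ) : ℕ) (max 1 (min j ℓ) : ℕ)

lemma letterMat_eq {ℓ i j : ℕ} {k : ℝ} (hi1 : 1 ≤ i) (hiℓ : i ≤ ℓ) (hj1 : 1 ≤ j) (hjℓ : j ≤ ℓ) :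
    letterMat ℓ k i j = transferMat k i j := by
  rw [letterMat, min_eq_left hiℓ, min_eq_left hjℓ, max_eq_right hi1, max_eq_right hj1]

lemma det_letterMat (ℓ : ℕ) (k : ℝ) (i j : ℕ) : (letterMat ℓ k i j).det = 1 :=
  det_transferMat k (Nat.cast_pos.2 (lt_max_of_lt_left one_pos)) (Nat.cast_pos.2 (lt_max_of_lt_left one_pos))

lemma exists_norm_letterMat_le (ℓ : ℕ) (k : ℝ) : ∃ K, ∀ i j, ‖letterMat ℓ k i j‖ ≤ K := by
  obtain ⟨K, hK⟩ := ((Finset.range (ℓ + 2) ×ˢ Finset.range (ℓ + 2)).image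
    fun p : ℕ × ℕ => ‖transferMat k p.1 p.2‖).exists_le
  refine ⟨K, fun i j => hK _ (Finset.mem_image.2 ⟨(max 1 (min i ℓ), max 1 (min j ℓ)), ?_, rfl⟩)⟩
  simp only [Finset.mem_product, Finset.mem_range]
  omega

lemma AIter_eq_prodMat (k : ℝ) (ω : ℤ → ℕ) (n : ℕ) :
    AIter k ω n = prodMat (fun i j => transferMat k i j) (shiftBy (-1) ω) n := by
  have hit : ∀ (m : ℕ) (a : ℤ), shift^[m] ω a = ω (a + m) := fun m => by
    induction m with
    | zero => simp
    | succ m ih =>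
      intro a
      rw [Function.iterate_succ_apply', shift, ih]
      congr 1; push_cast; ring
  induction n with
  | zero => rfl
  | succ n ih =>
    rw [AIter, prodMat, ih, Acoc, transferMat, hit, hit]
    simp only [shiftBy]
    rw [show (n : ℤ) + -1 = -1 + n by ring, show (n : ℤ) + 1 + -1 = 0 + n by ring]

lemma prodMat_letterMat {ℓ : ℕ} {W : Set (ℕ × ℕ)} {ω : ℤ → ℕ} (hω : ω ∈ SFT ℓ W) (k : ℝ)
    (n : ℕ) : prodMat (letterMat ℓ k) ω n = prodMat (fun i j => transferMat k i j) ω n := by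
  induction n with
  | zero => rfl
  | succ n ih =>
    rw [prodMat, prodMat, ih, letterMat_eq (hω.1 _).1 (hω.1 _).2 (hω.1 _).1 (hω.1 _).2]

lemma tendsto_log_norm_prodMat {ℓ : ℕ} {W : Set (ℕ × ℕ)} {μ : Measure (ℤ → ℕ)}
    [IsProbabilityMeasure μ] (hconc : μ (SFT ℓ W)ᶜ = 0) (hT : MeasurePreserving shift μ μ)
    {k L : ℝ} (hL : Tendsto (fun n : ℕ => (1 / (n : ℝ)) * ∫ ω, Real.log ‖AIter k ω n‖ ∂μ)
      atTop (𝓝 L)) :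
    Tendsto (fun n : ℕ => (1 / (n : ℝ)) *
      ∫ ω, Real.log (2 * ‖prodMat (letterMat ℓ k) ω n‖) ∂μ) atTop (𝓝 L) := by
  have hmem : ∀ᵐ ω ∂μ, ω ∈ SFT ℓ W := by simpa [ae_iff] using! hconc
  obtain ⟨K, hK⟩ := exists_norm_letterMat_le ℓ k
  have hInt : ∀ n, ∫ ω, Real.log (2 * ‖prodMat (letterMat ℓ k) ω n‖) ∂μ =
      Real.log 2 + ∫ ω, Real.log ‖AIter k ω n‖ ∂μ := fun n => by
    have hmeas : Measurable fun ω => Real.log ‖AIter k ω n‖ := by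
      simp only [AIter_eq_prodMat]
      exact (measurable_comp_prodMat (fun M => Real.log ‖M‖) n).comp (measurable_shiftBy _)
    have hb := (bddMeas_log_norm_prodMat (det_letterMat ℓ k) hK n).integrable μ
    have h1 : ∫ ω, Real.log ‖AIter k ω n‖ ∂μ =
        ∫ ω, (Real.log (2 * ‖prodMat (letterMat ℓ k) ω n‖) - Real.log 2) ∂μ := by
      rw [← integral_shiftBy hT 1 hmeas]
      refine integral_congr_ae ?_
      filter_upwards [hmem] with ω hω
      have hn := one_le_two_mul_norm (det_prodMat (det_letterMat ℓ k) ω n)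
      rw [Real.log_mul two_ne_zero (by linarith), AIter_eq_prodMat, shiftBy_shiftBy,
        prodMat_letterMat hω]
      simp [shiftBy_zero]
    rw [h1, integral_sub hb (integrable_const _)]
    simp
  have h0 : Tendsto (fun n : ℕ => 1 / (n : ℝ) * Real.log 2) atTop (𝓝 0) := by
    simpa using tendsto_one_div_atTop_nhds_zero_nat.mul_const (Real.log 2)
  simpa [hInt, mul_add] using h0.add hL

lemma FullSupport.measure_word_ne_zero {ℓ : ℕ} {W : Set (ℕ × ℕ)} {μ : Measure (ℤ → ℕ)}
    (hsupp : FullSupport ℓ W μ) {i j : ℕ}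
    (hij : ∃ ω ∈ SFT ℓ W, ∃ n : ℤ, ω n = i ∧ ω (n + 1) = j) :
    μ {ω | ω 0 = i ∧ ω 1 = j} ≠ 0 := by
  obtain ⟨ω, hω, n, hi, hj⟩ := hij
  have hcyl : ∀ (a : ℤ) (b : ℕ), IsOpen {ω : ℤ → ℕ | ω a = b} := fun a b => by
    have hc : Continuous fun ω : ℤ → ℕ => ω a := continuous_apply a
    exact (isOpen_discrete ({b} : Set ℕ)).preimage hc
  have hopen : IsOpen {ω : ℤ → ℕ | ω 0 = i ∧ ω 1 = j} := (hcyl 0 i).inter (hcyl 1 j)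
  refine (hsupp _ hopen ⟨shiftBy n ω, ⟨?_, ?_⟩, fun m => hω.1 _, fun m => ?_⟩).ne'
  · simpa [shiftBy] using hi
  · simpa [shiftBy, add_comm] using hj
  · have := hω.2 (m + n)
    simp only [shiftBy]
    rwa [show m + 1 + n = m + n + 1 by ring]

/-- Suppose `μ` is a shift-ergodic Borel probability measure on `Ω` with a local
product structure and full support, and there are two distinct letters `j₀ ≠ j₁`
in `𝒜` such that each of the two-letter words `(j₀,j₀)`, `(j₀,j₁)`, `(j₁,j₀)`
occurs in at least one element of `Ω`.  Then `L(A^{(k)}, μ) > 0` for every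
`k ∈ (0,π)` with `k ≠ π/2`; equivalently,
`{k ∈ [0,π] : L(A^{(k)}, μ) = 0} ⊆ {0, π/2, π}`. -/
theorem statement5 (ℓ : ℕ) (hℓ : 1 < ℓ) (W : Set (ℕ × ℕ))
    (μ : Measure (ℤ → ℕ)) [IsProbabilityMeasure μ]
    (hconc : μ (SFT ℓ W)ᶜ = 0)
    (herg : Ergodic shift μ)
    (hlps : LocalProductStructure ℓ W μ)
    (hsupp : FullSupport ℓ W μ)
    (hwords : ∃ j₀ j₁ : ℕ, j₀ ≠ j₁ ∧
      1 ≤ j₀ ∧ j₀ ≤ ℓ ∧ 1 ≤ j₁ ∧ j₁ ≤ ℓ ∧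
      (∃ ω ∈ SFT ℓ W, ∃ n : ℤ, ω n = j₀ ∧ ω (n + 1) = j₀) ∧
      (∃ ω ∈ SFT ℓ W, ∃ n : ℤ, ω n = j₀ ∧ ω (n + 1) = j₁) ∧
      (∃ ω ∈ SFT ℓ W, ∃ n : ℤ, ω n = j₁ ∧ ω (n + 1) = j₀))
    (L : ℝ → ℝ)
    (hL : ∀ k : ℝ,
      Tendsto (fun n : ℕ => (1 / (n : ℝ)) * ∫ ω, Real.log ‖AIter k ω n‖ ∂μ)
        atTop (𝓝 (L k))) :
    (∀ k ∈ Ioo (0 : ℝ) π, k ≠ π / 2 → 0 < L k) ∧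
    {k ∈ Icc (0 : ℝ) π | L k = 0} ⊆ {0, π / 2, π} := by
  have hpos : ∀ k ∈ Ioo (0 : ℝ) π, k ≠ π / 2 → 0 < L k := by
    intro k hk hk2
    obtain ⟨j₀, j₁, hne, h01, h0ℓ, h11, h1ℓ, hw00, hw01, hw10⟩ := hwords
    by_contra! hL0
    have hT := herg.toMeasurePreserving
    obtain ⟨K, hK⟩ := exists_norm_letterMat_le ℓ k
    obtain ⟨ν, hν, hequiv⟩ := exists_equivariant_means hconc hlps hT (det_letterMat ℓ k) hK hL0
      (tendsto_log_norm_prodMat hconc hT (hL k))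
    have hw : ∀ i j, (∃ ω ∈ SFT ℓ W, ∃ n : ℤ, ω n = i ∧ ω (n + 1) = j) →
        μ {ω | ω 0 = i ∧ ω 1 = j} ≠ 0 := fun i j hij => hsupp.measure_word_ne_zero hij
    have hμ : μ {ω | ω 0 = j₀} ≠ 0 := fun h =>
      hw _ _ hw00 (measure_mono_null (fun ω hω => hω.1) h)
    refine (hν j₀ hμ).false_of_transferMat hk hk2 (a := j₀) (b := j₁)
      (by exact_mod_cast h01) (by exact_mod_cast h11) (by exact_mod_cast hne)
      (fun f hf => ?_) fun f hf => ?_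
    · rw [← letterMat_eq h01 h0ℓ h01 h0ℓ]
      exact hequiv _ _ h01 h0ℓ h01 h0ℓ (hw _ _ hw00) f hf
    · rw [← letterMat_eq h01 h0ℓ h11 h1ℓ, ← letterMat_eq h11 h1ℓ h01 h0ℓ]
      simp only [← Matrix.mulVec_mulVec]
      rw [hequiv j₀ j₁ h01 h0ℓ h11 h1ℓ (hw _ _ hw01) (fun v => f (letterMat ℓ k j₁ j₀ *ᵥ v))
        (hf.comp (measurable_mulVec _))]
      exact hequiv _ _ h11 h1ℓ h01 h0ℓ (hw _ _ hw10) f hf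
  refine ⟨hpos, fun k hk => ?_⟩
  obtain ⟨⟨hk0, hkπ⟩, hLk⟩ := hk
  by_contra hcon
  simp only [mem_insert_iff, mem_singleton_iff, not_or] at hcon
  exact (hpos k ⟨lt_of_le_of_ne hk0 (Ne.symm hcon.1), lt_of_le_of_ne hkπ hcon.2.2⟩ hcon.2.1).ne' hLk
end

section
/- Fix k ∈ ℝ and let μ be a T-ergodic Borel probability measure on Ω with full support (supp μ = Ω). Then for every δ > 0 there exists a T-periodic point p ∈ Ω such that |L(A^{(k)}, p) − L(A^{(k)}, μ)| < δ, where L(A^{(k)}, p) = lim_{n→∞} (1/n)·log‖A_n(p)‖. -/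
open Real MeasureTheory Filter Topology Matrix Set

section MatrixNorm

theorem sum_sq_col_le_norm_sq (M : Matrix (Fin 2) (Fin 2) ℝ) (j : Fin 2) :
    M 0 j ^ 2 + M 1 j ^ 2 ≤ ‖M‖ ^ 2 := by
  have h := M.l2_opNorm_mulVec (EuclideanSpace.single j (1 : ℝ))
  have h' := pow_le_pow_left₀ (norm_nonneg _) h 2
  rw [EuclideanSpace.norm_sq_eq] at h'
  simpa [Fin.sum_univ_two] using h'

theorem abs_entry_le_norm (M : Matrix (Fin 2) (Fin 2) ℝ) (i j : Fin 2) : |M i j| ≤ ‖M‖ := by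
  have h := sum_sq_col_le_norm_sq M j
  refine abs_le_of_sq_le_sq ?_ (norm_nonneg M)
  fin_cases i <;> simp <;> nlinarith [sq_nonneg (M 0 j), sq_nonneg (M 1 j)]

theorem norm_sq_le_sum_sq (M : Matrix (Fin 2) (Fin 2) ℝ) :
    ‖M‖ ^ 2 ≤ M 0 0 ^ 2 + M 0 1 ^ 2 + M 1 0 ^ 2 + M 1 1 ^ 2 := by
  set F := M 0 0 ^ 2 + M 0 1 ^ 2 + M 1 0 ^ 2 + M 1 1 ^ 2 with hF
  have hF0 : 0 ≤ F := by positivity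
  have h : ‖M‖ ≤ √F := by
    refine ContinuousLinearMap.opNorm_le_bound _ (Real.sqrt_nonneg _) fun v => ?_
    refine abs_le_of_sq_le_sq' ?_ (by positivity) |>.2
    rw [mul_pow, Real.sq_sqrt hF0, EuclideanSpace.norm_sq_eq, EuclideanSpace.norm_sq_eq]
    simp [Fin.sum_univ_two, Matrix.toLpLin_apply]
    nlinarith [sq_nonneg (M 0 0 * v 1 - M 0 1 * v 0), sq_nonneg (M 1 0 * v 1 - M 1 1 * v 0)]
  calc ‖M‖ ^ 2 ≤ √F ^ 2 := pow_le_pow_left₀ (norm_nonneg _) h 2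
    _ = F := Real.sq_sqrt hF0

theorem one_le_norm_of_det_eq_one {M : Matrix (Fin 2) (Fin 2) ℝ} (hM : M.det = 1) : 1 ≤ ‖M‖ := by
  rw [Matrix.det_fin_two] at hM
  have h0 := sum_sq_col_le_norm_sq M 0
  have h1 := sum_sq_col_le_norm_sq M 1
  nlinarith [norm_nonneg M, sq_nonneg (M 0 0 - M 1 1), sq_nonneg (M 0 1 + M 1 0)]

theorem norm_one_matrix : ‖(1 : Matrix (Fin 2) (Fin 2) ℝ)‖ = 1 := by
  rw [← Matrix.diagonal_one, Matrix.l2_opNorm_diagonal]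
  simp

theorem sq_add_sq_le_of_gram_eq {a b θ x y z i j m : ℝ} (ha0 : 0 < a) (hb0 : 0 < b)
    (hθ0 : 0 < θ) (hθ : θ ≤ 1) (hθa : 1 ≤ θ * a ^ 2) (hθb : 1 ≤ θ * b ^ 2)
    (hx : |x| ≤ θ * a) (hy : |y| ≤ θ * b) (hz : |z| ≤ θ * (a * b))
    (hja : |j| ≤ 2 * a) (hib : |i| ≤ 2 * b)
    (key : (m - (x * i + y * j) / 2) ^ 2 =
      (x ^ 2 / 2 - 2) * (y ^ 2 / 2 - 2) + (x ^ 2 / 2 - 2) * i ^ 2 / 2 - (z - x * y / 2) ^ 2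
      - (z - x * y / 2) * (j * i) + (y ^ 2 / 2 - 2) * j ^ 2 / 2) :
    z ^ 2 + m ^ 2 ≤ 100 * (θ * (a * b) ^ 2) := by
  set t := θ * (a * b) ^ 2 with ht
  have sq_of_abs : ∀ {u v : ℝ}, |u| ≤ v → u ^ 2 ≤ v ^ 2 := fun {u v} h =>
    sq_le_sq' (by linarith [neg_abs_le u]) ((le_abs_self u).trans h)
  have hx2 := sq_of_abs hx
  have hy2 := sq_of_abs hy
  have hz2 := sq_of_abs hz
  have hi2 := sq_of_abs hib
  have hj2 := sq_of_abs hja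
  have hθ2 : θ ^ 2 ≤ θ := pow_le_of_le_one hθ0.le hθ two_ne_zero
  have hxθ : x ^ 2 ≤ θ * a ^ 2 := by
    rw [mul_pow] at hx2; exact hx2.trans (mul_le_mul_of_nonneg_right hθ2 (sq_nonneg _))
  have hyθ : y ^ 2 ≤ θ * b ^ 2 := by
    rw [mul_pow] at hy2; exact hy2.trans (mul_le_mul_of_nonneg_right hθ2 (sq_nonneg _))
  have hθt : θ ^ 2 * (a * b) ^ 2 ≤ t := mul_le_mul_of_nonneg_right hθ2 (sq_nonneg _)
  have hzt : z ^ 2 ≤ t := by rw [mul_pow] at hz2; exact hz2.trans hθt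
  have hxi : (x * i) ^ 2 ≤ 4 * t := by
    calc (x * i) ^ 2 = x ^ 2 * i ^ 2 := by ring
      _ ≤ (θ * a ^ 2) * (2 * b) ^ 2 := mul_le_mul hxθ hi2 (sq_nonneg _) (by positivity)
      _ = 4 * t := by rw [ht]; ring
  have hyj : (y * j) ^ 2 ≤ 4 * t := by
    calc (y * j) ^ 2 = y ^ 2 * j ^ 2 := by ring
      _ ≤ (θ * b ^ 2) * (2 * a) ^ 2 := mul_le_mul hyθ hj2 (sq_nonneg _) (by positivity)
      _ = 4 * t := by rw [ht]; ring
  have hxy : (x ^ 2 / 2 - 2) * (y ^ 2 / 2 - 2) ≤ 9 * t := by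
    have h1 : |x ^ 2 / 2 - 2| ≤ 3 * (θ * a ^ 2) :=
      abs_le.2 ⟨by linarith [sq_nonneg x], by linarith⟩
    have h2 : |y ^ 2 / 2 - 2| ≤ 3 * (θ * b ^ 2) :=
      abs_le.2 ⟨by linarith [sq_nonneg y], by linarith⟩
    calc _ ≤ |x ^ 2 / 2 - 2| * |y ^ 2 / 2 - 2| := by rw [← abs_mul]; exact le_abs_self _
      _ ≤ (3 * (θ * a ^ 2)) * (3 * (θ * b ^ 2)) :=
        mul_le_mul h1 h2 (abs_nonneg _) (by positivity)
      _ = 9 * (θ ^ 2 * (a * b) ^ 2) := by ring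
      _ ≤ 9 * t := by linarith
  have hxyab : |x * y| ≤ θ * (a * b) := by
    rw [abs_mul]
    calc |x| * |y| ≤ (θ * a) * (θ * b) := mul_le_mul hx hy (abs_nonneg _) (by positivity)
      _ = θ ^ 2 * (a * b) := by ring
      _ ≤ θ * (a * b) := mul_le_mul_of_nonneg_right hθ2 (by positivity)
  have hcross : -((z - x * y / 2) * (j * i)) ≤ 8 * t := by
    have h1 : |z - x * y / 2| ≤ 2 * (θ * (a * b)) := by
      rw [abs_le] at *
      constructor <;> linarith [hz.1, hz.2, hxyab.1, hxyab.2]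
    have h2 : |j * i| ≤ (2 * a) * (2 * b) := by
      rw [abs_mul]; exact mul_le_mul hja hib (abs_nonneg _) (by positivity)
    calc _ ≤ |z - x * y / 2| * |j * i| := by rw [← abs_mul]; exact neg_le_abs _
      _ ≤ (2 * (θ * (a * b))) * ((2 * a) * (2 * b)) :=
        mul_le_mul h1 h2 (abs_nonneg _) (by positivity)
      _ = 8 * t := by rw [ht]; ring
  have hm2 : m ^ 2 ≤ 2 * (m - (x * i + y * j) / 2) ^ 2 + 2 * ((x * i + y * j) / 2) ^ 2 := by
    linarith [sq_nonneg (m - (x * i + y * j))]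
  have ht0 : 0 ≤ t := by positivity
  have e3 : (x ^ 2 / 2 - 2) * i ^ 2 / 2 ≤ t := by
    linarith [mul_pow x i 2, sq_nonneg i]
  have e4 : (y ^ 2 / 2 - 2) * j ^ 2 / 2 ≤ t := by
    linarith [mul_pow y j 2, sq_nonneg j]
  have e5 : ((x * i + y * j) / 2) ^ 2 ≤ 4 * t := by linarith [sq_nonneg (x * i - y * j)]
  linarith [sq_nonneg (z - x * y / 2)]

/-- The Frobenius norm of a product in `SL(2,ℝ)` is controlled by the traces of the factors and
of the product: if all these traces are a factor `θ` smaller than the trivial bounds, then so is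
the square of the norm of the product. -/
theorem norm_mul_sq_le_of_trace_le {X Y : Matrix (Fin 2) (Fin 2) ℝ} (hX : X.det = 1)
    (hY : Y.det = 1) {a b θ : ℝ} (hθ : θ ≤ 1) (ha : ‖X‖ ≤ a) (hb : ‖Y‖ ≤ b)
    (hθa : 1 ≤ θ * a ^ 2) (hθb : 1 ≤ θ * b ^ 2) (hx : |X.trace| ≤ θ * a) (hy : |Y.trace| ≤ θ * b)
    (hz : |(Y * X).trace| ≤ θ * (a * b)) :
    ‖Y * X‖ ^ 2 ≤ 100 * θ * (a * b) ^ 2 := by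
  have ha0 : 0 < a := lt_of_lt_of_le (by linarith [one_le_norm_of_det_eq_one hX]) ha
  have hb0 : 0 < b := lt_of_lt_of_le (by linarith [one_le_norm_of_det_eq_one hY]) hb
  have hθ0 : 0 < θ := by
    by_contra h
    nlinarith [sq_nonneg a]
  refine (norm_sq_le_sum_sq _).trans ?_
  have hp := (abs_entry_le_norm X 0 1).trans ha
  have hq := (abs_entry_le_norm X 1 0).trans ha
  have hP := (abs_entry_le_norm Y 0 1).trans hb
  have hQ := (abs_entry_le_norm Y 1 0).trans hb
  rw [Matrix.trace_fin_two] at hx hy hz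
  rw [Matrix.det_fin_two] at hX hY
  simp only [Matrix.mul_apply, Fin.sum_univ_two] at hz ⊢
  obtain ⟨j, hj⟩ : ∃ j, j = X 0 1 - X 1 0 := ⟨_, rfl⟩
  obtain ⟨i, hi⟩ : ∃ i, i = Y 0 1 - Y 1 0 := ⟨_, rfl⟩
  have hja : |j| ≤ 2 * a := by
    rw [hj]; linarith [abs_sub (X 0 1) (X 1 0)]
  have hib : |i| ≤ 2 * b := by
    rw [hi]; linarith [abs_sub (Y 0 1) (Y 1 0)]
  generalize X 0 0 = p at *
  generalize X 0 1 = q at *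
  generalize X 1 0 = r at *
  generalize X 1 1 = s at *
  generalize Y 0 0 = P at *
  generalize Y 0 1 = Q at *
  generalize Y 1 0 = R at *
  generalize Y 1 1 = S at *
  obtain ⟨x, hx'⟩ : ∃ x, x = p + s := ⟨_, rfl⟩
  obtain ⟨y, hy'⟩ : ∃ y, y = P + S := ⟨_, rfl⟩
  obtain ⟨z, hz'⟩ : ∃ z, z = P * p + Q * r + (R * q + S * s) := ⟨_, rfl⟩
  obtain ⟨m, hm⟩ : ∃ m, m = (P * q + Q * s) - (R * p + S * r) := ⟨_, rfl⟩
  rw [← hx'] at hx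
  rw [← hy'] at hy
  rw [← hz'] at hz
  have frob : (P * p + Q * r) ^ 2 + (P * q + Q * s) ^ 2 + (R * p + S * r) ^ 2
      + (R * q + S * s) ^ 2 = z ^ 2 + m ^ 2 - 2 := by
    have : (P * p + Q * r) * (R * q + S * s) - (P * q + Q * s) * (R * p + S * r) = 1 := by
      linear_combination (P * S - Q * R) * hX + hY
    rw [hz', hm]; linear_combination (-2) * this
  have key : (m - (x * i + y * j) / 2) ^ 2 =
      (x ^ 2 / 2 - 2) * (y ^ 2 / 2 - 2) + (x ^ 2 / 2 - 2) * i ^ 2 / 2 - (z - x * y / 2) ^ 2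
      - (z - x * y / 2) * (j * i) + (y ^ 2 / 2 - 2) * j ^ 2 / 2 := by
    have e1 : x ^ 2 / 2 - 2 = x ^ 2 / 2 - 2 * (p * s - q * r) := by rw [hX]; ring
    have e2 : y ^ 2 / 2 - 2 = y ^ 2 / 2 - 2 * (P * S - Q * R) := by rw [hY]; ring
    rw [e1, e2, hm, hx', hy', hz', hi, hj]; ring
  rw [frob, mul_assoc]
  linarith [sq_add_sq_le_of_gram_eq ha0 hb0 hθ0 hθ hθa hθb hx hy hz hja hib key]

/-- A unimodular real matrix with large trace has an eigenvalue of modulus at least half the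
trace, so its powers grow at least at that rate. -/
theorem trace_div_two_pow_le_norm_pow {P : Matrix (Fin 2) (Fin 2) ℝ} (hP : P.det = 1)
    (ht : 2 ≤ |P.trace|) (j : ℕ) : (|P.trace| / 2) ^ j ≤ ‖P ^ j‖ := by
  set τ := P.trace with hτ
  obtain ⟨e, he, hroot⟩ : ∃ e : ℝ, |τ| / 2 ≤ |e| ∧ e ^ 2 - τ * e + 1 = 0 := by
    have hd : 0 ≤ τ ^ 2 - 4 := by nlinarith [sq_abs τ]
    have hs := Real.sq_sqrt hd
    have hs0 := Real.sqrt_nonneg (τ ^ 2 - 4)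
    rcases le_total 0 τ with h | h
    · refine ⟨(τ + √(τ ^ 2 - 4)) / 2, ?_, by nlinarith⟩
      rw [abs_of_nonneg h, abs_of_nonneg (by positivity)]; linarith
    · refine ⟨(τ - √(τ ^ 2 - 4)) / 2, ?_, by nlinarith⟩
      rw [abs_of_nonpos h, abs_of_nonpos (by linarith)]; linarith
  have hdet : (P - e • (1 : Matrix (Fin 2) (Fin 2) ℝ)).det = 0 := by
    rw [Matrix.det_fin_two] at hP ⊢
    rw [Matrix.trace_fin_two] at hτ
    simp
    rw [hτ] at hroot
    linear_combination hroot + hP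
  obtain ⟨v, hv, hPv⟩ := Matrix.exists_mulVec_eq_zero_iff.2 hdet
  have hPv' : P *ᵥ v = e • v := by
    rw [Matrix.sub_mulVec, Matrix.smul_mulVec, Matrix.one_mulVec, sub_eq_zero] at hPv
    exact hPv
  have hpow : ∀ j : ℕ, (P ^ j) *ᵥ v = e ^ j • v := by
    intro j
    induction j with
    | zero => simp
    | succ j ih =>
      rw [pow_succ', ← Matrix.mulVec_mulVec, ih, Matrix.mulVec_smul, hPv', smul_smul, pow_succ]
  have hn := (P ^ j).l2_opNorm_mulVec (WithLp.toLp 2 v)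
  have hvn : 0 < ‖WithLp.toLp 2 v‖ := norm_pos_iff.2 (by simpa using hv)
  have hE : (EuclideanSpace.equiv (Fin 2) ℝ).symm ((P ^ j) *ᵥ (WithLp.toLp 2 v).ofLp)
      = e ^ j • WithLp.toLp 2 v := by
    simp only [hpow]; rfl
  rw [hE, norm_smul, norm_pow, Real.norm_eq_abs] at hn
  exact (pow_le_pow_left₀ (by positivity) he j).trans (le_of_mul_le_mul_right hn hvn)

end MatrixNorm

section Cocycle

theorem shift_iterate_apply (n : ℕ) (ω : ℤ → ℕ) (j : ℤ) : (shift^[n] ω) j = ω (j + n) := by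
  induction n generalizing j with
  | zero => simp
  | succ n ih =>
    rw [Function.iterate_succ_apply', shift, ih]
    congr 1
    push_cast
    ring

theorem AIter_add (k : ℝ) (ω : ℤ → ℕ) (m n : ℕ) :
    AIter k ω (m + n) = AIter k (shift^[m] ω) n * AIter k ω m := by
  induction n with
  | zero => simp [AIter]
  | succ n ih =>
    rw [← add_assoc, AIter, AIter, ih, ← Function.iterate_add_apply, add_comm n m, Matrix.mul_assoc]

theorem shift_iterate_mem_SFT {ℓ : ℕ} {W : Set (ℕ × ℕ)} {ω : ℤ → ℕ} (h : ω ∈ SFT ℓ W) (n : ℕ) :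
    shift^[n] ω ∈ SFT ℓ W := by
  refine ⟨fun j => ?_, fun j => ?_⟩
  · rw [shift_iterate_apply]; exact h.1 _
  · rw [shift_iterate_apply, shift_iterate_apply, add_right_comm]; exact h.2 _

theorem det_Acoc {ℓ : ℕ} {W : Set (ℕ × ℕ)} {ω : ℤ → ℕ} (h : ω ∈ SFT ℓ W) (k : ℝ) :
    (Acoc k ω).det = 1 := by
  have h0 : (0 : ℝ) < ω 0 := by exact_mod_cast (h.1 0).1
  have h1 : (0 : ℝ) < ω (-1) := by exact_mod_cast (h.1 (-1)).1
  rw [Acoc, Matrix.det_smul, Matrix.det_fin_two_of, Fintype.card_fin, Real.sq_sqrt (by positivity)]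
  field_simp
  ring

theorem det_AIter {ℓ : ℕ} {W : Set (ℕ × ℕ)} {ω : ℤ → ℕ} (h : ω ∈ SFT ℓ W) (k : ℝ) (n : ℕ) :
    (AIter k ω n).det = 1 := by
  induction n with
  | zero => simp [AIter]
  | succ n ih => rw [AIter, Matrix.det_mul, det_Acoc (shift_iterate_mem_SFT h n), ih, one_mul]

theorem log_norm_AIter_nonneg {ℓ : ℕ} {W : Set (ℕ × ℕ)} {ω : ℤ → ℕ} (h : ω ∈ SFT ℓ W) (k : ℝ)
    (n : ℕ) : 0 ≤ Real.log ‖AIter k ω n‖ :=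
  Real.log_nonneg (one_le_norm_of_det_eq_one (det_AIter h k n))

theorem log_norm_AIter_add_le {ℓ : ℕ} {W : Set (ℕ × ℕ)} {ω : ℤ → ℕ} (h : ω ∈ SFT ℓ W) (k : ℝ)
    (m n : ℕ) : Real.log ‖AIter k ω (m + n)‖ ≤
      Real.log ‖AIter k ω m‖ + Real.log ‖AIter k (shift^[m] ω) n‖ := by
  have h1 := one_le_norm_of_det_eq_one (det_AIter h k m)
  have h2 := one_le_norm_of_det_eq_one (det_AIter (shift_iterate_mem_SFT h m) k n)
  have h3 := one_le_norm_of_det_eq_one (det_AIter h k (m + n))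
  rw [← Real.log_mul (by positivity) (by positivity), mul_comm]
  refine Real.log_le_log (by positivity) ?_
  rw [AIter_add]
  exact Matrix.l2_opNorm_mul _ _

theorem exists_log_norm_AIter_le (ℓ : ℕ) (W : Set (ℕ × ℕ)) (k : ℝ) :
    ∃ C : ℝ, 0 ≤ C ∧ ∀ ω ∈ SFT ℓ W, ∀ n : ℕ, Real.log ‖AIter k ω n‖ ≤ n * C := by
  let g : ℕ × ℕ → ℝ := fun u => Real.log ‖Real.sqrt ((u.1 : ℝ) / (u.2 : ℝ)) •
    !![((u.1 : ℝ) + (u.2 : ℝ)) / (u.1 : ℝ) * Real.cos k, -((u.2 : ℝ) / (u.1 : ℝ)); (1 : ℝ), 0]‖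
  obtain ⟨C, hC⟩ := (((Set.finite_Iic ℓ).prod (Set.finite_Iic ℓ)).image g).bddAbove
  have hstep : ∀ ω ∈ SFT ℓ W, Real.log ‖Acoc k ω‖ ≤ max C 0 := fun ω hω =>
    le_max_of_le_left (hC ⟨(ω 0, ω (-1)), ⟨(hω.1 _).2, (hω.1 _).2⟩, rfl⟩)
  refine ⟨max C 0, le_max_right _ _, fun ω hω n => ?_⟩
  induction n with
  | zero => simp [AIter, norm_one_matrix]
  | succ n ih =>
    have h := log_norm_AIter_add_le hω k n 1
    have h1 := hstep _ (shift_iterate_mem_SFT hω n)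
    simp only [AIter, Function.iterate_zero, id, mul_one] at h ⊢
    push_cast
    linarith

theorem continuous_shift : Continuous shift :=
  continuous_pi fun n => continuous_apply (n + 1)

theorem continuous_AIter (k : ℝ) (n : ℕ) : Continuous fun ω => AIter k ω n := by
  have hA : Continuous fun ω => Acoc k ω := by
    let g : ℕ × ℕ → Matrix (Fin 2) (Fin 2) ℝ := fun u => Real.sqrt ((u.1 : ℝ) / (u.2 : ℝ)) •
      !![((u.1 : ℝ) + (u.2 : ℝ)) / (u.1 : ℝ) * Real.cos k, -((u.2 : ℝ) / (u.1 : ℝ)); (1 : ℝ), 0]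
    have hg : Continuous g := continuous_of_discreteTopology
    have hc : Continuous fun ω : ℤ → ℕ => (ω 0, ω (-1)) := by fun_prop
    exact hg.comp hc
  induction n with
  | zero => exact continuous_const
  | succ n ih => exact (hA.comp (continuous_shift.iterate n)).matrix_mul ih

theorem measurable_log_norm_AIter (k : ℝ) (n : ℕ) :
    Measurable fun ω => Real.log ‖AIter k ω n‖ :=
  Real.measurable_log.comp (continuous_norm.comp (continuous_AIter k n)).measurable

end Cocycle

section Periodic

/-- The periodic sequence of period `m` agreeing with `σ` on `{0,…,m-1}`. -/
def periodize (σ : ℤ → ℕ) (m : ℕ) : ℤ → ℕ := fun j => σ (j % m)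

theorem shift_iterate_periodize (σ : ℤ → ℕ) (m : ℕ) :
    shift^[m] (periodize σ m) = periodize σ m := by
  ext j
  rw [shift_iterate_apply, periodize, periodize, Int.add_emod_right]

theorem periodize_mem_SFT {ℓ : ℕ} {W : Set (ℕ × ℕ)} {σ : ℤ → ℕ} (hσ : σ ∈ SFT ℓ W) {m : ℕ}
    (hm : 1 ≤ m) (hloop : σ (-1) = σ (m - 1)) : periodize σ m ∈ SFT ℓ W := by
  refine ⟨fun j => hσ.1 _, fun j => ?_⟩
  have h0 := Int.emod_nonneg j (b := m) (by omega)
  have h1 := Int.emod_lt_of_pos j (b := m) (by omega)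
  simp only [periodize]
  rw [← Int.emod_add_emod]
  rcases eq_or_ne (j % m) (m - 1) with h | h
  · rw [h, sub_add_cancel, Int.emod_self, ← hloop]
    exact hσ.2 (-1)
  · rw [Int.emod_eq_of_lt (a := j % m + 1) (by omega) (by omega)]
    exact hσ.2 _

theorem AIter_congr {σ τ : ℤ → ℕ} (k : ℝ) (n : ℕ)
    (h : ∀ j : ℤ, -1 ≤ j → j < n → σ j = τ j) : AIter k σ n = AIter k τ n := by
  induction n with
  | zero => rfl
  | succ n ih =>
    rw [AIter, AIter, ih fun j h1 h2 => h j h1 (by push_cast; omega)]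
    congr 1
    simp only [Acoc, shift_iterate_apply]
    rw [h _ (by omega) (by push_cast; omega), h _ (by omega) (by push_cast; omega)]

theorem AIter_periodize (k : ℝ) {σ : ℤ → ℕ} {m : ℕ}
    (hloop : σ (-1) = σ (m - 1)) : AIter k (periodize σ m) m = AIter k σ m := by
  refine AIter_congr k m fun j h1 h2 => ?_
  rcases eq_or_ne j (-1) with rfl | hj
  · rw [hloop, periodize]
    congr 1
  · rw [periodize, Int.emod_eq_of_lt (by omega) h2]

theorem AIter_mul_of_periodic (k : ℝ) {p : ℤ → ℕ} {m : ℕ} (hp : shift^[m] p = p) (j : ℕ) :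
    AIter k p (j * m) = AIter k p m ^ j := by
  induction j with
  | zero => simp [AIter]
  | succ j ih =>
    have hj : shift^[j * m] p = p := by
      rw [mul_comm, Function.iterate_mul]; exact Function.iterate_fixed hp j
    rw [Nat.succ_mul, AIter_add, ih, hj, pow_succ']

/-- The Lyapunov exponent of a periodic point exists; it is nonnegative, at most the exponential
rate of the norm over one period, and bounded below through the trace over one period. -/
theorem exists_lyapunov_of_periodic {ℓ : ℕ} {W : Set (ℕ × ℕ)} {p : ℤ → ℕ} (hp : p ∈ SFT ℓ W)
    (k : ℝ) {m : ℕ} (hm : 1 ≤ m) (hper : shift^[m] p = p) :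
    ∃ lam : ℝ, Tendsto (fun n : ℕ => (1 / (n : ℝ)) * Real.log ‖AIter k p n‖) atTop
        (𝓝 (lam / m)) ∧ 0 ≤ lam ∧ lam ≤ Real.log ‖AIter k p m‖ ∧
      (2 ≤ |(AIter k p m).trace| → Real.log (|(AIter k p m).trace| / 2) ≤ lam) := by
  obtain ⟨C, hC0, hC⟩ := exists_log_norm_AIter_le ℓ W k
  set u : ℕ → ℝ := fun n => Real.log ‖AIter k p n‖ with hu
  set v : ℕ → ℝ := fun j => u (j * m) with hv
  have hfix : ∀ j : ℕ, shift^[j * m] p = p := fun j => by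
    rw [mul_comm, Function.iterate_mul]; exact Function.iterate_fixed hper j
  have hu0 : ∀ n, 0 ≤ u n := log_norm_AIter_nonneg hp k
  have hsub : Subadditive v := fun i j => by
    have h := log_norm_AIter_add_le hp k (i * m) (j * m)
    rw [hfix, ← add_mul] at h
    exact h
  have hbdd : BddBelow (range fun n => v n / n) :=
    ⟨0, by rintro _ ⟨n, rfl⟩; exact div_nonneg (hu0 _) (Nat.cast_nonneg n)⟩
  have hlim := hsub.tendsto_lim hbdd
  have hm0 : (0 : ℝ) < m := by exact_mod_cast hm
  refine ⟨hsub.lim, ?_, ?_, ?_, ?_⟩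
  · have hquot : Tendsto (fun n : ℕ => ((n / m : ℕ) : ℝ) / n) atTop (𝓝 ((m : ℝ)⁻¹)) := by
      have h := (tendsto_nat_floor_mul_div_atTop (R := ℝ) (inv_nonneg.2 hm0.le)).comp
        (tendsto_natCast_atTop_atTop (R := ℝ))
      refine h.congr fun n => ?_
      simp only [Function.comp]
      rw [inv_mul_eq_div, Nat.floor_div_eq_div]
    have hdiv : Tendsto (fun n : ℕ => n / m) atTop atTop :=
      Nat.tendsto_div_const_atTop (by omega)
    have hconst : ∀ c : ℝ, Tendsto (fun n : ℕ => c / (n : ℝ)) atTop (𝓝 0) :=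
      tendsto_const_div_atTop_nhds_zero_nat
    have hup : Tendsto (fun n : ℕ => v (n / m) / (n / m : ℕ) * (((n / m : ℕ) : ℝ) / n)
        + m * C / n) atTop (𝓝 (hsub.lim / m)) := by
      simpa [div_eq_mul_inv] using ((hlim.comp hdiv).mul hquot).add (hconst (m * C))
    have hlo : Tendsto (fun n : ℕ => v (n / m + 1) / (n / m + 1 : ℕ) *
        (((n / m : ℕ) : ℝ) / n + 1 / n) - m * C / n) atTop (𝓝 (hsub.lim / m)) := by
      simpa [div_eq_mul_inv] using
        (((hlim.comp (tendsto_add_atTop_nat 1)).comp hdiv).mul (hquot.add (hconst 1))).sub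
          (hconst (m * C))
    refine tendsto_of_tendsto_of_tendsto_of_le_of_le' hlo hup ?_ ?_
    · filter_upwards [eventually_gt_atTop 0] with n hn
      have hn0 : (0 : ℝ) < n := by exact_mod_cast hn
      have hr : n % m < m := Nat.mod_lt _ (by omega)
      have hsplit : (n / m + 1) * m = n + (m - n % m) := by
        have := Nat.div_add_mod' n m
        rw [add_mul]; omega
      have h1 : v (n / m + 1) ≤ u n + m * C := by
        have h := log_norm_AIter_add_le hp k n (m - n % m)
        have h2 := hC _ (shift_iterate_mem_SFT hp n) (m - n % m)
        have h3 : ((m - n % m : ℕ) : ℝ) * C ≤ m * C := by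
          gcongr; exact Nat.sub_le _ _
        simp only [hv, hu]
        rw [hsplit]
        linarith
      have h2 : v (n / m + 1) / (n / m + 1 : ℕ) * (((n / m : ℕ) : ℝ) / n + 1 / n)
          = v (n / m + 1) / n := by
        push_cast
        field_simp
      rw [h2, ← sub_div, one_div, inv_mul_eq_div]
      gcongr
      linarith
    · filter_upwards [eventually_gt_atTop 0] with n hn
      have hn0 : (0 : ℝ) < n := by exact_mod_cast hn
      have h1 : u n ≤ v (n / m) + m * C := by
        have h := log_norm_AIter_add_le hp k (n / m * m) (n % m)
        rw [Nat.div_add_mod'] at h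
        have h2 := hC _ (shift_iterate_mem_SFT hp (n / m * m)) (n % m)
        have h3 : ((n % m : ℕ) : ℝ) * C ≤ m * C := by
          gcongr; exact (Nat.mod_lt _ (by omega)).le
        simp only [hv, hu]
        linarith
      have h2 : v (n / m) / (n / m : ℕ) * (((n / m : ℕ) : ℝ) / n) = v (n / m) / n := by
        rcases Nat.eq_zero_or_pos (n / m) with h | h
        · simp [h, hv, hu, AIter, norm_one_matrix]
        · have : (0 : ℝ) < (n / m : ℕ) := by exact_mod_cast h
          field_simp
      rw [h2, ← add_div, one_div, inv_mul_eq_div]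
      gcongr
  · exact ge_of_tendsto' hlim fun n => div_nonneg (hu0 _) (Nat.cast_nonneg n)
  · simpa [hv] using hsub.lim_le_div hbdd one_ne_zero
  · intro ht
    refine ge_of_tendsto hlim ?_
    filter_upwards [eventually_gt_atTop 0] with n hn
    have hn0 : (0 : ℝ) < n := by exact_mod_cast hn
    have h := trace_div_two_pow_le_norm_pow (det_AIter hp k m) ht n
    rw [le_div_iff₀ hn0, mul_comm, ← Real.log_pow]
    simp only [hv, hu]
    rw [AIter_mul_of_periodic k hper]
    exact Real.log_le_log (by positivity) h

end Periodic

section MeanErgodic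

theorem integral_abs_le_Lp_two_norm {α : Type*} [MeasurableSpace α] {μ : Measure α}
    [IsProbabilityMeasure μ] (h : Lp ℝ 2 μ) : ∫ x, |h x| ∂μ ≤ ‖h‖ := by
  have hm : MemLp h 2 μ := Lp.memLp h
  have h1 : ∫ x, |h x| ∂μ = (eLpNorm h 1 μ).toReal := by
    simp_rw [← Real.norm_eq_abs]
    rw [integral_norm_eq_lintegral_enorm hm.aestronglyMeasurable, eLpNorm_one_eq_lintegral_enorm]
  rw [h1, Lp.norm_def]
  exact ENNReal.toReal_mono hm.eLpNorm_ne_top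
    (eLpNorm_le_eLpNorm_of_exponent_le (by norm_num) hm.aestronglyMeasurable)

theorem coeFn_birkhoffSum_compMeasurePreserving {α : Type*} [MeasurableSpace α] {μ : Measure α}
    {T : α → α} (hT : MeasurePreserving T μ μ) {f : α → ℝ} (hf : MemLp f 2 μ) (n : ℕ) :
    (birkhoffSum (Lp.compMeasurePreserving T hT) _root_.id n (hf.toLp f) : Lp ℝ 2 μ) =ᵐ[μ]
      birkhoffSum T f n := by
  induction n with
  | zero =>
    simp only [birkhoffSum_zero, birkhoffSum_zero']
    exact Lp.coeFn_zero ℝ 2 μ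
  | succ n ih =>
    rw [birkhoffSum_succ]
    have hn : ((Lp.compMeasurePreserving T hT)^[n] (hf.toLp f) : Lp ℝ 2 μ) =ᵐ[μ]
        fun x => f (T^[n] x) := by
      rw [Lp.compMeasurePreserving_iterate]
      refine (Lp.coeFn_compMeasurePreserving _ (hT.iterate n)).trans ?_
      exact (hT.iterate n).quasiMeasurePreserving.ae_eq hf.coeFn_toLp
    filter_upwards [Lp.coeFn_add (birkhoffSum (Lp.compMeasurePreserving T hT) _root_.id n
      (hf.toLp f)) ((Lp.compMeasurePreserving T hT)^[n] (hf.toLp f)), ih, hn] with x h1 h2 h3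
    rw [birkhoffSum_succ]
    simp only [id]
    rw [h1, Pi.add_apply, h2, h3]

theorem integral_comp_iterate {α : Type*} [MeasurableSpace α] {μ : Measure α}
    {T : α → α} (hT : MeasurePreserving T μ μ) {f : α → ℝ} (hf : AEStronglyMeasurable f μ)
    (n : ℕ) : ∫ x, f (T^[n] x) ∂μ = ∫ x, f x ∂μ := by
  have h := hT.iterate n
  conv_rhs => rw [← h.map_eq]
  rw [integral_map h.measurable.aemeasurable]
  rwa [h.map_eq]

theorem integral_birkhoffAverage {α : Type*} [MeasurableSpace α] {μ : Measure α}
    {T : α → α} (hT : MeasurePreserving T μ μ) {f : α → ℝ} (hf : Integrable f μ) {n : ℕ}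
    (hn : n ≠ 0) : ∫ x, birkhoffAverage ℝ T f n x ∂μ = ∫ x, f x ∂μ := by
  have hint : ∀ i, Integrable (fun x => f (T^[i] x)) μ := fun i =>
    (hT.iterate i).integrable_comp_of_integrable hf
  simp only [birkhoffAverage, birkhoffSum, smul_eq_mul]
  rw [integral_const_mul, integral_finsetSum _ fun i _ => hint i]
  simp only [integral_comp_iterate hT hf.aestronglyMeasurable, Finset.sum_const,
    Finset.card_range, nsmul_eq_mul]
  field_simp

theorem integrable_birkhoffAverage {α : Type*} [MeasurableSpace α] {μ : Measure α}
    {T : α → α} (hT : MeasurePreserving T μ μ) {f : α → ℝ} (hf : Integrable f μ) (n : ℕ) :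
    Integrable (birkhoffAverage ℝ T f n) μ :=
  (integrable_finsetSum _ fun i _ =>
    (hT.iterate i).integrable_comp_of_integrable hf).const_mul _

/-- The mean ergodic theorem in `L¹` for square-integrable observables of an ergodic map. -/
theorem tendsto_integral_abs_birkhoffAverage_sub {α : Type*} [MeasurableSpace α] {μ : Measure α}
    [IsProbabilityMeasure μ] {T : α → α} (hT : Ergodic T μ) {f : α → ℝ} (hf : MemLp f 2 μ) :
    Tendsto (fun n : ℕ => ∫ x, |birkhoffAverage ℝ T f n x - ∫ y, f y ∂μ| ∂μ) atTop (𝓝 0) := by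
  have hmp := hT.toMeasurePreserving
  have hfi : Integrable f μ := hf.integrable (by norm_num)
  let U : Lp ℝ 2 μ →L[ℝ] Lp ℝ 2 μ := (Lp.compMeasurePreservingₗᵢ ℝ T hmp).toContinuousLinearMap
  have hU : ∀ g, U g = Lp.compMeasurePreserving T hmp g := fun g => rfl
  set F := hf.toLp f
  obtain ⟨G, hG, hlim⟩ : ∃ G : Lp ℝ 2 μ, U G = G ∧
      Tendsto (birkhoffAverage ℝ U _root_.id · F) atTop (𝓝 G) := by
    have h := U.tendsto_birkhoffAverage_orthogonalProjection
      (LinearIsometry.norm_toContinuousLinearMap_le _) F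
    exact ⟨_, LinearMap.mem_eqLocus.1 (Submodule.coe_mem _), h⟩
  obtain ⟨c, hc⟩ : ∃ c, G =ᵐ[μ] Function.const α c := by
    refine hT.ae_eq_const_of_ae_eq_comp_ae (Lp.aestronglyMeasurable G) ?_
    have h := Lp.coeFn_compMeasurePreserving G hmp
    rw [← hU, hG] at h
    exact h.symm
  have havg : ∀ n, (birkhoffAverage ℝ U _root_.id n F : Lp ℝ 2 μ) =ᵐ[μ]
      birkhoffAverage ℝ T f n := fun n => by
    filter_upwards [coeFn_birkhoffSum_compMeasurePreserving hmp hf n,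
      Lp.coeFn_smul ((n : ℝ)⁻¹) (birkhoffSum U _root_.id n F)] with x h1 h2
    rw [birkhoffAverage, h2, Pi.smul_apply]
    exact congrArg _ h1
  have hc0 : Tendsto (fun n : ℕ => ∫ x, |birkhoffAverage ℝ T f n x - c| ∂μ) atTop (𝓝 0) := by
    have h0 : Tendsto (fun n : ℕ => ‖birkhoffAverage ℝ U _root_.id n F - G‖) atTop (𝓝 0) :=
      tendsto_iff_norm_sub_tendsto_zero.1 hlim
    refine squeeze_zero (fun n => integral_nonneg fun x => abs_nonneg _) (fun n => ?_) h0
    refine le_trans (le_of_eq ?_) (integral_abs_le_Lp_two_norm _)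
    refine integral_congr_ae ?_
    filter_upwards [havg n, hc, Lp.coeFn_sub (birkhoffAverage ℝ U _root_.id n F) G]
      with x h1 h2 h3
    rw [h3, Pi.sub_apply, h1, h2]
    rfl
  have hcf : ∫ y, f y ∂μ = c := by
    have hle : |(∫ y, f y ∂μ) - c| ≤ 0 := by
      refine ge_of_tendsto hc0 ?_
      filter_upwards [eventually_ne_atTop 0] with n hn
      have h1 : (∫ y, f y ∂μ) - c = ∫ x, (birkhoffAverage ℝ T f n x - c) ∂μ := by
        rw [integral_sub (integrable_birkhoffAverage hmp hfi n) (integrable_const c), integral_birkhoffAverage hmp hfi hn]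
        simp
      rw [h1]
      exact abs_integral_le_integral_abs
    exact sub_eq_zero.1 (abs_nonpos_iff.1 hle)
  rw [hcf]
  exact hc0

end MeanErgodic

section NormGrowth

variable {ℓ : ℕ} {W : Set (ℕ × ℕ)}

theorem sum_log_norm_AIter_le_birkhoffSum {ω : ℤ → ℕ} (hω : ω ∈ SFT ℓ W) (k : ℝ) (N q : ℕ) :
    ∑ r ∈ Finset.range N, Real.log ‖AIter k (shift^[r] ω) (q * N)‖ ≤
      birkhoffSum shift (fun σ => Real.log ‖AIter k σ N‖) (q * N) ω := by
  induction q generalizing ω with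
  | zero => simp [AIter, norm_one_matrix]
  | succ q ih =>
    have hN := ih (shift_iterate_mem_SFT hω N)
    rw [Nat.succ_mul, Nat.add_comm, birkhoffSum_add]
    refine le_trans ?_ (add_le_add_right hN _)
    rw [birkhoffSum, ← Finset.sum_add_distrib]
    refine Finset.sum_le_sum fun r _ => ?_
    have h := log_norm_AIter_add_le (shift_iterate_mem_SFT hω r) k N (q * N)
    rwa [← Function.iterate_add_apply, Nat.add_comm N r, Function.iterate_add_apply] at h

theorem mul_log_norm_AIter_le_birkhoffSum {ω : ℤ → ℕ} (hω : ω ∈ SFT ℓ W) {k C : ℝ}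
    (hC : ∀ σ ∈ SFT ℓ W, ∀ n : ℕ, Real.log ‖AIter k σ n‖ ≤ n * C) {N q : ℕ} (hq : 1 ≤ q) :
    N * Real.log ‖AIter k ω (q * N)‖ ≤
      birkhoffSum shift (fun σ => Real.log ‖AIter k σ N‖) (q * N) ω + N * (N * C) := by
  obtain ⟨q, rfl⟩ := Nat.exists_eq_add_of_le' hq
  have hr : ∀ r ∈ Finset.range N, Real.log ‖AIter k ω ((q + 1) * N)‖ ≤
      Real.log ‖AIter k (shift^[r] ω) (q * N)‖ + N * C := fun r hr => by
    have hrN : r < N := Finset.mem_range.1 hr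
    have hsplit : (q + 1) * N = r + (q * N + (N - r)) := by rw [add_mul]; omega
    have h1 := log_norm_AIter_add_le hω k r (q * N + (N - r))
    have h2 := log_norm_AIter_add_le (shift_iterate_mem_SFT hω r) k (q * N) (N - r)
    have h3 := hC ω hω r
    have h4 := hC _ (shift_iterate_mem_SFT (shift_iterate_mem_SFT hω r) (q * N)) (N - r)
    rw [Nat.cast_sub hrN.le] at h4
    rw [hsplit]
    linarith
  have hsum := Finset.sum_le_sum hr
  rw [Finset.sum_add_distrib] at hsum
  simp only [Finset.sum_const, Finset.card_range, nsmul_eq_mul] at hsum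
  have hB := sum_log_norm_AIter_le_birkhoffSum hω k N q
  have hmono : birkhoffSum shift (fun σ => Real.log ‖AIter k σ N‖) (q * N) ω ≤
      birkhoffSum shift (fun σ => Real.log ‖AIter k σ N‖) ((q + 1) * N) ω :=
    Finset.sum_le_sum_of_subset_of_nonneg
      (Finset.range_mono (Nat.mul_le_mul_right N (Nat.le_succ q)))
      fun i _ _ => log_norm_AIter_nonneg (shift_iterate_mem_SFT hω i) k N
  linarith

theorem memLp_log_norm_AIter (k : ℝ) {μ : Measure (ℤ → ℕ)} [IsProbabilityMeasure μ]
    (hconc : μ (SFT ℓ W)ᶜ = 0) (n : ℕ) : MemLp (fun ω => Real.log ‖AIter k ω n‖) 2 μ := by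
  obtain ⟨C, -, hC⟩ := exists_log_norm_AIter_le ℓ W k
  refine MemLp.of_bound (measurable_log_norm_AIter k n).aestronglyMeasurable (n * C) ?_
  filter_upwards [mem_ae_iff.2 hconc] with ω hω
  rw [Real.norm_eq_abs, abs_of_nonneg (log_norm_AIter_nonneg hω k n)]
  exact hC ω hω n

theorem integrable_log_norm_AIter (k : ℝ) {μ : Measure (ℤ → ℕ)} [IsProbabilityMeasure μ]
    (hconc : μ (SFT ℓ W)ᶜ = 0) (n : ℕ) : Integrable (fun ω => Real.log ‖AIter k ω n‖) μ :=
  (memLp_log_norm_AIter k hconc n).integrable (by norm_num)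

/-- Convergence in `L¹` of the normalized logarithmic norms along multiples of a fixed block
length, up to an arbitrarily small error. -/
theorem exists_forall_integral_abs_log_norm_sub_le {k L : ℝ} {μ : Measure (ℤ → ℕ)}
    [IsProbabilityMeasure μ] (hconc : μ (SFT ℓ W)ᶜ = 0) (herg : Ergodic shift μ)
    (hL : Tendsto (fun n : ℕ => (1 / (n : ℝ)) * ∫ ω, Real.log ‖AIter k ω n‖ ∂μ) atTop (𝓝 L))
    {η : ℝ} (hη : 0 < η) :
    ∃ N : ℕ, 1 ≤ N ∧ ∃ Q : ℕ, ∀ q : ℕ, Q ≤ q →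
      ∫ ω, |Real.log ‖AIter k ω (q * N)‖ / ((q * N : ℕ) : ℝ) - L| ∂μ ≤ η := by
  obtain ⟨C, hC0, hC⟩ := exists_log_norm_AIter_le ℓ W k
  have hclose := hL.eventually (Metric.ball_mem_nhds L (half_pos hη))
  obtain ⟨N, hN, hN1⟩ := (hclose.and (eventually_ge_atTop 1)).exists
  refine ⟨N, hN1, ?_⟩
  have hN0 : (0 : ℝ) < N := by exact_mod_cast hN1
  set f : ℕ → (ℤ → ℕ) → ℝ := fun n ω => Real.log ‖AIter k ω n‖ with hf
  have hfi : ∀ n, Integrable (f n) μ := integrable_log_norm_AIter k hconc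
  obtain ⟨a, ha⟩ : ∃ a : ℝ, a = (1 / (N : ℝ)) * ∫ ω, f N ω ∂μ := ⟨_, rfl⟩
  have haL : |a - L| < η / 2 := by rw [ha]; exact hN
  have hNat : Tendsto (fun q : ℕ => q * N) atTop atTop :=
    tendsto_id.atTop_mul_const' (by omega)
  have hD := (tendsto_integral_abs_birkhoffAverage_sub herg
    (memLp_log_norm_AIter k hconc N)).comp hNat
  have hbound : Tendsto (fun q : ℕ =>
      2 / N * (∫ ω, |birkhoffAverage ℝ shift (f N) (q * N) ω - ∫ σ, f N σ ∂μ| ∂μ) +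
        2 * C / q + (a - (1 / ((q * N : ℕ) : ℝ)) * ∫ ω, f (q * N) ω ∂μ) + |a - L|) atTop
      (𝓝 (2 / N * 0 + 0 + (a - L) + |a - L|)) :=
    (((hD.const_mul _).add (tendsto_const_div_atTop_nhds_zero_nat _)).add
      (tendsto_const_nhds.sub (hL.comp hNat))).add tendsto_const_nhds
  have hlt : 2 / N * 0 + 0 + (a - L) + |a - L| < η := by
    have := le_abs_self (a - L)
    linarith
  obtain ⟨Q, hQ⟩ := eventually_atTop.1 ((hbound.eventually_lt_const hlt).and
    (eventually_ge_atTop 1))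
  refine ⟨Q, fun q hq => ?_⟩
  obtain ⟨hqη, hq1⟩ := hQ q hq
  have hq0 : (0 : ℝ) < q := by exact_mod_cast hq1
  refine le_trans ?_ hqη.le
  have hBi : Integrable (fun ω => |birkhoffAverage ℝ shift (f N) (q * N) ω - ∫ σ, f N σ ∂μ|) μ :=
    ((integrable_birkhoffAverage herg.toMeasurePreserving (hfi N) _).sub
      (integrable_const _)).abs
  have hgi : Integrable (fun ω => (1 / ((q * N : ℕ) : ℝ)) * f (q * N) ω) μ :=
    (hfi _).const_mul _
  have h1 : Integrable (fun ω =>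
      2 / N * |birkhoffAverage ℝ shift (f N) (q * N) ω - ∫ σ, f N σ ∂μ| + 2 * C / q) μ :=
    (hBi.const_mul _).add (integrable_const _)
  have h2 : Integrable (fun ω => a - (1 / ((q * N : ℕ) : ℝ)) * f (q * N) ω) μ :=
    (integrable_const a).sub hgi
  have h12 : Integrable (fun ω =>
      2 / N * |birkhoffAverage ℝ shift (f N) (q * N) ω - ∫ σ, f N σ ∂μ| + 2 * C / q +
        (a - (1 / ((q * N : ℕ) : ℝ)) * f (q * N) ω)) μ := h1.add h2
  have hrhs : ∫ ω, (2 / N * |birkhoffAverage ℝ shift (f N) (q * N) ω - ∫ σ, f N σ ∂μ| +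
        2 * C / q + (a - (1 / ((q * N : ℕ) : ℝ)) * f (q * N) ω) + |a - L|) ∂μ =
      2 / N * (∫ ω, |birkhoffAverage ℝ shift (f N) (q * N) ω - ∫ σ, f N σ ∂μ| ∂μ) +
        2 * C / q + (a - (1 / ((q * N : ℕ) : ℝ)) * ∫ ω, f (q * N) ω ∂μ) + |a - L| := by
    rw [integral_add h12 (integrable_const _), integral_add h1 h2,
      integral_add (hBi.const_mul _) (integrable_const _), integral_sub (integrable_const a) hgi,
      integral_const_mul, integral_const_mul]
    simp
  rw [← hrhs]
  refine integral_mono_ae (((hfi _).div_const _).sub (integrable_const L)).abs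
    (h12.add (integrable_const _)) ?_
  filter_upwards [mem_ae_iff.2 hconc] with ω hω
  have hkey := mul_log_norm_AIter_le_birkhoffSum hω hC (N := N) hq1
  set B := birkhoffAverage ℝ shift (f N) (q * N) ω with hB
  set I := ∫ σ, f N σ ∂μ
  set g := f (q * N) ω / ((q * N : ℕ) : ℝ) with hg
  have hgB : g ≤ B / N + C / q := by
    have hBval : B / N + C / q = (birkhoffSum shift (f N) (q * N) ω + N * (N * C)) /
        (N * ((q * N : ℕ) : ℝ)) := by
      rw [hB, birkhoffAverage, smul_eq_mul]
      push_cast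
      field_simp
    rw [hBval, hg, le_div_iff₀ (by positivity)]
    refine le_trans (le_of_eq ?_) hkey
    push_cast
    field_simp
    rfl
  have haI : a = I / N := by rw [ha]; ring
  have hdiff : g - a ≤ |B - I| / N + C / q := by
    have h : (B - I) / N ≤ |B - I| / N := by gcongr; exact le_abs_self _
    rw [sub_div] at h
    linarith
  have hpos : 0 ≤ |B - I| / N + C / q := by positivity
  have habs : |g - a| ≤ 2 * (|B - I| / N + C / q) + (a - g) :=
    abs_le.2 ⟨by linarith, by linarith⟩
  have htri : |g - L| ≤ |g - a| + |a - L| := abs_sub_le g a L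
  have hg1 : 1 / ((q * N : ℕ) : ℝ) * f (q * N) ω = g := by rw [hg]; ring
  have hexp : 2 * (|B - I| / N + C / q) = 2 / N * |B - I| + 2 * C / q := by ring
  change |g - L| ≤
    2 / N * |B - I| + 2 * C / q + (a - 1 / ((q * N : ℕ) : ℝ) * f (q * N) ω) + |a - L|
  rw [hg1]
  linarith

/-- There are points of the subshift along whose orbit all blocks, made of at most `R` consecutive
pieces of a large common length `q`, grow at a rate close to the Lyapunov exponent. -/
theorem exists_forall_abs_log_norm_sub_le {k L : ℝ} {μ : Measure (ℤ → ℕ)}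
    [IsProbabilityMeasure μ] (hconc : μ (SFT ℓ W)ᶜ = 0) (herg : Ergodic shift μ)
    (hL : Tendsto (fun n : ℕ => (1 / (n : ℝ)) * ∫ ω, Real.log ‖AIter k ω n‖ ∂μ) atTop (𝓝 L))
    {ε : ℝ} (hε : 0 < ε) (R Q₀ : ℕ) :
    ∃ q : ℕ, Q₀ ≤ q ∧ 1 ≤ q ∧ ∃ ω ∈ SFT ℓ W, ∀ i ≤ R, ∀ d, 1 ≤ d → d ≤ R →
      |Real.log ‖AIter k (shift^[i * q] ω) (d * q)‖ / ((d * q : ℕ) : ℝ) - L| ≤ ε := by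
  have hη : 0 < ε / ((R + 1 : ℕ) * (R + 1 : ℕ)) := by positivity
  obtain ⟨N, hN, Q, hQ⟩ := exists_forall_integral_abs_log_norm_sub_le hconc herg hL hη
  set q' := Q + Q₀ + 1 with hq'
  set q := q' * N with hq
  have hqq : q' ≤ q := Nat.le_mul_of_pos_right _ hN
  set s := Finset.range (R + 1) ×ˢ Finset.range (R + 1)
  let h : ℕ → (ℤ → ℕ) → ℝ := fun d ω =>
    |Real.log ‖AIter k ω ((d + 1) * q)‖ / (((d + 1) * q : ℕ) : ℝ) - L|
  have hint : ∀ d, Integrable (h d) μ := fun d =>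
    (((integrable_log_norm_AIter k hconc _).div_const _).sub (integrable_const L)).abs
  have hmp := herg.toMeasurePreserving
  have hcomp : ∀ i d, Integrable (fun ω => h d (shift^[i] ω)) μ := fun i d =>
    (hmp.iterate i).integrable_comp_of_integrable (hint d)
  have hle : ∀ d, ∫ ω, h d ω ∂μ ≤ ε / ((R + 1 : ℕ) * (R + 1 : ℕ)) := fun d => by
    have := hQ ((d + 1) * q') (le_trans (by omega) (Nat.le_mul_of_pos_left q' d.succ_pos))
    simpa only [h, hq, ← Nat.mul_assoc] using this
  obtain ⟨ω, hω, hsum⟩ := exists_notMem_null_le_integral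
    (integrable_finsetSum s fun x _ => hcomp (x.1 * q) x.2) hconc
  rw [integral_finsetSum s fun x _ => hcomp (x.1 * q) x.2] at hsum
  have htot : ∑ x ∈ s, ∫ ω, h x.2 (shift^[x.1 * q] ω) ∂μ ≤ ε := by
    refine (Finset.sum_le_card_nsmul s _ (ε / ((R + 1 : ℕ) * (R + 1 : ℕ))) fun x _ => ?_).trans ?_
    · rw [integral_comp_iterate hmp (hint x.2).aestronglyMeasurable]
      exact hle x.2
    · rw [Finset.card_product, Finset.card_range, nsmul_eq_mul]
      push_cast
      field_simp
      rfl
  refine ⟨q, by omega, by omega, ω, not_not.1 hω, fun i hi d hd1 hdR => ?_⟩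
  obtain ⟨d, rfl⟩ := Nat.exists_eq_add_of_le' hd1
  have hmem : (i, d) ∈ s :=
    Finset.mem_product.2 ⟨Finset.mem_range.2 (by simp only; omega),
      Finset.mem_range.2 (by simp only; omega)⟩
  have hsingle := Finset.single_le_sum (f := fun x : ℕ × ℕ => h x.2 (shift^[x.1 * q] ω))
    (fun x _ => abs_nonneg _) hmem
  exact hsingle.trans (hsum.trans htot)

end NormGrowth

section Approximation

variable {ℓ : ℕ} {W : Set (ℕ × ℕ)}

theorem exists_periodic_of_loop {σ : ℤ → ℕ} (hσ : σ ∈ SFT ℓ W) (k : ℝ) {t : ℕ} (ht : 1 ≤ t)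
    (hloop : σ (-1) = σ (t - 1)) :
    ∃ p ∈ SFT ℓ W, (∃ n : ℕ, 1 ≤ n ∧ shift^[n] p = p) ∧ ∃ Lp : ℝ,
      Tendsto (fun n : ℕ => (1 / (n : ℝ)) * Real.log ‖AIter k p n‖) atTop (𝓝 Lp) ∧
      0 ≤ Lp ∧ t * Lp ≤ Real.log ‖AIter k σ t‖ ∧
      (2 ≤ |(AIter k σ t).trace| → Real.log (|(AIter k σ t).trace| / 2) ≤ t * Lp) := by
  have hp := periodize_mem_SFT hσ ht hloop
  have hper := shift_iterate_periodize σ t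
  obtain ⟨lam, hlim, h0, hle, hge⟩ := exists_lyapunov_of_periodic hp k ht hper
  rw [AIter_periodize k hloop] at hle hge
  have ht0 : (0 : ℝ) < t := by exact_mod_cast ht
  refine ⟨_, hp, ⟨t, ht, hper⟩, _, hlim, by positivity, ?_⟩
  rw [mul_div_cancel₀ _ ht0.ne']
  exact ⟨hle, hge⟩

theorem exists_periodic_of_lt_trace {σ : ℤ → ℕ} (hσ : σ ∈ SFT ℓ W) {k : ℝ} {t : ℕ} (ht : 1 ≤ t)
    (hloop : σ (-1) = σ (t - 1)) {L ε δ c : ℝ} (hε : ε < δ)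
    (hnorm : Real.log ‖AIter k σ t‖ ≤ t * (L + ε))
    (htr : Real.exp (t * (L + ε) - c) < |(AIter k σ t).trace|)
    (hc : c + 1 ≤ t * (L + ε)) (hcδ : c + 1 < t * (δ + ε)) :
    ∃ p ∈ SFT ℓ W, (∃ n : ℕ, 1 ≤ n ∧ shift^[n] p = p) ∧ ∃ Lp : ℝ,
      Tendsto (fun n : ℕ => (1 / (n : ℝ)) * Real.log ‖AIter k p n‖) atTop (𝓝 Lp) ∧
      |Lp - L| < δ := by
  obtain ⟨p, hp, hper, Lp, hlim, -, hle, hge⟩ := exists_periodic_of_loop hσ k ht hloop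
  refine ⟨p, hp, hper, Lp, hlim, ?_⟩
  have ht0 : (0 : ℝ) < t := by exact_mod_cast ht
  have htwo : 2 ≤ |(AIter k σ t).trace| := by
    have h := Real.add_one_le_exp (t * (L + ε) - c)
    linarith
  have hlog : t * (L + ε) - c - 1 ≤ Real.log (|(AIter k σ t).trace| / 2) := by
    rw [Real.log_div (by linarith) two_ne_zero]
    have h1 := (Real.lt_log_iff_exp_lt (by linarith)).2 htr
    have h2 := Real.log_two_lt_d9
    linarith
  have hlo := hlog.trans (hge htwo)
  have hup := hle.trans hnorm
  rw [abs_lt]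
  constructor
  · refine lt_of_mul_lt_mul_left (a := (t : ℝ)) ?_ ht0.le
    linarith
  · have := le_of_mul_le_mul_left hup ht0
    linarith

theorem exists_three_equal_letters {ω : ℤ → ℕ} (hω : ω ∈ SFT ℓ W) (q : ℕ) :
    ∃ i₀ i₁ i₂ : ℕ, i₀ < i₁ ∧ i₁ < i₂ ∧ i₂ ≤ 2 * ℓ ∧
      ω ((i₀ * q : ℕ) - 1) = ω ((i₁ * q : ℕ) - 1) ∧
      ω ((i₁ * q : ℕ) - 1) = ω ((i₂ * q : ℕ) - 1) := by
  obtain ⟨c, -, hc⟩ := Finset.exists_lt_card_fiber_of_mul_lt_card_of_maps_to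
    (s := Finset.range (2 * ℓ + 1)) (t := Finset.Icc 1 ℓ) (n := 2)
    (f := fun i : ℕ => ω ((i * q : ℕ) - 1)) (fun i _ => Finset.mem_Icc.2 (hω.1 _))
    (by simp; omega)
  let e := Finset.orderEmbOfCardLe _ (Nat.succ_le_of_lt hc)
  have he : ∀ j, e j < 2 * ℓ + 1 ∧ ω ((e j * q : ℕ) - 1) = c := fun j => by
    have h := Finset.orderEmbOfCardLe_mem _ (Nat.succ_le_of_lt hc) j
    rwa [Finset.mem_filter, Finset.mem_range] at h
  refine ⟨e 0, e 1, e 2, e.lt_iff_lt.2 (by decide), e.lt_iff_lt.2 (by decide),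
    Nat.lt_succ_iff.1 (he 2).1, ?_, ?_⟩
  · rw [(he 0).2, (he 1).2]
  · rw [(he 1).2, (he 2).2]

end Approximation

/-- (Kalinin's periodic-approximation theorem for the cocycle `A^{(k)}`.)  Fix
`k ∈ ℝ` and let `μ` be a shift-ergodic Borel probability measure on `Ω` with full
support.  Then for every `δ > 0` there is a periodic point `p ∈ Ω` such that
`|L(A^{(k)}, p) − L(A^{(k)}, μ)| < δ`, where
`L(A^{(k)}, p) = lim_{n→∞} (1/n)·log‖A_n(p)‖`. -/
theorem statement13 (ℓ : ℕ) (hℓ : 1 < ℓ) (W : Set (ℕ × ℕ)) (k : ℝ)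
    (μ : Measure (ℤ → ℕ)) [IsProbabilityMeasure μ]
    (hconc : μ (SFT ℓ W)ᶜ = 0)
    (herg : Ergodic shift μ)
    (hsupp : FullSupport ℓ W μ)
    (L : ℝ)
    (hL : Tendsto (fun n : ℕ => (1 / (n : ℝ)) * ∫ ω, Real.log ‖AIter k ω n‖ ∂μ)
      atTop (𝓝 L))
    (δ : ℝ) (hδ : 0 < δ) :
    ∃ p ∈ SFT ℓ W, (∃ n : ℕ, 1 ≤ n ∧ shift^[n] p = p) ∧
      ∃ Lp : ℝ,
        Tendsto (fun n : ℕ => (1 / (n : ℝ)) * Real.log ‖AIter k p n‖)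
          atTop (𝓝 Lp) ∧
        |Lp - L| < δ := by
  set R : ℕ := 2 * ℓ with hR
  have hR4 : (4 : ℝ) ≤ R := by exact_mod_cast (by omega : 4 ≤ R)
  obtain ⟨ε, hε⟩ : ∃ ε : ℝ, ε = δ / (100 * R) := ⟨_, rfl⟩
  have hε0 : 0 < ε := by rw [hε]; positivity
  have hδε : δ = 100 * (R * ε) := by rw [hε]; field_simp
  have hεR : 4 * ε ≤ R * ε := by gcongr
  obtain ⟨q, hq₀, hq1, ω, hω, hgrow⟩ := exists_forall_abs_log_norm_sub_le hconc herg hL hε0 R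
    ⌈5 / (R * ε)⌉₊
  have hq0 : (0 : ℝ) < q := by exact_mod_cast hq1
  have hqε : 5 ≤ q * (R * ε) := (div_le_iff₀ (by positivity)).1 ((Nat.ceil_le).1 hq₀)
  obtain ⟨i₀, i₁, i₂, h01, h12, h2R, hc01, hc12⟩ := exists_three_equal_letters hω q
  have hloop : ∀ i j : ℕ, i < j → ω ((i * q : ℕ) - 1) = ω ((j * q : ℕ) - 1) →
      (shift^[i * q] ω) (-1) = (shift^[i * q] ω) (((j - i) * q : ℕ) - 1) := fun i j hij h => by
    rw [shift_iterate_apply, shift_iterate_apply, neg_add_eq_sub, h]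
    congr 1
    rw [Nat.sub_mul, Nat.cast_sub (Nat.mul_le_mul_right q hij.le)]
    ring
  have hbound : ∀ i j : ℕ, i < j → j ≤ R →
      (((j - i) * q : ℕ) : ℝ) * (L - ε) ≤
        Real.log ‖AIter k (shift^[i * q] ω) ((j - i) * q)‖ ∧
      Real.log ‖AIter k (shift^[i * q] ω) ((j - i) * q)‖ ≤
        (((j - i) * q : ℕ) : ℝ) * (L + ε) := fun i j hij hj => by
    have h := abs_le.1 (hgrow i (by omega) (j - i) (by omega) (by omega))
    have hpos : (0 : ℝ) < ((j - i) * q : ℕ) := by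
      exact_mod_cast Nat.mul_pos (Nat.sub_pos_of_lt hij) hq1
    constructor
    · rw [← le_div_iff₀' hpos]; linarith [h.1]
    · rw [← div_le_iff₀' hpos]; linarith [h.2]
  have hlen : ∀ i j : ℕ, i < j → q ≤ (j - i) * q := fun i j hij =>
    Nat.le_mul_of_pos_left q (Nat.sub_pos_of_lt hij)
  have hσ : ∀ i, shift^[i * q] ω ∈ SFT ℓ W := fun i => shift_iterate_mem_SFT hω _
  rcases lt_or_ge L δ with hLδ | hLδ
  · obtain ⟨p, hp, hper, Lp, hlim, h0, hle, -⟩ := exists_periodic_of_loop (hσ i₀) k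
      (hq1.trans (hlen i₀ i₁ h01)) (hloop i₀ i₁ h01 hc01)
    refine ⟨p, hp, hper, Lp, hlim, ?_⟩
    have hpos : (0 : ℝ) < ((i₁ - i₀) * q : ℕ) := by
      exact_mod_cast hq1.trans (hlen i₀ i₁ h01)
    have hup := le_of_mul_le_mul_left (hle.trans (hbound i₀ i₁ h01 (by omega)).2) hpos
    rw [abs_lt]
    constructor <;> linarith
  · obtain ⟨c, hc⟩ : ∃ c : ℝ, c = 5 * (q * (R * ε)) := ⟨_, rfl⟩
    have hclose : ∀ i j : ℕ, i < j → j ≤ R → ω ((i * q : ℕ) - 1) = ω ((j * q : ℕ) - 1) →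
        Real.exp ((((j - i) * q : ℕ) : ℝ) * (L + ε) - c) <
          |(AIter k (shift^[i * q] ω) ((j - i) * q)).trace| →
        ∃ p ∈ SFT ℓ W, (∃ n : ℕ, 1 ≤ n ∧ shift^[n] p = p) ∧ ∃ Lp : ℝ,
          Tendsto (fun n : ℕ => (1 / (n : ℝ)) * Real.log ‖AIter k p n‖) atTop (𝓝 Lp) ∧
          |Lp - L| < δ := fun i j hij hj hletter htr => by
      have hqt : (q : ℝ) ≤ ((j - i) * q : ℕ) := by exact_mod_cast hlen i j hij
      have h1 : c + 1 < q * (δ + ε) := by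
        rw [hc, hδε]
        nlinarith
      have h2 : (q : ℝ) * (δ + ε) ≤ ((j - i) * q : ℕ) * (δ + ε) := by gcongr
      have h3 : (((j - i) * q : ℕ) : ℝ) * (δ + ε) ≤ ((j - i) * q : ℕ) * (L + ε) := by gcongr
      exact exists_periodic_of_lt_trace (hσ i) (hq1.trans (hlen i j hij)) (hloop i j hij hletter)
        (by linarith) (hbound i j hij hj).2 htr (by linarith) (by linarith)
    by_contra hnone
    have htr : ∀ i j : ℕ, i < j → j ≤ R → ω ((i * q : ℕ) - 1) = ω ((j * q : ℕ) - 1) →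
        |(AIter k (shift^[i * q] ω) ((j - i) * q)).trace| ≤
          Real.exp (-c) * Real.exp ((((j - i) * q : ℕ) : ℝ) * (L + ε)) :=
      fun i j hij hj hletter => by
        rw [← Real.exp_add, neg_add_eq_sub]
        exact not_lt.1 fun h => hnone (hclose i j hij hj hletter h)
    have hnorm : ∀ i j : ℕ, i < j → j ≤ R → ‖AIter k (shift^[i * q] ω) ((j - i) * q)‖ ≤
        Real.exp ((((j - i) * q : ℕ) : ℝ) * (L + ε)) := fun i j hij hj =>
      (Real.log_le_iff_le_exp (lt_of_lt_of_le one_pos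
        (one_le_norm_of_det_eq_one (det_AIter (hσ i) k _)))).1 (hbound i j hij hj).2
    have hsq : ∀ i j : ℕ, i < j →
        1 ≤ Real.exp (-c) * Real.exp ((((j - i) * q : ℕ) : ℝ) * (L + ε)) ^ 2 := fun i j hij => by
      rw [← Real.exp_nat_mul, ← Real.exp_add, Real.one_le_exp_iff]
      have hqt : (q : ℝ) ≤ ((j - i) * q : ℕ) := by exact_mod_cast hlen i j hij
      have h : (q : ℝ) * δ ≤ ((j - i) * q : ℕ) * (L + ε) := by gcongr; linarith
      rw [hδε] at h
      push_cast at h ⊢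
      nlinarith
    have hlength : (i₁ - i₀) * q + (i₂ - i₁) * q = (i₂ - i₀) * q := by
      rw [← Nat.add_mul]; congr 1; omega
    have hmul : AIter k (shift^[i₁ * q] ω) ((i₂ - i₁) * q) *
        AIter k (shift^[i₀ * q] ω) ((i₁ - i₀) * q) =
        AIter k (shift^[i₀ * q] ω) ((i₂ - i₀) * q) := by
      rw [← hlength, AIter_add, ← Function.iterate_add_apply, ← Nat.add_mul,
        Nat.sub_add_cancel h01.le]
    have hexp : Real.exp ((((i₁ - i₀) * q : ℕ) : ℝ) * (L + ε)) *
        Real.exp ((((i₂ - i₁) * q : ℕ) : ℝ) * (L + ε)) =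
        Real.exp ((((i₂ - i₀) * q : ℕ) : ℝ) * (L + ε)) := by
      rw [← Real.exp_add, ← add_mul, ← Nat.cast_add, hlength]
    have hkey := norm_mul_sq_le_of_trace_le (det_AIter (hσ i₀) k ((i₁ - i₀) * q))
      (det_AIter (hσ i₁) k ((i₂ - i₁) * q)) (θ := Real.exp (-c))
      (Real.exp_le_one_iff.2 (by rw [hc]; linarith))
      (hnorm i₀ i₁ h01 (by omega)) (hnorm i₁ i₂ h12 h2R) (hsq i₀ i₁ h01) (hsq i₁ i₂ h12)
      (htr i₀ i₁ h01 (by omega) hc01) (htr i₁ i₂ h12 h2R hc12)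
      (by rw [hmul, hexp]; exact htr i₀ i₂ (h01.trans h12) h2R (hc01.trans hc12))
    rw [hmul, hexp] at hkey
    set t : ℝ := (((i₂ - i₀) * q : ℕ) : ℝ) with ht
    have htR : t ≤ R * q := by
      rw [ht]
      exact_mod_cast Nat.mul_le_mul_right q (by omega : i₂ - i₀ ≤ R)
    have hlow : Real.exp (t * (L - ε)) ≤ ‖AIter k (shift^[i₀ * q] ω) ((i₂ - i₀) * q)‖ :=
      (Real.le_log_iff_exp_le (lt_of_lt_of_le one_pos
        (one_le_norm_of_det_eq_one (det_AIter (hσ i₀) k _)))).1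
        (hbound i₀ i₂ (h01.trans h12) h2R).1
    have hcontr := (pow_le_pow_left₀ (Real.exp_pos _).le hlow 2).trans hkey
    have hfive : (100 : ℝ) < Real.exp 5 := by
      have h1 : Real.exp 5 = Real.exp 1 ^ 5 := by rw [← Real.exp_nat_mul]; norm_num
      have h2 : (2.7 : ℝ) ^ 5 ≤ Real.exp 1 ^ 5 := by
        gcongr
        linarith [Real.exp_one_gt_d9]
      rw [h1]
      refine lt_of_lt_of_le ?_ h2
      norm_num
    have hfinal : Real.exp 5 * (Real.exp (-c) * Real.exp (t * (L + ε)) ^ 2) ≤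
        Real.exp (t * (L - ε)) ^ 2 := by
      rw [← Real.exp_nat_mul, ← Real.exp_nat_mul, ← Real.exp_add, ← Real.exp_add, Real.exp_le_exp]
      have : t * ε ≤ R * q * ε := by gcongr
      push_cast
      linarith
    have hpos : 0 < Real.exp (-c) * Real.exp (t * (L + ε)) ^ 2 := by positivity
    nlinarith
end
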